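/- arXiv:1706.00392 — 3 statements merged into one kernel-verified Lean document; each statement's English description precedes it below -/
import Mathlib

section
/- Fix a positive integer ℓ. The set of primes p > ℓ for which the integer φ(p−ℓ) − φ(p+ℓ) and the rational number φ(p−ℓ)/(p−ℓ) − φ(p+ℓ)/(p+ℓ) have the same sign (equivalently, the sign of φ(p−ℓ) − φ(p+ℓ) equals the sign of (p+ℓ)·φ(p−ℓ) − (p−ℓ)·φ(p+ℓ)) has counting function asymptotic to π(x); that is, the number of such primes p ≤ x, divided by π(x), tends to 1 as x → ∞. -/
open Finset in
lemma sieve_moebius_inner (z k m : ℕ) (hk : 0 < k) (hm : m ∈ Icc 1 z) :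
    ∑ d ∈ Icc 1 z, (if k ∣ d ∧ d ∣ m then ((ArithmeticFunction.moebius (m / d) : ℤ) : ℝ) else 0)
      = if m = k then 1 else 0 := by
  rw [mem_Icc] at hm
  by_cases hkm : k ∣ m
  · obtain ⟨n, rfl⟩ := hkm
    have hn : n ≠ 0 := by rintro rfl; simp at hm
    rw [← sum_filter]
    have h1 : ∑ e ∈ n.divisors, ((ArithmeticFunction.moebius (n / e) : ℤ) : ℝ) =
        ∑ d ∈ Icc 1 z with (k ∣ d ∧ d ∣ k * n),
          ((ArithmeticFunction.moebius (k * n / d) : ℤ) : ℝ) := by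
      refine sum_bij (fun e _ => k * e) ?_ ?_ ?_ ?_
      · intro e he
        have he' := Nat.mem_divisors.1 he
        simp only [mem_filter, mem_Icc]
        have h2 : k * e ∣ k * n := Nat.mul_dvd_mul_left k he'.1
        refine ⟨⟨Nat.mul_pos hk (Nat.pos_of_mem_divisors he), ?_⟩, Dvd.intro _ rfl, h2⟩
        exact (Nat.le_of_dvd (by omega) h2).trans hm.2
      · intro a _ b _ hab
        exact Nat.eq_of_mul_eq_mul_left hk hab
      · intro d hd
        simp only [mem_filter, mem_Icc] at hd
        obtain ⟨_, ⟨e, rfl⟩, h3⟩ := hd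
        exact ⟨e, Nat.mem_divisors.2 ⟨Nat.dvd_of_mul_dvd_mul_left hk h3, hn⟩, rfl⟩
      · intro e _
        rw [Nat.mul_div_mul_left _ _ hk]
    rw [← h1, Nat.sum_div_divisors n (fun e => ((ArithmeticFunction.moebius e : ℤ) : ℝ))]
    have h4 := congrArg (fun f : ArithmeticFunction ℤ => f n) ArithmeticFunction.moebius_mul_coe_zeta
    rw [ArithmeticFunction.coe_mul_zeta_apply, ArithmeticFunction.one_apply] at h4
    rw [← Int.cast_sum, h4]
    have : k * n = k ↔ n = 1 := by
      constructor
      · intro h; exact Nat.eq_of_mul_eq_mul_left hk (by simpa using h)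
      · rintro rfl; simp
    simp [this]
  · rw [if_neg (by rintro rfl; exact hkm dvd_rfl)]
    refine sum_eq_zero fun d _ => ?_
    rw [if_neg]
    rintro ⟨h1, h2⟩
    exact hkm (h1.trans h2)

open Finset in
lemma sieve_inversion (z : ℕ) (y : ℕ → ℝ) (lam : ℕ → ℝ)
    (hl : ∀ d, lam d = d * ∑ m ∈ Icc 1 z, if d ∣ m then
      ((ArithmeticFunction.moebius (m / d) : ℤ) : ℝ) * y m else 0) (k : ℕ) (hk : k ∈ Icc 1 z) :
    ∑ d ∈ Icc 1 z, (if k ∣ d then lam d / d else 0) = y k := by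
  have hk' := mem_Icc.1 hk
  calc ∑ d ∈ Icc 1 z, (if k ∣ d then lam d / d else 0)
      = ∑ d ∈ Icc 1 z, ∑ m ∈ Icc 1 z, (if k ∣ d ∧ d ∣ m then
          ((ArithmeticFunction.moebius (m / d) : ℤ) : ℝ) else 0) * y m := by
        refine sum_congr rfl fun d hd => ?_
        have hd' := mem_Icc.1 hd
        have hd0 : (d : ℝ) ≠ 0 := by
          have : d ≠ 0 := by omega
          exact_mod_cast this
        by_cases h : k ∣ d
        · rw [if_pos h, hl, mul_div_cancel_left₀ _ hd0]
          refine sum_congr rfl fun m _ => ?_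
          by_cases h2 : d ∣ m <;> simp [h, h2]
        · simp [h]
    _ = ∑ m ∈ Icc 1 z, (∑ d ∈ Icc 1 z, (if k ∣ d ∧ d ∣ m then
          ((ArithmeticFunction.moebius (m / d) : ℤ) : ℝ) else 0)) * y m := by
        rw [sum_comm]
        refine sum_congr rfl fun m _ => ?_
        rw [sum_mul]
    _ = ∑ m ∈ Icc 1 z, (if m = k then 1 else 0) * y m := by
        refine sum_congr rfl fun m hm => ?_
        rw [sieve_moebius_inner z k m (by omega) hm]
    _ = y k := by simp [hk'.1, hk'.2]

open Finset in
lemma sieve_quadratic (z : ℕ) (lam : ℕ → ℝ) :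
    ∑ d ∈ Icc 1 z, ∑ e ∈ Icc 1 z, lam d * lam e / (Nat.lcm d e : ℝ) =
      ∑ k ∈ Icc 1 z, (k.totient : ℝ) * (∑ d ∈ Icc 1 z, (if k ∣ d then lam d / d else 0)) ^ 2 := by
  have key : ∀ d ∈ Icc 1 z, ∀ e ∈ Icc 1 z, lam d * lam e / (Nat.lcm d e : ℝ) =
      ∑ k ∈ Icc 1 z, (k.totient : ℝ) * ((if k ∣ d then lam d / d else 0) *
        (if k ∣ e then lam e / e else 0)) := by
    intro d hd e he
    rw [mem_Icc] at hd he
    have hd0 : (d : ℝ) ≠ 0 := by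
      have : d ≠ 0 := by omega
      exact_mod_cast this
    have he0 : (e : ℝ) ≠ 0 := by
      have : e ≠ 0 := by omega
      exact_mod_cast this
    have hg : (Nat.gcd d e : ℝ) * (Nat.lcm d e : ℝ) = d * e := by
      exact_mod_cast Nat.gcd_mul_lcm d e
    have hg0 : Nat.gcd d e ≠ 0 := Nat.gcd_ne_zero_left (by omega)
    have hl0 : (Nat.lcm d e : ℝ) ≠ 0 := by
      exact_mod_cast Nat.lcm_ne_zero (by omega) (by omega)
    have hs : ∑ k ∈ Icc 1 z, (if k ∣ d ∧ k ∣ e then (k.totient : ℝ) else 0) = Nat.gcd d e := by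
      rw [← sum_filter]
      have : (Icc 1 z).filter (fun k => k ∣ d ∧ k ∣ e) = (Nat.gcd d e).divisors := by
        ext k
        simp only [mem_filter, mem_Icc, Nat.mem_divisors, Nat.dvd_gcd_iff]
        constructor
        · rintro ⟨_, h⟩; exact ⟨h, hg0⟩
        · rintro ⟨h, _⟩
          exact ⟨⟨Nat.pos_of_dvd_of_pos h.1 (by omega), (Nat.le_of_dvd (by omega) h.1).trans hd.2⟩, h⟩
      rw [this]
      exact_mod_cast Nat.sum_totient (Nat.gcd d e)
    calc lam d * lam e / (Nat.lcm d e : ℝ) = (Nat.gcd d e : ℝ) * (lam d / d * (lam e / e)) := by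
          field_simp
          linear_combination (-(lam d * lam e)) * hg
      _ = _ := by
          rw [← hs, sum_mul]
          refine sum_congr rfl fun k _ => ?_
          by_cases h1 : k ∣ d <;> by_cases h2 : k ∣ e <;> simp [h1, h2]
  calc _ = ∑ d ∈ Icc 1 z, ∑ e ∈ Icc 1 z, ∑ k ∈ Icc 1 z, (k.totient : ℝ) *
        ((if k ∣ d then lam d / d else 0) * (if k ∣ e then lam e / e else 0)) :=
        sum_congr rfl fun d hd => sum_congr rfl fun e he => key d hd e he
    _ = ∑ d ∈ Icc 1 z, ∑ k ∈ Icc 1 z, ∑ e ∈ Icc 1 z, (k.totient : ℝ) *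
        ((if k ∣ d then lam d / d else 0) * (if k ∣ e then lam e / e else 0)) :=
        sum_congr rfl fun d _ => sum_comm
    _ = ∑ k ∈ Icc 1 z, ∑ d ∈ Icc 1 z, ∑ e ∈ Icc 1 z, (k.totient : ℝ) *
        ((if k ∣ d then lam d / d else 0) * (if k ∣ e then lam e / e else 0)) := sum_comm
    _ = _ := by
        refine sum_congr rfl fun k _ => ?_
        rw [sq, sum_mul_sum, mul_sum]
        refine sum_congr rfl fun d _ => ?_
        rw [mul_sum]

open Finset in
lemma count_dvd_modEq (x q a m : ℕ) (hq : 0 < q) (hm : 0 < m) (h : Nat.Coprime m q) :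
    |((((Ioc 0 x).filter (fun n => n ≡ a [MOD q] ∧ m ∣ n)).card : ℝ)) - x / (q * m : ℝ)| ≤ 1 := by
  obtain ⟨v, hv1, hv2⟩ := Nat.chineseRemainder h 0 a
  have : (Ioc 0 x).filter (fun n => n ≡ a [MOD q] ∧ m ∣ n) =
      (Ioc 0 x).filter (fun n => n ≡ v [MOD (m * q)]) := by
    ext n
    simp only [mem_filter, and_congr_right_iff]
    intro _
    rw [← Nat.modEq_and_modEq_iff_modEq_mul h]
    constructor
    · rintro ⟨h1, h2⟩
      exact ⟨((Nat.modEq_zero_iff_dvd.2 h2).trans hv1.symm), h1.trans hv2.symm⟩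
    · rintro ⟨h1, h2⟩
      exact ⟨h2.trans hv2, Nat.modEq_zero_iff_dvd.1 (h1.trans hv1)⟩
  rw [this]
  have hmq : 0 < m * q := Nat.mul_pos hm hq
  have h3 := Nat.Ioc_filter_modEq_card 0 x hmq v
  have h4 : ((((Ioc 0 x).filter (fun n => n ≡ v [MOD (m * q)])).card : ℤ) : ℝ) =
     ((max (⌊((x:ℚ) - v) / ((m*q : ℕ):ℚ)⌋ - ⌊(((0:ℕ):ℚ) - v) / ((m*q : ℕ):ℚ)⌋) 0 : ℤ) : ℝ) := by
    rw [h3]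
  have hmono : ⌊(((0:ℕ):ℚ) - v) / ((m*q : ℕ):ℚ)⌋ ≤ ⌊((x:ℚ) - v) / ((m*q : ℕ):ℚ)⌋ := by
    apply Int.floor_le_floor
    gcongr
    simp
  rw [max_eq_left (by omega)] at h4
  rw [show (((Ioc 0 x).filter (fun n => n ≡ v [MOD (m * q)])).card : ℝ) =
    ((((Ioc 0 x).filter (fun n => n ≡ v [MOD (m * q)])).card : ℤ) : ℝ) by push_cast; rfl, h4]
  have a1 := Int.floor_le (((x:ℚ) - v) / ((m*q : ℕ):ℚ))
  have a2 := Int.lt_floor_add_one (((x:ℚ) - v) / ((m*q : ℕ):ℚ))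
  have b1 := Int.floor_le ((((0:ℕ):ℚ) - v) / ((m*q : ℕ):ℚ))
  have b2 := Int.lt_floor_add_one ((((0:ℕ):ℚ) - v) / ((m*q : ℕ):ℚ))
  have e1 : ((x:ℚ) - v) / ((m*q : ℕ):ℚ) - (((0:ℕ):ℚ) - v) / ((m*q : ℕ):ℚ) = x / (q * m) := by
    push_cast; ring
  set A := ⌊((x:ℚ) - v) / ((m*q : ℕ):ℚ)⌋
  set B := ⌊(((0:ℕ):ℚ) - v) / ((m*q : ℕ):ℚ)⌋
  have : |((A - B : ℤ) : ℚ) - x / (q * m)| ≤ 1 := by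
    rw [← e1, abs_le]; push_cast; push_cast at a1 a2 b1 b2
    constructor <;> linarith
  have h5 := (Rat.cast_le (K := ℝ)).2 this
  push_cast at h5
  push_cast
  exact h5

open Finset in
lemma sieve_upper (x q a z : ℕ) (hq : 0 < q) (hz : 1 ≤ z) (J : ℝ)
    (hJ : J = ∑ k ∈ (Icc 1 z).filter (fun k => Squarefree k ∧ Nat.Coprime k q),
      (1 : ℝ) / (k.totient : ℝ)) :
    (((Ioc 0 x).filter (fun p => p.Prime ∧ p ≡ a [MOD q])).card : ℝ) ≤
      x / (q * J) + z + (z : ℝ) ^ 6 := by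
  classical
  have hJ1 : 1 ≤ J := by
    rw [hJ]
    have h1 : (1:ℕ) ∈ (Icc 1 z).filter (fun k => Squarefree k ∧ Nat.Coprime k q) := by
      simp [hz]
    have := single_le_sum (f := fun k : ℕ => (1 : ℝ) / (k.totient : ℝ))
      (fun i _ => by positivity) h1
    simpa using this
  set y : ℕ → ℝ := fun k => if Squarefree k ∧ Nat.Coprime k q then
    ((ArithmeticFunction.moebius k : ℤ) : ℝ) / (k.totient * J) else 0 with hy
  set lam : ℕ → ℝ := fun d => d * ∑ m ∈ Icc 1 z, if d ∣ m then
      ((ArithmeticFunction.moebius (m / d) : ℤ) : ℝ) * y m else 0 with hlam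
  have hmu : ∀ n, |((ArithmeticFunction.moebius n : ℤ) : ℝ)| ≤ 1 := by
    intro n
    exact_mod_cast ArithmeticFunction.abs_moebius_le_one
  have hy1 : ∀ k ∈ Icc 1 z, |y k| ≤ 1 := by
    intro k hk
    have hk := mem_Icc.1 hk
    simp only [hy]
    split_ifs with h
    · have ht : (1 : ℝ) ≤ k.totient := by
        exact_mod_cast Nat.totient_pos.2 (by omega)
      have : 1 ≤ k.totient * J := by nlinarith
      rw [abs_div, abs_of_pos (by linarith : 0 < k.totient * J), div_le_one (by linarith)]
      exact (hmu k).trans this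
    · simp
  have hlamb : ∀ d ∈ Icc 1 z, |lam d| ≤ (z : ℝ) ^ 2 := by
    intro d hd
    have hd := mem_Icc.1 hd
    simp only [hlam]
    rw [abs_mul, Nat.abs_cast, sq]
    have h1 : (d : ℝ) ≤ z := by exact_mod_cast hd.2
    refine mul_le_mul h1 ?_ (abs_nonneg _) (by positivity)
    refine (abs_sum_le_sum_abs _ _).trans ?_
    have : ∀ m ∈ Icc 1 z, |if d ∣ m then
      ((ArithmeticFunction.moebius (m / d) : ℤ) : ℝ) * y m else 0| ≤ 1 := by
      intro m hm
      split_ifs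
      · rw [abs_mul]
        exact mul_le_one₀ (hmu _) (abs_nonneg _) (hy1 m hm)
      · simp
    refine (sum_le_sum this).trans ?_
    simp
  have hlam1 : lam 1 = 1 := by
    simp only [hlam, hy]
    simp only [one_dvd, if_true, Nat.div_one, Nat.cast_one, one_mul]
    have : ∀ m ∈ Icc 1 z, ((ArithmeticFunction.moebius m : ℤ) : ℝ) *
        (if Squarefree m ∧ Nat.Coprime m q then
          ((ArithmeticFunction.moebius m : ℤ) : ℝ) / (m.totient * J) else 0) =
        (if Squarefree m ∧ Nat.Coprime m q then (1 : ℝ) / m.totient else 0) / J := by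
      intro m _
      split_ifs with h
      · have h2 : ((ArithmeticFunction.moebius m : ℤ) : ℝ) ^ 2 = 1 := by
          exact_mod_cast (ArithmeticFunction.moebius_sq_eq_one_of_squarefree h.1)
        rw [← h2]
        field_simp
      · simp
    rw [sum_congr rfl this, ← sum_div, ← sum_filter, ← hJ, div_self (by linarith)]
  have hlam0 : ∀ d, ¬ Nat.Coprime d q → lam d = 0 := by
    intro d hd
    simp only [hlam]
    rw [sum_eq_zero, mul_zero]
    intro m _
    split_ifs with h
    · simp only [hy]
      rw [if_neg, mul_zero]
      rintro ⟨_, h2⟩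
      exact hd (h2.coprime_dvd_left h)
    · rfl
  have hquad : ∑ d ∈ Icc 1 z, ∑ e ∈ Icc 1 z, lam d * lam e / (Nat.lcm d e : ℝ) = 1 / J := by
    rw [sieve_quadratic]
    have : ∀ k ∈ Icc 1 z, (k.totient : ℝ) *
        (∑ d ∈ Icc 1 z, (if k ∣ d then lam d / d else 0)) ^ 2 =
        (if Squarefree k ∧ Nat.Coprime k q then (1 : ℝ) / k.totient else 0) / J ^ 2 := by
      intro k hk
      rw [sieve_inversion z y lam (fun d => rfl) k hk]
      have hk := mem_Icc.1 hk
      simp only [hy]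
      have ht : (k.totient : ℝ) ≠ 0 := by
        have := Nat.totient_pos.2 (show 0 < k by omega)
        exact_mod_cast this.ne'
      split_ifs with h
      · have h2 : ((ArithmeticFunction.moebius k : ℤ) : ℝ) ^ 2 = 1 := by
          exact_mod_cast (ArithmeticFunction.moebius_sq_eq_one_of_squarefree h.1)
        rw [div_pow, h2]
        field_simp
      · simp
    rw [sum_congr rfl this, ← sum_div, ← sum_filter, ← hJ]
    have : J ≠ 0 := by linarith
    field_simp
  -- main inequality
  set S := (Ioc 0 x).filter (fun n => n ≡ a [MOD q]) with hS
  have h1 : (((Ioc 0 x).filter (fun p => p.Prime ∧ p ≡ a [MOD q])).card : ℝ) ≤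
      z + ∑ n ∈ S, (∑ d ∈ Icc 1 z, if d ∣ n then lam d else 0) ^ 2 := by
    have hsub : (Ioc 0 x).filter (fun p => p.Prime ∧ p ≡ a [MOD q]) ⊆
        Icc 1 z ∪ S.filter (fun p => p.Prime ∧ z < p) := by
      intro p hp
      simp only [mem_filter, mem_Ioc, mem_union, mem_Icc, hS] at hp ⊢
      by_cases h : p ≤ z
      · left; omega
      · right; exact ⟨⟨hp.1, hp.2.2⟩, hp.2.1, by omega⟩
    have hc := (card_le_card hsub).trans (card_union_le _ _)
    have hc' : (((Ioc 0 x).filter (fun p => p.Prime ∧ p ≡ a [MOD q])).card : ℝ) ≤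
      z + ((S.filter (fun p => p.Prime ∧ z < p)).card : ℝ) := by
      rw [Nat.card_Icc, Nat.add_sub_cancel] at hc
      exact_mod_cast hc
    refine hc'.trans (add_le_add le_rfl ?_)
    rw [card_eq_sum_ones, Nat.cast_sum]
    refine (sum_le_sum (g := fun n => (∑ d ∈ Icc 1 z, if d ∣ n then lam d else 0) ^ 2) ?_).trans
      (sum_le_sum_of_subset_of_nonneg (filter_subset _ _) fun _ _ _ => sq_nonneg _)
    intro p hp
    simp only [mem_filter] at hp
    have : ∑ d ∈ Icc 1 z, (if d ∣ p then lam d else 0) = 1 := by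
      rw [sum_eq_single 1]
      · simp [hlam1]
      · intro d hd hd1
        have hd := mem_Icc.1 hd
        rw [if_neg]
        intro hdp
        rcases (Nat.dvd_prime hp.2.1).1 hdp with h | h
        · exact hd1 h
        · omega
      · intro h; simp [hz] at h
    rw [this]; simp
  have h2 : ∑ n ∈ S, (∑ d ∈ Icc 1 z, if d ∣ n then lam d else 0) ^ 2 =
      ∑ d ∈ Icc 1 z, ∑ e ∈ Icc 1 z, lam d * lam e *
        (((Ioc 0 x).filter (fun n => n ≡ a [MOD q] ∧ Nat.lcm d e ∣ n)).card : ℝ) := by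
    have : ∀ n ∈ S, (∑ d ∈ Icc 1 z, if d ∣ n then lam d else 0) ^ 2 =
        ∑ d ∈ Icc 1 z, ∑ e ∈ Icc 1 z, (if Nat.lcm d e ∣ n then lam d * lam e else 0) := by
      intro n _
      rw [sq, sum_mul_sum]
      refine sum_congr rfl fun d _ => sum_congr rfl fun e _ => ?_
      by_cases h1 : d ∣ n <;> by_cases h2 : e ∣ n <;> simp [h1, h2, Nat.lcm_dvd_iff]
    rw [sum_congr rfl this, sum_comm]
    refine sum_congr rfl fun d _ => ?_
    rw [sum_comm]
    refine sum_congr rfl fun e _ => ?_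
    rw [← sum_filter, sum_const, hS, filter_filter, nsmul_eq_mul, mul_comm]
  have h3 : ∀ d ∈ Icc 1 z, ∀ e ∈ Icc 1 z, lam d * lam e *
        (((Ioc 0 x).filter (fun n => n ≡ a [MOD q] ∧ Nat.lcm d e ∣ n)).card : ℝ) ≤
        (x / q : ℝ) * (lam d * lam e / (Nat.lcm d e : ℝ)) + (z : ℝ) ^ 4 := by
    intro d hd e he
    by_cases hdq : Nat.Coprime d q
    swap
    · rw [hlam0 d hdq]; simp
    by_cases heq : Nat.Coprime e q
    swap
    · rw [hlam0 e heq]; simp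
    have hd' := mem_Icc.1 hd
    have he' := mem_Icc.1 he
    have hlp : 0 < Nat.lcm d e := Nat.lcm_pos (by omega) (by omega)
    have hco : Nat.Coprime (Nat.lcm d e) q :=
      Nat.Coprime.coprime_dvd_left (Nat.lcm_dvd_mul d e) (Nat.Coprime.mul_left hdq heq)
    have hc := count_dvd_modEq x q a (Nat.lcm d e) hq hlp hco
    set c := (((Ioc 0 x).filter (fun n => n ≡ a [MOD q] ∧ Nat.lcm d e ∣ n)).card : ℝ)
    have hll : |lam d * lam e| ≤ (z : ℝ) ^ 4 := by
      rw [abs_mul, show (z : ℝ) ^ 4 = (z : ℝ) ^ 2 * (z : ℝ) ^ 2 by ring]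
      exact mul_le_mul (hlamb d hd) (hlamb e he) (abs_nonneg _) (by positivity)
    have h5 : lam d * lam e * (c - x / (q * (Nat.lcm d e : ℝ))) ≤ (z : ℝ) ^ 4 := by
      refine (le_abs_self _).trans ?_
      rw [abs_mul]
      calc _ ≤ (z : ℝ) ^ 4 * 1 := mul_le_mul hll hc (abs_nonneg _) (by positivity)
        _ = _ := mul_one _
    have h6 : lam d * lam e * (x / (q * (Nat.lcm d e : ℝ))) =
        (x / q : ℝ) * (lam d * lam e / (Nat.lcm d e : ℝ)) := by
      rw [div_mul_eq_div_div]; ring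
    linarith
  have h4 : ∑ n ∈ S, (∑ d ∈ Icc 1 z, if d ∣ n then lam d else 0) ^ 2 ≤
      (x / q : ℝ) * (1 / J) + (z : ℝ) ^ 6 := by
    rw [h2]
    refine (sum_le_sum fun d hd => sum_le_sum fun e he => h3 d hd e he).trans (le_of_eq ?_)
    simp only [sum_add_distrib, ← mul_sum]
    rw [hquad]
    simp
    ring
  have h7 : (x / q : ℝ) * (1 / J) = x / (q * J) := by
    rw [div_mul_eq_div_div]; ring
  linarith

open Finset in
lemma sum_inv_sq_le_two (z : ℕ) : ∑ b ∈ Icc 1 z, (1 : ℝ) / (b : ℝ) ^ 2 ≤ 2 := by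
  rcases Nat.eq_zero_or_pos z with rfl | hz
  · simp
  rw [← add_sum_Ioc_eq_sum_Icc hz]
  have h := sum_Ioc_inv_sq_le_sub (α := ℝ) one_ne_zero hz
  have : (0:ℝ) ≤ (z:ℝ)⁻¹ := by positivity
  simp only [one_div]
  norm_num at h ⊢
  linarith

open Finset in
lemma sum_inv_le_squarefree (z : ℕ) :
    Real.log z ≤ 2 * ∑ k ∈ (Icc 1 z).filter Squarefree, (1 : ℝ) / (k.totient : ℝ) := by
  classical
  have h0 : Real.log z ≤ ∑ n ∈ Icc 1 z, (1 : ℝ) / n := by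
    have h1 := log_add_one_le_harmonic z
    have h2 : Real.log z ≤ Real.log (z + 1) := by
      rcases Nat.eq_zero_or_pos z with rfl | hz
      · simp
      · apply Real.log_le_log (by exact_mod_cast hz); linarith
    rw [harmonic_eq_sum_Icc] at h1
    push_cast at h1 h2
    simp only [one_div]
    linarith
  refine h0.trans ?_
  have hc : ∀ n : ℕ, ∃ ab : ℕ × ℕ, ab.2 ^ 2 * ab.1 = n ∧ Squarefree ab.1 := by
    intro n
    obtain ⟨a, b, h⟩ := Nat.sq_mul_squarefree n
    exact ⟨(a, b), h⟩
  choose f hf1 hf2 using hc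
  have hinj : Function.Injective f := by
    intro a b hab
    rw [← hf1 a, ← hf1 b, hab]
  have hmem : ∀ n ∈ Icc 1 z, f n ∈ (Icc 1 z).filter Squarefree ×ˢ Icc 1 z := by
    intro n hn
    have hn := mem_Icc.1 hn
    have h1 := hf1 n
    have ha : (f n).1 ≠ 0 := by intro h; rw [h] at h1; omega
    have hb : (f n).2 ≠ 0 := by intro h; rw [h] at h1; simp at h1; omega
    have hb1 : 1 ≤ (f n).2 ^ 2 := Nat.one_le_pow _ _ (by omega)
    simp only [mem_product, mem_filter, mem_Icc]
    refine ⟨⟨⟨by omega, ?_⟩, hf2 n⟩, by omega, ?_⟩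
    · nlinarith [Nat.pos_of_ne_zero ha]
    · nlinarith [Nat.pos_of_ne_zero ha, Nat.pos_of_ne_zero hb]
  calc ∑ n ∈ Icc 1 z, (1 : ℝ) / n
      = ∑ n ∈ Icc 1 z, (fun ab : ℕ × ℕ => (1 : ℝ) / ab.1 * (1 / (ab.2 : ℝ) ^ 2)) (f n) := by
        refine sum_congr rfl fun n _ => ?_
        have : (n : ℝ) = ((f n).2 : ℝ) ^ 2 * (f n).1 := by exact_mod_cast (hf1 n).symm
        simp only
        rw [this, one_div_mul_one_div, mul_comm]
    _ = ∑ ab ∈ (Icc 1 z).image f, (1 : ℝ) / ab.1 * (1 / (ab.2 : ℝ) ^ 2) :=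
        by rw [sum_image (fun a _ b _ h => hinj h)]
    _ ≤ ∑ ab ∈ (Icc 1 z).filter Squarefree ×ˢ Icc 1 z, (1 : ℝ) / ab.1 * (1 / (ab.2 : ℝ) ^ 2) := by
        refine sum_le_sum_of_subset_of_nonneg ?_ fun _ _ _ => by positivity
        intro ab hab
        obtain ⟨n, hn, rfl⟩ := mem_image.1 hab
        exact hmem n hn
    _ = (∑ k ∈ (Icc 1 z).filter Squarefree, (1 : ℝ) / k) * ∑ b ∈ Icc 1 z, (1 : ℝ) / (b : ℝ) ^ 2 := by
        rw [sum_mul_sum, sum_product]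
    _ ≤ (∑ k ∈ (Icc 1 z).filter Squarefree, (1 : ℝ) / (k.totient : ℝ)) * 2 := by
        refine mul_le_mul ?_ (sum_inv_sq_le_two z) (sum_nonneg fun _ _ => by positivity)
          (sum_nonneg fun _ _ => by positivity)
        refine sum_le_sum fun k hk => ?_
        have hk := mem_Icc.1 (mem_filter.1 hk).1
        have : 0 < k.totient := Nat.totient_pos.2 (by omega)
        apply one_div_le_one_div_of_le (by exact_mod_cast this)
        exact_mod_cast Nat.totient_le k
    _ = _ := mul_comm _ _

open Finset in
lemma squarefree_sum_le (z q : ℕ) (hq : Squarefree q) :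
    ∑ k ∈ (Icc 1 z).filter Squarefree, (1 : ℝ) / (k.totient : ℝ) ≤
      (q / q.totient : ℝ) * ∑ k ∈ (Icc 1 z).filter (fun k => Squarefree k ∧ Nat.Coprime k q),
      (1 : ℝ) / (k.totient : ℝ) := by
  classical
  have hq0 : q ≠ 0 := hq.ne_zero
  have hdiv : ∑ l ∈ q.divisors, (1 : ℝ) / (l.totient : ℝ) = q / q.totient := by
    have h1 : ∀ l ∈ q.divisors, (1 : ℝ) / (l.totient : ℝ) = ((q / l).totient : ℝ) / q.totient := by
      intro l hl
      obtain ⟨m, rfl⟩ := (Nat.mem_divisors.1 hl).1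
      have hl0 : 0 < l := Nat.pos_of_mem_divisors hl
      have hm0 : 0 < m := Nat.pos_of_ne_zero (by rintro rfl; simp at hq0)
      rw [Nat.mul_div_cancel_left _ hl0, Nat.totient_mul (Nat.coprime_of_squarefree_mul hq)]
      have : ((m.totient : ℕ) : ℝ) ≠ 0 := by exact_mod_cast (Nat.totient_pos.2 hm0).ne'
      push_cast
      have : ((l.totient : ℕ) : ℝ) ≠ 0 := by exact_mod_cast (Nat.totient_pos.2 hl0).ne'
      field_simp
    rw [sum_congr rfl h1, ← sum_div, Nat.sum_div_divisors q (fun e => ((e.totient : ℕ) : ℝ))]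
    congr 1
    exact_mod_cast Nat.sum_totient q
  rw [← hdiv, sum_mul_sum, ← sum_product']
  set f : ℕ → ℕ × ℕ := fun k => (Nat.gcd k q, k / Nat.gcd k q) with hf
  have hfm : ∀ k, (f k).1 * (f k).2 = k := fun k => Nat.mul_div_cancel' (Nat.gcd_dvd_left k q)
  have hinj : Function.Injective f := by
    intro a b hab
    rw [← hfm a, ← hfm b, hab]
  have hcop : ∀ k, Squarefree k → Nat.Coprime (f k).1 (f k).2 := by
    intro k hk
    apply Nat.coprime_of_squarefree_mul
    rw [hfm]; exact hk
  calc _ = ∑ k ∈ (Icc 1 z).filter Squarefree,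
        (fun ab : ℕ × ℕ => (1 : ℝ) / (ab.1.totient : ℝ) * (1 / (ab.2.totient : ℝ))) (f k) := by
        refine sum_congr rfl fun k hk => ?_
        have hk2 := (mem_filter.1 hk).2
        conv_lhs => rw [← hfm k, Nat.totient_mul (hcop k hk2)]
        simp only
        push_cast
        rw [one_div_mul_one_div]
    _ = ∑ ab ∈ ((Icc 1 z).filter Squarefree).image f,
        (1 : ℝ) / (ab.1.totient : ℝ) * (1 / (ab.2.totient : ℝ)) :=
        by rw [sum_image (fun a _ b _ h => hinj h)]
    _ ≤ _ := by
        refine sum_le_sum_of_subset_of_nonneg ?_ fun _ _ _ => by positivity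
        intro ab hab
        obtain ⟨k, hk, rfl⟩ := mem_image.1 hab
        have hk2 := (mem_filter.1 hk).2
        have hk1 := mem_Icc.1 (mem_filter.1 hk).1
        simp only [mem_product, Nat.mem_divisors, mem_filter, mem_Icc]
        have hfk := hfm k
        have hd2 : (f k).2 ∣ k := Dvd.intro_left _ hfk
        refine ⟨⟨Nat.gcd_dvd_right k q, hq0⟩, ⟨Nat.pos_of_dvd_of_pos hd2 (by omega),
          (Nat.le_of_dvd (by omega) hd2).trans hk1.2⟩, hk2.squarefree_of_dvd hd2, ?_⟩
        -- coprimality with q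
        rw [Nat.coprime_iff_gcd_eq_one]
        have h1 : Nat.gcd (f k).2 q ∣ (f k).1 :=
          Nat.dvd_gcd ((Nat.gcd_dvd_left _ _).trans hd2) (Nat.gcd_dvd_right _ _)
        have h2 : Nat.gcd (f k).2 q ∣ (f k).2 := Nat.gcd_dvd_left _ _
        exact Nat.eq_one_of_dvd_coprimes (hcop k hk2) h1 h2

open Finset in
lemma brun_titchmarsh (x q a : ℕ) (hx : 2 ≤ x) (hq : Squarefree q) :
    (((Ioc 0 x).filter (fun p => p.Prime ∧ p ≡ a [MOD q])).card : ℝ) ≤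
      20 * x / (q.totient * Real.log x) + 66 * (x : ℝ) ^ (3 / 5 : ℝ) := by
  have hx1 : (1 : ℝ) ≤ x := by exact_mod_cast (by omega : 1 ≤ x)
  have hx2 : (1 : ℝ) < x := by exact_mod_cast (by omega : 1 < x)
  set w : ℝ := (x : ℝ) ^ (1 / 10 : ℝ) with hw
  have hw1 : 1 < w := Real.one_lt_rpow hx2 (by norm_num)
  set z := ⌈w⌉₊ with hz
  have hz1 : 1 ≤ z := Nat.one_le_ceil_iff.2 (by linarith)
  have hzw : w ≤ z := Nat.le_ceil w
  have hzw2 : (z : ℝ) ≤ 2 * w := by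
    have := (Nat.ceil_lt_add_one (by linarith : 0 ≤ w)).le
    linarith
  have hlog : Real.log x / 10 ≤ Real.log z := by
    have : Real.log w = Real.log x / 10 := by
      rw [hw, Real.log_rpow (by linarith)]; ring
    rw [← this]
    exact Real.log_le_log (by linarith) hzw
  have hlogx : 0 < Real.log x := Real.log_pos hx2
  have hq0 : 0 < q := Nat.pos_of_ne_zero hq.ne_zero
  have hqr : (0 : ℝ) < q := by exact_mod_cast hq0
  have htr : (0 : ℝ) < q.totient := by exact_mod_cast Nat.totient_pos.2 hq0
  have h1 := sieve_upper x q a z hq0 hz1 _ rfl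
  have h2 := squarefree_sum_le z q hq
  have h3 := sum_inv_le_squarefree z
  set J := ∑ k ∈ (Icc 1 z).filter (fun k => Squarefree k ∧ Nat.Coprime k q),
      (1 : ℝ) / (k.totient : ℝ) with hJ
  have h4 : q.totient * Real.log x / 20 ≤ q * J := by
    have : Real.log x / 20 ≤ q / q.totient * J := by linarith
    have h5 := mul_le_mul_of_nonneg_left this htr.le
    have h6 : (q.totient : ℝ) * (q / q.totient * J) = q * J := by field_simp
    rw [h6] at h5
    linarith
  have h5 : (x : ℝ) / (q * J) ≤ 20 * x / (q.totient * Real.log x) := by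
    calc (x : ℝ) / (q * J) ≤ x / (q.totient * Real.log x / 20) :=
          div_le_div_of_nonneg_left (by positivity) (by positivity) h4
      _ = _ := by field_simp
  have h6 : (z : ℝ) ^ 6 ≤ 64 * (x : ℝ) ^ (3 / 5 : ℝ) := by
    calc (z : ℝ) ^ 6 ≤ (2 * w) ^ 6 := by gcongr
      _ = 64 * w ^ 6 := by ring
      _ = 64 * (x : ℝ) ^ (3 / 5 : ℝ) := by
        rw [hw, ← Real.rpow_natCast, ← Real.rpow_mul (by linarith)]; norm_num
  have h7 : (z : ℝ) ≤ 2 * (x : ℝ) ^ (3 / 5 : ℝ) := by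
    have : w ≤ (x : ℝ) ^ (3 / 5 : ℝ) := Real.rpow_le_rpow_of_exponent_le hx1 (by norm_num)
    linarith
  linarith


/-- Exponent of `1 - 1/r` in the ratio of truncated `φ(m)/m` at `n - ℓ` and `n + ℓ`. -/
def cexp (ℓ r n : ℕ) : ℤ :=
  (if (r : ℤ) ∣ (n : ℤ) - ℓ then 1 else 0) - (if (r : ℤ) ∣ (n : ℤ) + ℓ then 1 else 0)

/-- Truncated ratio. -/
noncomputable def cG (ℓ : ℕ) (S : Finset ℕ) (n : ℕ) : ℝ :=
  ∏ r ∈ S, (1 - 1 / (r : ℝ)) ^ (cexp ℓ r n)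

lemma cexp_congr (ℓ r n m : ℕ) (h : n ≡ m [MOD r]) : cexp ℓ r n = cexp ℓ r m := by
  have h' : (r : ℤ) ∣ (m : ℤ) - n := Nat.modEq_iff_dvd.1 h
  have h1 : (r : ℤ) ∣ (n : ℤ) - ℓ ↔ (r : ℤ) ∣ (m : ℤ) - ℓ := by
    have : (m : ℤ) - ℓ = (n - ℓ) + (m - n) := by ring
    rw [this]; exact (dvd_add_left h').symm
  have h2 : (r : ℤ) ∣ (n : ℤ) + ℓ ↔ (r : ℤ) ∣ (m : ℤ) + ℓ := by
    have : (m : ℤ) + ℓ = (n + ℓ) + (m - n) := by ring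
    rw [this]; exact (dvd_add_left h').symm
  simp only [cexp, h1, h2]

lemma padic_zpow (p : ℕ) [Fact p.Prime] (q : ℚ) (k : ℤ) :
    padicValRat p (q ^ k) = k * padicValRat p q := by
  rcases Int.eq_nat_or_neg k with ⟨n, rfl | rfl⟩
  · rw [zpow_natCast, padicValRat.pow]
  · rw [zpow_neg, zpow_natCast, padicValRat.inv, padicValRat.pow]; ring

lemma base_ne_zero (s : ℕ) (hs : s.Prime) : (1 - 1 / (s : ℚ)) ≠ 0 := by
  have : (1 : ℚ) < s := by exact_mod_cast hs.one_lt
  have h2 : 1 / (s : ℚ) < 1 := by rw [div_lt_one (by linarith)]; exact this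
  linarith

lemma base_pos (s : ℕ) (hs : s.Prime) : 0 < (1 - 1 / (s : ℝ)) := by
  have : (1 : ℝ) < s := by exact_mod_cast hs.one_lt
  have h2 : 1 / (s : ℝ) < 1 := by rw [div_lt_one (by linarith)]; exact this
  linarith

lemma base_val_lt (r s : ℕ) [Fact r.Prime] (hs : s.Prime) (h : s < r) :
    padicValRat r (1 - 1 / (s : ℚ)) = 0 := by
  have h0 : (s : ℚ) ≠ 0 := by exact_mod_cast hs.ne_zero
  have h1 : (1 - 1 / (s : ℚ)) = ((s - 1 : ℕ) : ℚ) / (s : ℚ) := by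
    rw [Nat.cast_sub hs.one_lt.le]; field_simp; simp
  have hs1 := hs.one_lt
  have h2 : ((s - 1 : ℕ) : ℚ) ≠ 0 := by
    have : s - 1 ≠ 0 := by omega
    exact_mod_cast this
  rw [h1, padicValRat.div h2 h0, padicValRat.of_nat, padicValRat.of_nat,
    padicValNat.eq_zero_of_not_dvd (Nat.not_dvd_of_pos_of_lt (by omega) (by omega)),
    padicValNat.eq_zero_of_not_dvd (Nat.not_dvd_of_pos_of_lt (by omega) (by omega))]
  simp

lemma base_val_self (r : ℕ) [hr : Fact r.Prime] :
    padicValRat r (1 - 1 / (r : ℚ)) = -1 := by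
  have hs := hr.out
  have h0 : (r : ℚ) ≠ 0 := by exact_mod_cast hs.ne_zero
  have h1 : (1 - 1 / (r : ℚ)) = ((r - 1 : ℕ) : ℚ) / (r : ℚ) := by
    rw [Nat.cast_sub hs.one_lt.le]; field_simp; simp
  have hs1 := hs.one_lt
  have h2 : ((r - 1 : ℕ) : ℚ) ≠ 0 := by
    have : r - 1 ≠ 0 := by omega
    exact_mod_cast this
  rw [h1, padicValRat.div h2 h0, padicValRat.of_nat, padicValRat.of_nat,
    padicValNat.eq_zero_of_not_dvd (Nat.not_dvd_of_pos_of_lt (by omega) (by omega)),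
    padicValNat_self]
  simp

lemma prod_val_zero (r : ℕ) [Fact r.Prime] (S : Finset ℕ) (e : ℕ → ℤ)
    (hS : ∀ s ∈ S, s.Prime ∧ s < r) :
    padicValRat r (∏ s ∈ S, (1 - 1 / (s : ℚ)) ^ (e s)) = 0 := by
  classical
  induction S using Finset.induction_on with
  | empty => simp
  | insert a S ha ih =>
    have h1 := hS a (Finset.mem_insert_self _ _)
    rw [Finset.prod_insert ha, padicValRat.mul (zpow_ne_zero _ (base_ne_zero a h1.1))
      (Finset.prod_ne_zero_iff.2 fun s hs => zpow_ne_zero _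
        (base_ne_zero s (hS s (Finset.mem_insert_of_mem hs)).1)),
      ih (fun s hs => hS s (Finset.mem_insert_of_mem hs)),
      padic_zpow, base_val_lt r a h1.1 h1.2]
    simp

lemma prod_distinct (S : Finset ℕ) (e e' : ℕ → ℤ) (hS : ∀ s ∈ S, s.Prime)
    (h : ∏ s ∈ S, (1 - 1 / (s : ℚ)) ^ (e s) = ∏ s ∈ S, (1 - 1 / (s : ℚ)) ^ (e' s)) :
    ∀ s ∈ S, e s = e' s := by
  classical
  induction S using Finset.induction_on_max with
  | empty => simp
  | insert r S hr ih =>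
    have hrS : r ∉ S := fun h => lt_irrefl _ (hr r h)
    have hrp := hS r (Finset.mem_insert_self _ _)
    haveI : Fact r.Prime := ⟨hrp⟩
    have hS' : ∀ s ∈ S, s.Prime := fun s hs => hS s (Finset.mem_insert_of_mem hs)
    have hne : ∀ f : ℕ → ℤ, ∏ s ∈ S, (1 - 1 / (s : ℚ)) ^ (f s) ≠ 0 := fun f =>
      Finset.prod_ne_zero_iff.2 fun s hs => zpow_ne_zero _ (base_ne_zero s (hS' s hs))
    have hv : ∀ f : ℕ → ℤ, padicValRat r (∏ s ∈ insert r S, (1 - 1 / (s : ℚ)) ^ (f s)) = - f r := by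
      intro f
      rw [Finset.prod_insert hrS, padicValRat.mul (zpow_ne_zero _ (base_ne_zero r hrp)) (hne f),
        prod_val_zero r S f (fun s hs => ⟨hS' s hs, hr s hs⟩),
        padic_zpow, base_val_self]
      ring
    have her : e r = e' r := by
      have h1 := hv e
      rw [h, hv e'] at h1
      omega
    intro s hs
    rcases Finset.mem_insert.1 hs with rfl | hs
    · exact her
    · refine ih hS' ?_ s hs
      rw [Finset.prod_insert hrS, Finset.prod_insert hrS, her] at h
      exact mul_left_cancel₀ (zpow_ne_zero _ (base_ne_zero r hrp)) h

lemma cG_distinct (ℓ : ℕ) (S : Finset ℕ) (hS : ∀ s ∈ S, s.Prime) (n m : ℕ)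
    (h : cG ℓ S n = cG ℓ S m) : ∀ s ∈ S, cexp ℓ s n = cexp ℓ s m := by
  apply prod_distinct S (fun s => cexp ℓ s n) (fun s => cexp ℓ s m) hS
  simp only [cG] at h
  apply (Rat.cast_injective (α := ℝ))
  push_cast
  exact h

lemma cG_pos (ℓ : ℕ) (S : Finset ℕ) (hS : ∀ s ∈ S, s.Prime) (n : ℕ) : 0 < cG ℓ S n :=
  Finset.prod_pos fun s hs => zpow_pos (base_pos s (hS s hs)) _

lemma cG_congr (ℓ : ℕ) (S : Finset ℕ) (n m : ℕ) (h : ∀ r ∈ S, n ≡ m [MOD r]) :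
    cG ℓ S n = cG ℓ S m :=
  Finset.prod_congr rfl fun r hr => by rw [cexp_congr ℓ r n m (h r hr)]

lemma cG_gap (ℓ : ℕ) (S : Finset ℕ) (hS : ∀ s ∈ S, s.Prime) :
    ∃ δ > 0, ∀ n m, |cG ℓ S n / cG ℓ S m - 1| < δ → cG ℓ S n = cG ℓ S m := by
  have hfin : (Set.range (cG ℓ S)).Finite := by
    have hM : 0 < ∏ s ∈ S, s := Finset.prod_pos fun s hs => (hS s hs).pos
    refine ((Finset.range (∏ s ∈ S, s)).finite_toSet.image (cG ℓ S)).subset ?_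
    rintro _ ⟨n, rfl⟩
    refine ⟨n % ∏ s ∈ S, s, by simpa using Nat.mod_lt _ hM, ?_⟩
    apply cG_congr
    intro r hr
    exact (Nat.mod_modEq n _).of_dvd (Finset.dvd_prod_of_mem _ hr)
  have hfin2 : ((fun q : ℝ × ℝ => q.1 / q.2) ''
      (Set.range (cG ℓ S) ×ˢ Set.range (cG ℓ S)) \ {1}).Finite :=
    ((hfin.prod hfin).image _).sdiff
  have hop := hfin2.isClosed.isOpen_compl
  obtain ⟨δ, hδ, hb⟩ := Metric.isOpen_iff.1 hop 1 (by simp)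
  refine ⟨δ, hδ, fun n m h => ?_⟩
  have h1 := hb (show cG ℓ S n / cG ℓ S m ∈ Metric.ball 1 δ by
    rwa [Metric.mem_ball, Real.dist_eq])
  have h2 : cG ℓ S n / cG ℓ S m = 1 := by
    by_contra hne
    exact h1 ⟨⟨(cG ℓ S n, cG ℓ S m), ⟨⟨n, rfl⟩, ⟨m, rfl⟩⟩, rfl⟩, hne⟩
  rwa [div_eq_one_iff_eq (cG_pos ℓ S hS m).ne'] at h2

lemma exists_excluded (ℓ r c : ℕ) (hr : r.Prime) (h : 2 * ℓ < r) (hℓ : 0 < ℓ) :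
    ∃ b, b ≠ 0 ∧ b < r ∧ cexp ℓ r b ≠ cexp ℓ r c := by
  have h1 : cexp ℓ r ℓ = 1 := by
    have h2 : ¬ ((r : ℤ) ∣ (ℓ : ℤ) + ℓ) := by
      intro hd
      have : r ∣ ℓ + ℓ := by exact_mod_cast hd
      have := Nat.le_of_dvd (by omega) this
      omega
    simp [cexp, h2]
  have h2 : cexp ℓ r (r - ℓ) = -1 := by
    have h3 : ((r - ℓ : ℕ) : ℤ) = r - ℓ := by omega
    have h2 : ¬ ((r : ℤ) ∣ (r : ℤ) - ℓ - ℓ) := by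
      intro hd
      have h4 : (r : ℤ) ∣ (r : ℤ) - ℓ - ℓ - r := dvd_sub_self_right.2 hd
      have h5 : (r : ℤ) ∣ ((ℓ + ℓ : ℕ) : ℤ) := by
        have := (dvd_neg (a := (r : ℤ))).2 h4
        have h7 : ((ℓ + ℓ : ℕ) : ℤ) = -((r : ℤ) - ℓ - ℓ - r) := by push_cast; ring
        rw [h7]
        exact this
      have h6 : r ∣ ℓ + ℓ := by exact_mod_cast h5
      have := Nat.le_of_dvd (by omega) h6
      omega
    simp [cexp, h3, h2]
  by_cases hc : cexp ℓ r c = 1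
  · exact ⟨r - ℓ, by omega, by omega, by omega⟩
  · exact ⟨ℓ, by omega, by omega, by omega⟩

open Finset in
lemma window_count (ℓ : ℕ) (hℓ : 0 < ℓ) (Q R : Finset ℕ) (hQ : ∀ s ∈ Q, s.Prime)
    (hR : ∀ s ∈ R, s.Prime) (hR2 : ∀ s ∈ R, 2 * ℓ < s) (hd : Disjoint Q R) (δ lo hi : ℝ)
    (hgap : ∀ n m, |cG ℓ R n / cG ℓ R m - 1| < δ → cG ℓ R n = cG ℓ R m)
    (hlo : 0 < lo) (h1 : hi / lo < 1 + δ) (h2 : 1 - δ < lo / hi) (hlh : lo ≤ hi) :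
    ((range (∏ s ∈ Q ∪ R, s)).filter (fun a => Nat.Coprime a (∏ s ∈ Q ∪ R, s) ∧
      lo ≤ cG ℓ (Q ∪ R) a ∧ cG ℓ (Q ∪ R) a ≤ hi)).card ≤
      (∏ r ∈ R, (r - 2)) * (∏ s ∈ Q, s).totient := by
  classical
  set M0 := ∏ s ∈ Q, s with hM0
  have hMM : ∏ s ∈ Q ∪ R, s = M0 * ∏ s ∈ R, s := prod_union hd
  have hM0p : 0 < M0 := prod_pos fun s hs => (hQ s hs).pos
  have hU : ∀ s ∈ Q ∪ R, s.Prime := fun s hs => (mem_union.1 hs).elim (hQ s) (hR s)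
  set B := (range (∏ s ∈ Q ∪ R, s)).filter (fun a => Nat.Coprime a (∏ s ∈ Q ∪ R, s) ∧
      lo ≤ cG ℓ (Q ∪ R) a ∧ cG ℓ (Q ∪ R) a ≤ hi) with hB
  have hGm : ∀ a, cG ℓ (Q ∪ R) a = cG ℓ Q a * cG ℓ R a := fun a => prod_union hd
  refine (card_le_mul_card_image (f := fun a => a % M0) B (∏ r ∈ R, (r - 2)) ?_).trans ?_
  · intro a0 ha0
    obtain ⟨c, hc, hc0⟩ := mem_image.1 ha0
    have hex : ∀ r ∈ R, ∃ b, b ≠ 0 ∧ b < r ∧ cexp ℓ r b ≠ cexp ℓ r c := fun r hr =>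
      exists_excluded ℓ r c (hR r hr) (hR2 r hr) hℓ
    choose! b hb0 hbr hbe using hex
    have hcard : (R.pi (fun r => ((range r).erase 0).erase (b r))).card = ∏ r ∈ R, (r - 2) := by
      rw [card_pi]
      refine prod_congr rfl fun r hr => ?_
      rw [card_erase_of_mem, card_erase_of_mem, card_range]
      · omega
      · simpa using (hR r hr).pos
      · simp [hb0 r hr, hbr r hr]
    rw [← hcard]
    refine card_le_card_of_injOn (fun a r _ => a % r) ?_ ?_
    · intro a ha
      simp only [coe_filter, Set.mem_ofPred_eq, hB, mem_filter, mem_range] at ha hc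
      obtain ⟨⟨haM, hacop, hal, hah⟩, ha0'⟩ := ha
      obtain ⟨hcM, hccop, hcl, hch⟩ := hc
      -- exponents agree
      have hQeq : cG ℓ Q a = cG ℓ Q c := by
        apply cG_congr
        intro r hr
        have : a ≡ c [MOD M0] := by
          show a % M0 = c % M0
          rw [ha0', hc0]
        exact this.of_dvd (dvd_prod_of_mem _ hr)
      rw [hGm] at hal hah hcl hch
      rw [hQeq] at hal hah
      have pQ := cG_pos ℓ Q hQ c
      have pa := cG_pos ℓ R hR a
      have pc := cG_pos ℓ R hR c
      have hrat : cG ℓ R a / cG ℓ R c = (cG ℓ Q c * cG ℓ R a) / (cG ℓ Q c * cG ℓ R c) := by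
        field_simp
      have hup : cG ℓ R a / cG ℓ R c ≤ hi / lo := by
        rw [hrat]
        exact div_le_div₀ (by linarith) hah hlo hcl
      have hdn : lo / hi ≤ cG ℓ R a / cG ℓ R c := by
        rw [hrat]
        exact div_le_div₀ (by positivity) hal (by positivity) hch
      have heq := hgap a c (by rw [abs_lt]; constructor <;> linarith)
      have hexp := cG_distinct ℓ R hR a c heq
      simp only [mem_coe, mem_pi]
      intro r hr
      simp only [mem_erase, mem_range]
      refine ⟨?_, ?_, Nat.mod_lt _ (hR r hr).pos⟩
      · intro hab
        apply hbe r hr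
        rw [← hab, ← hexp r hr]
        exact cexp_congr ℓ r _ _ (Nat.mod_modEq a r)
      · intro h0
        have hra : r ∣ a := Nat.dvd_of_mod_eq_zero h0
        have hrM : r ∣ ∏ s ∈ Q ∪ R, s := dvd_prod_of_mem _ (mem_union_right _ hr)
        exact (hR r hr).one_lt.ne' (Nat.eq_one_of_dvd_coprimes hacop hra hrM)
    · intro a ha a' ha' haa
      simp only [coe_filter, Set.mem_ofPred_eq, hB, mem_filter, mem_range] at ha ha'
      have key : (((∏ s ∈ Q ∪ R, s : ℕ)) : ℤ) ∣ (a' : ℤ) - a := by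
        push_cast
        refine Finset.prod_dvd_of_coprime ?_ ?_
        · intro i hi j hj hij
          exact Nat.isCoprime_iff_coprime.2 ((Nat.coprime_primes (hU i hi) (hU j hj)).2 hij)
        · intro r hr
          apply Nat.modEq_iff_dvd.1
          rcases mem_union.1 hr with hr | hr
          · have : a ≡ a' [MOD M0] := by
              show a % M0 = a' % M0
              rw [ha.2, ha'.2]
            exact this.of_dvd (dvd_prod_of_mem _ hr)
          · have := congrFun (congrFun haa r) hr
            exact this
      have := Nat.modEq_iff_dvd.2 key
      exact this.eq_of_lt_of_lt ha.1.1 ha'.1.1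
  · refine Nat.mul_le_mul le_rfl ?_
    rw [Nat.totient_eq_card_coprime]
    refine card_le_card ?_
    intro a0 ha0
    obtain ⟨c, hc, rfl⟩ := mem_image.1 ha0
    simp only [hB, mem_filter, mem_range] at hc ⊢
    refine ⟨Nat.mod_lt _ hM0p, ?_⟩
    have : Nat.Coprime c M0 := Nat.Coprime.coprime_dvd_right (hMM ▸ Dvd.intro _ rfl) hc.2.1
    rw [Nat.coprime_iff_gcd_eq_one] at this ⊢
    rw [← this, Nat.gcd_comm, Nat.gcd_comm c M0, ← Nat.gcd_rec, Nat.gcd_comm]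


/-- Sum of reciprocals of the large prime factors. -/
noncomputable def tailS (y n : ℕ) : ℝ := ∑ r ∈ n.primeFactors.filter (fun r => y < r), 1 / (r : ℝ)

/-- Primes up to `y`. -/
def prP (y : ℕ) : Finset ℕ := (Finset.range (y + 1)).filter Nat.Prime

lemma one_sub_sum_le_prod (S : Finset ℕ) (f : ℕ → ℝ) (h0 : ∀ s ∈ S, 0 ≤ f s)
    (h1 : ∀ s ∈ S, f s ≤ 1) : 1 - ∑ s ∈ S, f s ≤ ∏ s ∈ S, (1 - f s) := by
  classical
  induction S using Finset.induction_on with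
  | empty => simp
  | insert a S ha ih =>
    rw [Finset.sum_insert ha, Finset.prod_insert ha]
    have i1 := ih (fun s hs => h0 s (Finset.mem_insert_of_mem hs))
      (fun s hs => h1 s (Finset.mem_insert_of_mem hs))
    have a0 := h0 a (Finset.mem_insert_self _ _)
    have a1 := h1 a (Finset.mem_insert_self _ _)
    have s0 : 0 ≤ ∑ s ∈ S, f s := Finset.sum_nonneg fun s hs => h0 s (Finset.mem_insert_of_mem hs)
    nlinarith [mul_le_mul_of_nonneg_left i1 (by linarith : 0 ≤ 1 - f a), mul_nonneg a0 s0]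

/-- Truncated `φ(n)/n`. -/
noncomputable def Fy (y n : ℕ) : ℝ := ∏ r ∈ prP y, if r ∣ n then (1 - 1 / (r : ℝ)) else 1

lemma Fy_pos (y n : ℕ) : 0 < Fy y n := by
  refine Finset.prod_pos fun r hr => ?_
  have := base_pos r (Finset.mem_filter.1 hr).2
  split_ifs <;> linarith

lemma totient_split (y n : ℕ) (hn : n ≠ 0) :
    ∃ t : ℝ, (n.totient : ℝ) / n = Fy y n * t ∧ 1 - tailS y n ≤ t ∧ t ≤ 1 := by
  classical
  refine ⟨∏ r ∈ n.primeFactors.filter (fun r => y < r), (1 - 1 / (r : ℝ)), ?_, ?_, ?_⟩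
  · have h1 := Nat.totient_eq_mul_prod_factors n
    have h2 : (n.totient : ℝ) = n * ∏ p ∈ n.primeFactors, (1 - (p : ℝ)⁻¹) := by
      have := congrArg (fun q : ℚ => (q : ℝ)) h1
      push_cast at this
      exact this
    have hn' : (n : ℝ) ≠ 0 := by exact_mod_cast hn
    rw [h2, mul_div_cancel_left₀ _ hn', ← Finset.prod_filter_not_mul_prod_filter _ (fun r => y < r)]
    congr 1
    · rw [Fy, ← Finset.prod_filter]
      refine Finset.prod_congr ?_ fun r _ => by rw [one_div]
      ext r
      simp only [prP, Finset.mem_filter, Nat.mem_primeFactors, Finset.mem_range]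
      constructor
      · rintro ⟨⟨a, b, c⟩, d⟩; exact ⟨⟨by omega, a⟩, b⟩
      · rintro ⟨⟨a, b⟩, c⟩; exact ⟨⟨b, c, hn⟩, by omega⟩
    · refine Finset.prod_congr rfl fun r _ => by rw [one_div]
  · apply one_sub_sum_le_prod
    · intro s _; positivity
    · intro s hs
      have := base_pos s (Nat.prime_of_mem_primeFactors (Finset.mem_filter.1 hs).1)
      linarith
  · refine Finset.prod_le_one ?_ ?_
    · intro s hs
      exact (base_pos s (Nat.prime_of_mem_primeFactors (Finset.mem_filter.1 hs).1)).le
    · intro s _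
      have : 0 ≤ 1 / (s : ℝ) := by positivity
      linarith

lemma cG_eq (ℓ y p : ℕ) (hp : ℓ < p) : cG ℓ (prP y) p = Fy y (p - ℓ) / Fy y (p + ℓ) := by
  rw [cG, Fy, Fy, ← Finset.prod_div_distrib]
  refine Finset.prod_congr rfl fun r hr => ?_
  have hb := (base_pos r (Finset.mem_filter.1 hr).2).ne'
  have h1 : (r : ℤ) ∣ (p : ℤ) - ℓ ↔ r ∣ p - ℓ := by
    rw [← Nat.cast_sub hp.le]; exact Int.natCast_dvd_natCast
  have h2 : (r : ℤ) ∣ (p : ℤ) + ℓ ↔ r ∣ p + ℓ := by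
    rw [← Nat.cast_add]; exact Int.natCast_dvd_natCast
  simp only [cexp, h1, h2]
  by_cases h3 : r ∣ p - ℓ <;> by_cases h4 : r ∣ p + ℓ <;> simp only [h3, h4, if_true, if_false]
  · rw [div_self hb]; simp
  · simp
  · simp
  · simp

lemma bad_bounds (ℓ p : ℕ) (hp : ℓ < p)
    (hbad : ¬ (Real.sign ((Nat.totient (p - ℓ) : ℝ) - (Nat.totient (p + ℓ) : ℝ)) =
            Real.sign (((p + ℓ : ℕ) : ℝ) * (Nat.totient (p - ℓ) : ℝ) -
              ((p - ℓ : ℕ) : ℝ) * (Nat.totient (p + ℓ) : ℝ)))) :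
    (Nat.totient (p - ℓ) : ℝ) ≤ Nat.totient (p + ℓ) ∧
    ((p - ℓ : ℕ) : ℝ) * (Nat.totient (p + ℓ) : ℝ) ≤ ((p + ℓ : ℕ) : ℝ) * (Nat.totient (p - ℓ) : ℝ) := by
  have hu : (0 : ℝ) < ((p - ℓ : ℕ) : ℝ) := by exact_mod_cast (by omega : 0 < p - ℓ)
  have huv : ((p - ℓ : ℕ) : ℝ) ≤ ((p + ℓ : ℕ) : ℝ) := by exact_mod_cast (by omega : p - ℓ ≤ p + ℓ)
  have hB : (0 : ℝ) < Nat.totient (p + ℓ) := by exact_mod_cast Nat.totient_pos.2 (by omega)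
  have hA : (0 : ℝ) < Nat.totient (p - ℓ) := by exact_mod_cast Nat.totient_pos.2 (by omega)
  constructor
  · by_contra h
    push Not at h
    apply hbad
    rw [Real.sign_of_pos (by linarith), Real.sign_of_pos]
    nlinarith
  · by_contra h
    push Not at h
    apply hbad
    rw [Real.sign_of_neg (by linarith : ((p + ℓ : ℕ) : ℝ) * (Nat.totient (p - ℓ) : ℝ) -
              ((p - ℓ : ℕ) : ℝ) * (Nat.totient (p + ℓ) : ℝ) < 0), Real.sign_of_neg]
    by_contra h2
    push Not at h2
    nlinarith

lemma bad_window (ℓ y p : ℕ) (hp : ℓ < p) (ε : ℝ) (hε : 0 < ε) (hε1 : ε < 1)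
    (hbad : ¬ (Real.sign ((Nat.totient (p - ℓ) : ℝ) - (Nat.totient (p + ℓ) : ℝ)) =
            Real.sign (((p + ℓ : ℕ) : ℝ) * (Nat.totient (p - ℓ) : ℝ) -
              ((p - ℓ : ℕ) : ℝ) * (Nat.totient (p + ℓ) : ℝ))))
    (h1 : tailS y (p - ℓ) ≤ ε) (h2 : tailS y (p + ℓ) ≤ ε)
    (h3 : ((p + ℓ : ℕ) : ℝ) ≤ (1 + ε) * ((p - ℓ : ℕ) : ℝ)) :
    1 - ε ≤ cG ℓ (prP y) p ∧ cG ℓ (prP y) p ≤ (1 + ε) / (1 - ε) := by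
  obtain ⟨b1, b2⟩ := bad_bounds ℓ p hp hbad
  obtain ⟨t, ht, ht1, ht2⟩ := totient_split y (p - ℓ) (by omega)
  obtain ⟨s, hs, hs1, hs2⟩ := totient_split y (p + ℓ) (by omega)
  rw [cG_eq ℓ y p hp]
  have hu : (0 : ℝ) < ((p - ℓ : ℕ) : ℝ) := by exact_mod_cast (by omega : 0 < p - ℓ)
  have hv : (0 : ℝ) < ((p + ℓ : ℕ) : ℝ) := by exact_mod_cast (by omega : 0 < p + ℓ)
  have hB : (0 : ℝ) < Nat.totient (p + ℓ) := by exact_mod_cast Nat.totient_pos.2 (by omega)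
  have fu := Fy_pos y (p - ℓ)
  have fv := Fy_pos y (p + ℓ)
  set u := ((p - ℓ : ℕ) : ℝ)
  set v := ((p + ℓ : ℕ) : ℝ)
  set A := (Nat.totient (p - ℓ) : ℝ)
  set B := (Nat.totient (p + ℓ) : ℝ)
  set f := Fy y (p - ℓ)
  set g := Fy y (p + ℓ)
  have htp : 0 < t := by linarith
  have hsp : 0 < s := by linarith
  -- 1 ≤ ratio ≤ 1 + ε
  have k1 : g * s ≤ f * t := by
    rw [← ht, ← hs, div_le_div_iff₀ hv hu]; linarith
  have k2 : f * t ≤ (1 + ε) * (g * s) := by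
    rw [← ht, ← hs, ← mul_div_assoc, div_le_div_iff₀ hu hv]
    calc A * v ≤ B * ((1 + ε) * u) := mul_le_mul b1 h3 hv.le hB.le
      _ = _ := by ring
  constructor
  · rw [le_div_iff₀ fv]
    calc (1 - ε) * g ≤ s * g := mul_le_mul_of_nonneg_right (by linarith) fv.le
      _ = g * s := mul_comm _ _
      _ ≤ f * t := k1
      _ ≤ f * 1 := mul_le_mul_of_nonneg_left ht2 fu.le
      _ = f := mul_one f
  · rw [div_le_div_iff₀ fv (by linarith)]
    calc f * (1 - ε) ≤ f * t := mul_le_mul_of_nonneg_left (by linarith) fu.le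
      _ ≤ (1 + ε) * (g * s) := k2
      _ ≤ (1 + ε) * (g * 1) := by gcongr
      _ = _ := by ring

open Finset in
lemma sum_Ioc_inv_sq_le (k n : ℕ) (hk : k ≠ 0) : ∑ i ∈ Ioc k n, ((i : ℝ) ^ 2)⁻¹ ≤ (k : ℝ)⁻¹ := by
  by_cases h : k ≤ n
  · have := sum_Ioc_inv_sq_le_sub (α := ℝ) hk h
    have h2 : (0 : ℝ) ≤ (n : ℝ)⁻¹ := by positivity
    linarith
  · rw [Ioc_eq_empty (by omega)]; simp

open Finset in
lemma tail_sum_le (ℓ y x : ℕ) (hy : 1 ≤ y) (hx : 2 ≤ x) (g a : ℕ → ℕ)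
    (hg : ∀ p, ℓ < p → 0 < g p ∧ g p ≤ p + ℓ)
    (ha : ∀ p r, ℓ < p → r ∣ g p → p ≡ a r [MOD r]) :
    ∑ p ∈ (Ioc 0 x).filter (fun p => p.Prime ∧ ℓ < p), tailS y (g p) ≤
      40 * x / (y * Real.log x) + (134 + ℓ) * (x : ℝ) ^ (4 / 5 : ℝ) := by
  classical
  have hx1 : (1 : ℝ) ≤ x := by exact_mod_cast (by omega : 1 ≤ x)
  have hx2 : (1 : ℝ) < x := by exact_mod_cast (by omega : 1 < x)
  have hlogx : 0 < Real.log x := Real.log_pos hx2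
  have hyr : (0 : ℝ) < y := by exact_mod_cast hy
  set N : ℕ → ℝ := fun r => (((Ioc 0 x).filter (fun p => p.Prime ∧ p ≡ a r [MOD r])).card : ℝ) with hN
  set w : ℝ := (x : ℝ) ^ (1 / 5 : ℝ) with hw
  have hw1 : 1 < w := Real.one_lt_rpow hx2 (by norm_num)
  set L := ⌈w⌉₊ with hL
  have hL1 : 1 ≤ L := Nat.one_le_ceil_iff.2 (by linarith)
  have hLw : w ≤ L := Nat.le_ceil w
  have hLw2 : (L : ℝ) ≤ 2 * w := by
    have := (Nat.ceil_lt_add_one (by linarith : 0 ≤ w)).le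
    linarith
  set X := (x : ℝ) ^ (4 / 5 : ℝ) with hX
  have hwX : w * (x : ℝ) ^ (3 / 5 : ℝ) = X := by
    rw [hw, hX, ← Real.rpow_add (by linarith)]; norm_num
  have hwx : w * X = x := by
    rw [hw, hX, ← Real.rpow_add (by linarith)]; norm_num
  have hX0 : 0 < X := by positivity
  -- swap
  have s1 : ∑ p ∈ (Ioc 0 x).filter (fun p => p.Prime ∧ ℓ < p), tailS y (g p) ≤
      ∑ r ∈ (Ioc y (x + ℓ)).filter Nat.Prime, N r * (1 / (r : ℝ)) := by
    have : ∀ p ∈ (Ioc 0 x).filter (fun p => p.Prime ∧ ℓ < p), tailS y (g p) ≤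
        ∑ r ∈ (Ioc y (x + ℓ)).filter Nat.Prime, if p ≡ a r [MOD r] then 1 / (r : ℝ) else 0 := by
      intro p hp
      simp only [mem_filter, mem_Ioc] at hp
      rw [tailS, ← sum_filter]
      refine sum_le_sum_of_subset_of_nonneg ?_ fun _ _ _ => by positivity
      intro r hr
      simp only [mem_filter, Nat.mem_primeFactors, mem_Ioc] at hr ⊢
      have h1 := hg p hp.2.2
      have h2 := Nat.le_of_dvd h1.1 hr.1.2.1
      exact ⟨⟨⟨hr.2, by omega⟩, hr.1.1⟩, ha p r hp.2.2 hr.1.2.1⟩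
    refine (sum_le_sum this).trans ?_
    rw [sum_comm]
    refine sum_le_sum fun r _ => ?_
    rw [← sum_filter, sum_const, nsmul_eq_mul]
    refine mul_le_mul_of_nonneg_right ?_ (by positivity)
    simp only [hN]
    norm_cast
    refine card_le_card ?_
    intro p hp
    simp only [mem_filter] at hp ⊢
    exact ⟨hp.1.1, hp.1.2.1, hp.2⟩
  refine s1.trans ?_
  -- termwise
  have s2 : ∀ r ∈ (Ioc y (x + ℓ)).filter Nat.Prime, N r * (1 / (r : ℝ)) ≤
      40 * x / Real.log x * ((r : ℝ) ^ 2)⁻¹ + (if r ≤ L then 66 * (x : ℝ) ^ (3 / 5 : ℝ) else 0) +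
        (if L < r then x * ((r : ℝ) ^ 2)⁻¹ + 1 / L else 0) := by
    intro r hr
    simp only [mem_filter, mem_Ioc] at hr
    have hrp := hr.2
    have hr1 : (2 : ℝ) ≤ r := by exact_mod_cast hrp.two_le
    have hpos : 0 ≤ 40 * x / Real.log x * ((r : ℝ) ^ 2)⁻¹ := by positivity
    by_cases hrL : r ≤ L
    · rw [if_pos hrL, if_neg (by omega)]
      have hbt := brun_titchmarsh x r (a r) hx hrp.prime.squarefree
      rw [Nat.totient_prime hrp, Nat.cast_sub hrp.one_lt.le] at hbt
      have h1 : 20 * (x : ℝ) / (((r : ℝ) - (1 : ℕ)) * Real.log x) ≤ 40 * x / Real.log x * (r : ℝ)⁻¹ := by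
        rw [← div_eq_mul_inv, div_div, div_le_div_iff₀ (by push_cast; nlinarith) (by positivity)]
        push_cast
        have : (0:ℝ) ≤ x * Real.log x := by positivity
        nlinarith [mul_le_mul_of_nonneg_left hr1 this]
      have h2 : N r ≤ 40 * x / Real.log x * (r : ℝ)⁻¹ + 66 * (x : ℝ) ^ (3 / 5 : ℝ) := by
        simp only [hN]; linarith
      have h3 : 1 / (r : ℝ) ≤ 1 := by rw [div_le_one (by linarith)]; linarith
      have h4 := mul_le_mul_of_nonneg_right h2 (by positivity : 0 ≤ 1 / (r : ℝ))
      have h5 : 66 * (x : ℝ) ^ (3 / 5 : ℝ) * (1 / (r : ℝ)) ≤ 66 * (x : ℝ) ^ (3 / 5 : ℝ) * 1 :=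
        mul_le_mul_of_nonneg_left h3 (by positivity)
      have h6 : 40 * x / Real.log x * (r : ℝ)⁻¹ * (1 / (r : ℝ)) =
          40 * x / Real.log x * ((r : ℝ) ^ 2)⁻¹ := by
        rw [sq, mul_inv, one_div]; ring
      rw [add_mul] at h4
      linarith
    · rw [if_neg hrL, if_pos (by omega)]
      have hc := count_dvd_modEq x r (a r) 1 hrp.pos one_pos (Nat.coprime_one_left r)
      have h1 : N r ≤ x / r + 1 := by
        have h2 : N r ≤ ((((Ioc 0 x).filter (fun n => n ≡ a r [MOD r] ∧ 1 ∣ n)).card : ℝ)) := by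
          simp only [hN]
          norm_cast
          refine card_le_card ?_
          intro p hp
          simp only [mem_filter] at hp ⊢
          exact ⟨hp.1, hp.2.2, one_dvd _⟩
        have h3 := (abs_le.1 hc).2
        push_cast at h3
        rw [mul_one] at h3
        linarith
      have h4 := mul_le_mul_of_nonneg_right h1 (by positivity : 0 ≤ 1 / (r : ℝ))
      have h5 : ((x : ℝ) / r + 1) * (1 / (r : ℝ)) = x * ((r : ℝ) ^ 2)⁻¹ + 1 / r := by
        rw [sq, mul_inv]; ring
      have h6 : 1 / (r : ℝ) ≤ 1 / L := by
        apply one_div_le_one_div_of_le (by linarith)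
        exact_mod_cast (by omega : L ≤ r)
      linarith
  refine (sum_le_sum s2).trans ?_
  rw [sum_add_distrib, sum_add_distrib]
  have t1 : ∑ r ∈ (Ioc y (x + ℓ)).filter Nat.Prime, 40 * x / Real.log x * ((r : ℝ) ^ 2)⁻¹ ≤
      40 * x / (y * Real.log x) := by
    rw [← mul_sum]
    have h1 : ∑ r ∈ (Ioc y (x + ℓ)).filter Nat.Prime, ((r : ℝ) ^ 2)⁻¹ ≤ (y : ℝ)⁻¹ :=
      (sum_le_sum_of_subset_of_nonneg (filter_subset _ _) fun _ _ _ => by positivity).trans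
        (sum_Ioc_inv_sq_le y (x + ℓ) (by omega))
    calc _ ≤ 40 * x / Real.log x * (y : ℝ)⁻¹ := mul_le_mul_of_nonneg_left h1 (by positivity)
      _ = _ := by rw [← div_eq_mul_inv, div_div, mul_comm (y : ℝ)]
  have t2 : ∑ r ∈ (Ioc y (x + ℓ)).filter Nat.Prime,
      (if r ≤ L then 66 * (x : ℝ) ^ (3 / 5 : ℝ) else 0) ≤ 132 * X := by
    rw [← sum_filter, sum_const, nsmul_eq_mul]
    have h1 : ((((Ioc y (x + ℓ)).filter Nat.Prime).filter (fun r => r ≤ L)).card : ℝ) ≤ L := by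
      have : ((Ioc y (x + ℓ)).filter Nat.Prime).filter (fun r => r ≤ L) ⊆ Ioc 0 L := by
        intro r hr
        simp only [mem_filter, mem_Ioc] at hr ⊢
        omega
      have := card_le_card this
      rw [Nat.card_Ioc] at this
      exact_mod_cast this
    calc _ ≤ (2 * w) * (66 * (x : ℝ) ^ (3 / 5 : ℝ)) :=
          mul_le_mul_of_nonneg_right (h1.trans hLw2) (by positivity)
      _ = 132 * (w * (x : ℝ) ^ (3 / 5 : ℝ)) := by ring
      _ = _ := by rw [hwX]
  have t3 : ∑ r ∈ (Ioc y (x + ℓ)).filter Nat.Prime,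
      (if L < r then x * ((r : ℝ) ^ 2)⁻¹ + 1 / (L : ℝ) else 0) ≤ (2 + ℓ) * X := by
    have hLp : (0 : ℝ) < L := by linarith
    rw [← sum_filter]
    have h0 : ((Ioc y (x + ℓ)).filter Nat.Prime).filter (fun r => L < r) ⊆ Ioc L (x + ℓ) := by
      intro r hr
      simp only [mem_filter, mem_Ioc] at hr ⊢
      omega
    refine (sum_le_sum_of_subset_of_nonneg h0 fun _ _ _ => by positivity).trans ?_
    rw [sum_add_distrib, ← mul_sum, sum_const, nsmul_eq_mul]
    have hxL : (x : ℝ) * (L : ℝ)⁻¹ ≤ X := by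
      rw [← div_eq_mul_inv, div_le_iff₀ hLp, ← hwx, mul_comm]
      exact mul_le_mul_of_nonneg_left hLw hX0.le
    have h1 : x * ∑ r ∈ Ioc L (x + ℓ), ((r : ℝ) ^ 2)⁻¹ ≤ X :=
      (mul_le_mul_of_nonneg_left (sum_Ioc_inv_sq_le L (x + ℓ) (by omega)) (by positivity)).trans hxL
    have h2 : ((Ioc L (x + ℓ)).card : ℝ) * (1 / L) ≤ (1 + ℓ) * X := by
      have h3 : ((Ioc L (x + ℓ)).card : ℝ) ≤ (1 + ℓ) * x := by
        have h4 : ((Ioc L (x + ℓ)).card : ℝ) ≤ x + ℓ := by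
          rw [Nat.card_Ioc]
          exact_mod_cast Nat.sub_le _ _
        have : (ℓ : ℝ) * 1 ≤ ℓ * x := mul_le_mul_of_nonneg_left hx1 (by positivity)
        linarith
      calc _ ≤ ((1 + ℓ) * x * (1 / L) : ℝ) := mul_le_mul_of_nonneg_right h3 (by positivity)
        _ = (1 + ℓ) * (x * (L : ℝ)⁻¹) := by rw [one_div]; ring
        _ ≤ _ := mul_le_mul_of_nonneg_left hxL (by positivity)
    linarith
  linarith

open Filter Topology

open Finset in
lemma exists_R (ℓ : ℕ) (η : ℝ) (hη : 0 < η) : ∃ R : Finset ℕ, (∀ s ∈ R, s.Prime) ∧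
    (∀ s ∈ R, 2 * ℓ < s) ∧ ((∏ r ∈ R, (r - 2) : ℕ) : ℝ) ≤ η * ((∏ r ∈ R, (r - 1) : ℕ) : ℝ) := by
  classical
  have hns := not_summable_one_div_on_primes
  rw [not_summable_iff_tendsto_nat_atTop_of_nonneg] at hns
  swap
  · intro n
    exact Set.indicator_nonneg (fun _ _ => by positivity) _
  set f : ℕ → ℝ := Set.indicator {p | Nat.Prime p} (fun n => 1 / (n : ℝ)) with hf
  obtain ⟨n, hn⟩ := (hns.eventually_ge_atTop
    (-Real.log η + ∑ i ∈ range (2 * ℓ + 1), f i)).exists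
  set R := (range n).filter (fun r => r.Prime ∧ 2 * ℓ < r) with hR
  have hRp : ∀ s ∈ R, s.Prime := fun s hs => (mem_filter.1 hs).2.1
  refine ⟨R, hRp, fun s hs => (mem_filter.1 hs).2.2, ?_⟩
  have hf0 : ∀ i, 0 ≤ f i := fun n => Set.indicator_nonneg (fun _ _ => by positivity) _
  have hsum : -Real.log η ≤ ∑ r ∈ R, 1 / (r : ℝ) := by
    have h1 : ∑ i ∈ range n, f i ≤ ∑ i ∈ range (2 * ℓ + 1), f i + ∑ r ∈ R, f r := by
      have hsub : ∑ i ∈ range n, f i = ∑ i ∈ (range n).filter Nat.Prime, f i := by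
        rw [sum_filter]
        refine sum_congr rfl fun i _ => ?_
        by_cases hi : i.Prime
        · rw [if_pos hi]
        · rw [if_neg hi]; exact Set.indicator_of_notMem hi _
      rw [hsub]
      have h2 : (range n).filter Nat.Prime ⊆ range (2 * ℓ + 1) ∪ R := by
        intro i hi
        simp only [mem_filter, mem_union, mem_range, hR] at hi ⊢
        by_cases h : 2 * ℓ < i
        · right; exact ⟨hi.1, hi.2, h⟩
        · left; omega
      refine (sum_le_sum_of_subset_of_nonneg h2 fun i _ _ => hf0 i).trans ?_
      have := sum_union_inter (s₁ := range (2 * ℓ + 1)) (s₂ := R) (f := f)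
      have h3 : 0 ≤ ∑ i ∈ range (2 * ℓ + 1) ∩ R, f i := sum_nonneg fun i _ => hf0 i
      linarith
    have h2 : ∑ r ∈ R, f r = ∑ r ∈ R, 1 / (r : ℝ) :=
      sum_congr rfl fun r hr => Set.indicator_of_mem (hRp r hr) _
    linarith
  have h1 : ((∏ r ∈ R, (r - 2) : ℕ) : ℝ) ≤ ∏ r ∈ R, (((r - 1 : ℕ) : ℝ) * Real.exp (-(1 / (r : ℝ)))) := by
    rw [Nat.cast_prod]
    refine prod_le_prod (fun _ _ => by positivity) fun r hr => ?_
    have hr2 := (hRp r hr).two_le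
    have hr2' : (2 : ℝ) ≤ r := by exact_mod_cast hr2
    rw [Nat.cast_sub hr2, Nat.cast_sub (by omega)]
    have h3 := Real.add_one_le_exp (-(1 / (r : ℝ)))
    push_cast
    have h4 : ((r : ℝ) - 1) * (-(1 / (r : ℝ)) + 1) ≤ ((r : ℝ) - 1) * Real.exp (-(1 / (r : ℝ))) :=
      mul_le_mul_of_nonneg_left h3 (by linarith)
    have h5 : ((r : ℝ) - 1) * (-(1 / (r : ℝ)) + 1) = r - 2 + 1 / r := by
      field_simp; ring
    have h6 : 0 < 1 / (r : ℝ) := by positivity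
    linarith
  refine h1.trans ?_
  rw [prod_mul_distrib, ← Real.exp_sum, Nat.cast_prod, mul_comm]
  refine mul_le_mul_of_nonneg_right ?_ (prod_nonneg fun _ _ => by positivity)
  rw [sum_neg_distrib, ← Real.le_log_iff_exp_le hη]
  linarith

lemma totient_prod_primes (R : Finset ℕ) (hR : ∀ s ∈ R, s.Prime) :
    (∏ r ∈ R, r).totient = ∏ r ∈ R, (r - 1) := by
  classical
  induction R using Finset.induction_on with
  | empty => simp
  | insert a S ha ih =>
    have hap := hR a (Finset.mem_insert_self _ _)
    have hS : ∀ s ∈ S, s.Prime := fun s hs => hR s (Finset.mem_insert_of_mem hs)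
    rw [Finset.prod_insert ha, Finset.prod_insert ha, Nat.totient_mul, ih hS, Nat.totient_prime hap]
    refine Nat.Coprime.prod_right fun s hs => ?_
    exact (Nat.coprime_primes hap (hS s hs)).2 (by rintro rfl; exact ha hs)

/-- The good condition at `p`. -/
def goodP (ℓ p : ℕ) : Prop := ℓ < p ∧
  Real.sign ((Nat.totient (p - ℓ) : ℝ) - (Nat.totient (p + ℓ) : ℝ)) =
            Real.sign (((p + ℓ : ℕ) : ℝ) * (Nat.totient (p - ℓ) : ℝ) -
              ((p - ℓ : ℕ) : ℝ) * (Nat.totient (p + ℓ) : ℝ))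

open Finset in
lemma markov_tail (S : Finset ℕ) (f : ℕ → ℝ) (hf : ∀ p, 0 ≤ f p) (ε T : ℝ) (hε : 0 < ε)
    (h : ∑ p ∈ S, f p ≤ T) : ((S.filter (fun p => ε < f p)).card : ℝ) ≤ T / ε := by
  rw [le_div_iff₀ hε]
  calc ((S.filter (fun p => ε < f p)).card : ℝ) * ε = ∑ p ∈ S.filter (fun p => ε < f p), ε := by
        rw [sum_const, nsmul_eq_mul]
    _ ≤ ∑ p ∈ S.filter (fun p => ε < f p), f p :=
        sum_le_sum fun p hp => (mem_filter.1 hp).2.le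
    _ ≤ ∑ p ∈ S, f p := sum_le_sum_of_subset_of_nonneg (filter_subset _ _) fun p _ _ => hf p
    _ ≤ T := h

open Classical Finset in
lemma bad_count (ℓ : ℕ) (hℓ : 0 < ℓ) (η : ℝ) (hη : 0 < η) : ∃ C : ℝ, ∀ x : ℕ, 2 ≤ x →
    (((Ioc 0 x).filter (fun p => p.Prime ∧ ¬ goodP ℓ p)).card : ℝ) ≤
      21 * η * (x / Real.log x) + C * (x : ℝ) ^ (4 / 5 : ℝ) := by
  obtain ⟨R, hRp, hR2, hRη⟩ := exists_R ℓ η hη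
  obtain ⟨δ, hδ, hgap⟩ := cG_gap ℓ R hRp
  obtain ⟨ε, hε, hε8, hεδ⟩ : ∃ ε : ℝ, 0 < ε ∧ ε ≤ 1 / 8 ∧ ε ≤ δ / 8 :=
    ⟨min (1 / 8) (δ / 8), by positivity, min_le_left _ _, min_le_right _ _⟩
  set lo := 1 - ε with hlo
  set hi := (1 + ε) / (1 - ε) with hhi
  have hlop : 0 < lo := by linarith
  have hhip : 0 < hi := by rw [hhi]; apply div_pos <;> linarith
  have hlh : lo ≤ hi := by
    rw [hhi, le_div_iff₀ hlop]; nlinarith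
  have w1 : hi / lo < 1 + δ := by
    rw [hhi, div_div, div_lt_iff₀ (by positivity)]
    nlinarith [mul_pos hε hδ, mul_pos hε hε, mul_le_mul_of_nonneg_right hε8 hδ.le,
      mul_pos (mul_pos hε hε) hδ]
  have w2 : 1 - δ < lo / hi := by
    rw [hhi, div_div_eq_mul_div, lt_div_iff₀ (by linarith)]
    nlinarith [mul_pos hε hδ, mul_pos hε hε]
  -- choose y
  set y := R.sup id + ⌈80 / (ε * η)⌉₊ + 1 with hy
  have hy1 : 1 ≤ y := by omega
  have hyr : (0 : ℝ) < y := by exact_mod_cast hy1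
  have hyb : 80 / (ε * η) ≤ y := by
    refine (Nat.le_ceil _).trans ?_
    exact_mod_cast (by omega : ⌈80 / (ε * η)⌉₊ ≤ y)
  have hRy : R ⊆ prP y := by
    intro r hr
    simp only [prP, mem_filter, mem_range]
    have : r ≤ R.sup id := le_sup (f := id) hr
    exact ⟨by omega, hRp r hr⟩
  have hPp : ∀ s ∈ prP y, s.Prime := fun s hs => (mem_filter.1 hs).2
  set Q := prP y \ R with hQ
  have hQR : Q ∪ R = prP y := sdiff_union_of_subset hRy
  have hQp : ∀ s ∈ Q, s.Prime := fun s hs => hPp s (mem_sdiff.1 hs).1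
  have hdis : Disjoint Q R := sdiff_disjoint
  have hwc := window_count ℓ hℓ Q R hQp hRp hR2 hdis δ lo hi hgap hlop w1 w2 hlh
  rw [hQR] at hwc
  set M := ∏ s ∈ prP y, s with hM
  set B := (range M).filter (fun a => Nat.Coprime a M ∧
      lo ≤ cG ℓ (prP y) a ∧ cG ℓ (prP y) a ≤ hi) with hB
  have hMpos : 0 < M := prod_pos fun s hs => (hPp s hs).pos
  have hMsq : Squarefree M := by
    apply Finset.squarefree_prod_of_pairwise_isCoprime
    · intro i hi j hj hij
      exact Nat.coprime_iff_isRelPrime.1 ((Nat.coprime_primes (hPp i hi) (hPp j hj)).2 hij)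
    · intro i hi
      exact (hPp i hi).prime.squarefree
  have htot : M.totient = (∏ r ∈ R, (r - 1)) * (∏ s ∈ Q, s).totient := by
    rw [totient_prod_primes _ hPp, totient_prod_primes _ hQp, ← hQR, prod_union hdis, mul_comm]
  have hBη : (B.card : ℝ) ≤ η * M.totient := by
    have h1 : (B.card : ℝ) ≤ ((∏ r ∈ R, (r - 2) : ℕ) : ℝ) * ((∏ s ∈ Q, s).totient : ℝ) := by
      exact_mod_cast hwc
    refine h1.trans ?_
    rw [htot, Nat.cast_mul, ← mul_assoc]
    exact mul_le_mul_of_nonneg_right hRη (by positivity)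
  have htp : (0 : ℝ) < M.totient := by exact_mod_cast Nat.totient_pos.2 hMpos
  set K := ⌈2 * ℓ / ε⌉₊ + ℓ + y with hK
  refine ⟨K + 2 * (134 + ℓ) / ε + 66 * B.card, fun x hx => ?_⟩
  have hx1 : (1 : ℝ) ≤ x := by exact_mod_cast (by omega : 1 ≤ x)
  have hx2 : (1 : ℝ) < x := by exact_mod_cast (by omega : 1 < x)
  have hlogx : 0 < Real.log x := Real.log_pos hx2
  set X := (x : ℝ) ^ (4 / 5 : ℝ) with hX
  have hX1 : 1 ≤ X := Real.one_le_rpow hx1 (by norm_num)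
  set S := (Ioc 0 x).filter (fun p => p.Prime ∧ ℓ < p) with hS
  have tA := tail_sum_le ℓ y x hy1 hx (fun p => p - ℓ) (fun _ => ℓ)
    (fun p hp => ⟨by show 0 < p - ℓ; omega, by show p - ℓ ≤ p + ℓ; omega⟩) (fun p r hp hr =>
      ((Nat.modEq_iff_dvd' hp.le).2 hr).symm)
  have tB := tail_sum_le ℓ y x hy1 hx (fun p => p + ℓ) (fun r => ℓ * (r - 1))
    (fun p hp => ⟨by show 0 < p + ℓ; omega, le_rfl⟩) (fun p r hp hr => by
      have hr : r ∣ p + ℓ := hr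
      have hr0 : 1 ≤ r := Nat.pos_of_dvd_of_pos hr (by omega)
      have h1 : ℓ * (r - 1) + ℓ = ℓ * r := by
        rw [Nat.mul_sub, mul_one]
        exact Nat.sub_add_cancel (Nat.le_mul_of_pos_right _ hr0)
      refine Nat.ModEq.add_right_cancel' ℓ ?_
      rw [h1]
      exact (Nat.modEq_zero_iff_dvd.2 hr).trans
        (Nat.modEq_zero_iff_dvd.2 (Dvd.intro_left _ rfl)).symm)
  set T := 40 * x / (y * Real.log x) + (134 + ℓ) * X with hT
  have hts : ∀ n, 0 ≤ tailS y n := fun n => sum_nonneg fun _ _ => by positivity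
  have mA := markov_tail S (fun p => tailS y (p - ℓ)) (fun p => hts _) ε T hε tA
  have mB := markov_tail S (fun p => tailS y (p + ℓ)) (fun p => hts _) ε T hε tB
  -- inclusion
  have hsub : (Ioc 0 x).filter (fun p => p.Prime ∧ ¬ goodP ℓ p) ⊆
      Icc 1 K ∪ (S.filter (fun p => ε < tailS y (p - ℓ)) ∪ (S.filter (fun p => ε < tailS y (p + ℓ)) ∪
        B.biUnion (fun a => (Ioc 0 x).filter (fun p => p.Prime ∧ p ≡ a [MOD M])))) := by
    intro p hp
    simp only [mem_filter] at hp
    obtain ⟨hpx, hpp, hbad⟩ := hp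
    simp only [mem_union]
    by_cases hpK : p ≤ K
    · left; rw [mem_Icc]; exact ⟨hpp.pos, hpK⟩
    right
    push Not at hpK
    have hℓp : ℓ < p := by omega
    have hpS : p ∈ S := by rw [hS, mem_filter]; exact ⟨hpx, hpp, hℓp⟩
    by_cases h1 : ε < tailS y (p - ℓ)
    · left; rw [mem_filter]; exact ⟨hpS, h1⟩
    right
    by_cases h2 : ε < tailS y (p + ℓ)
    · left; rw [mem_filter]; exact ⟨hpS, h2⟩
    right
    push Not at h1 h2
    have hb : ¬ _ := fun h => hbad ⟨hℓp, h⟩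
    have h3 : ((p + ℓ : ℕ) : ℝ) ≤ (1 + ε) * ((p - ℓ : ℕ) : ℝ) := by
      have h4 : 2 * ℓ / ε ≤ ((p - ℓ : ℕ) : ℝ) := by
        refine (Nat.le_ceil _).trans ?_
        exact_mod_cast (by omega : ⌈2 * ℓ / ε⌉₊ ≤ p - ℓ)
      rw [div_le_iff₀ hε] at h4
      have h5 : ((p + ℓ : ℕ) : ℝ) = ((p - ℓ : ℕ) : ℝ) + 2 * ℓ := by
        rw [Nat.cast_sub hℓp.le]; push_cast; ring
      rw [h5]
      linarith
    have hw := bad_window ℓ y p hℓp ε hε (by linarith) hb h1 h2 h3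
    have hmod : ∀ r ∈ prP y, p % M ≡ p [MOD r] := fun r hr =>
      (Nat.mod_modEq p M).of_dvd (dvd_prod_of_mem _ hr)
    have hG := cG_congr ℓ (prP y) (p % M) p hmod
    rw [mem_biUnion]
    refine ⟨p % M, ?_, ?_⟩
    · rw [hB, mem_filter, mem_range, hG]
      refine ⟨Nat.mod_lt _ hMpos, ?_, hw⟩
      have hcop : Nat.Coprime M p := by
        refine Nat.Coprime.prod_left fun s hs => ?_
        refine (Nat.coprime_primes (hPp s hs) hpp).2 ?_
        rintro rfl
        have := mem_range.1 (mem_filter.1 hs).1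
        omega
      rw [Nat.coprime_iff_gcd_eq_one, ← Nat.gcd_rec]
      exact hcop
    · rw [mem_filter]
      exact ⟨hpx, hpp, (Nat.mod_modEq p M).symm⟩
  have hcard : (((Ioc 0 x).filter (fun p => p.Prime ∧ ¬ goodP ℓ p)).card : ℝ) ≤
      K + (T / ε + (T / ε + B.card * (20 * x / (M.totient * Real.log x) +
        66 * (x : ℝ) ^ (3 / 5 : ℝ)))) := by
    have c1 := card_le_card hsub
    have c2 := c1.trans (card_union_le _ _)
    have c3 := c2.trans (Nat.add_le_add_left (card_union_le _ _) _)
    have c4 := c3.trans (Nat.add_le_add_left (Nat.add_le_add_left (card_union_le _ _) _) _)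
    rw [Nat.card_Icc, Nat.add_sub_cancel] at c4
    refine (Nat.cast_le.2 c4).trans ?_
    push_cast
    refine add_le_add le_rfl (add_le_add mA (add_le_add mB ?_))
    refine (Nat.cast_le.2 card_biUnion_le).trans ?_
    rw [Nat.cast_sum, ← nsmul_eq_mul]
    exact sum_le_card_nsmul _ _ _ fun a _ => brun_titchmarsh x M a hx hMsq
  refine hcard.trans ?_
  have e1 : T / ε ≤ η / 2 * (x / Real.log x) + (134 + ℓ) / ε * X := by
    have h1 : 40 * x / (y * Real.log x) / ε ≤ η / 2 * (x / Real.log x) := by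
      have h2 : 40 * x / (y * Real.log x) / ε = (40 / (ε * y)) * (x / Real.log x) := by
        field_simp
      rw [h2]
      refine mul_le_mul_of_nonneg_right ?_ (by positivity)
      rw [div_le_iff₀ (by positivity)] at hyb ⊢
      linarith
    rw [hT, add_div]
    have : (134 + (ℓ : ℝ)) * X / ε = (134 + ℓ) / ε * X := by ring
    linarith
  have e2 : (B.card : ℝ) * (20 * x / (M.totient * Real.log x)) ≤ 20 * η * (x / Real.log x) := by
    calc _ ≤ η * M.totient * (20 * x / (M.totient * Real.log x)) :=
          mul_le_mul_of_nonneg_right hBη (by positivity)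
      _ = _ := by field_simp
  have e3 : (B.card : ℝ) * (66 * (x : ℝ) ^ (3 / 5 : ℝ)) ≤ 66 * B.card * X := by
    have : (x : ℝ) ^ (3 / 5 : ℝ) ≤ X := Real.rpow_le_rpow_of_exponent_le hx1 (by norm_num)
    calc _ = 66 * B.card * (x : ℝ) ^ (3 / 5 : ℝ) := by ring
      _ ≤ _ := mul_le_mul_of_nonneg_left this (by positivity)
  have e4 : (K : ℝ) ≤ K * X := le_mul_of_one_le_right (by positivity) hX1
  have e5 : ((K : ℝ) + 2 * (134 + ℓ) / ε + 66 * B.card) * X =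
      K * X + 2 * ((134 + ℓ) / ε * X) + 66 * B.card * X := by ring
  rw [e5, mul_add]
  linarith

open Classical Finset in
lemma bad_eventually (ℓ : ℕ) (hℓ : 0 < ℓ) (η : ℝ) (hη : 0 < η) : ∀ᶠ x : ℕ in atTop,
    0 < (Nat.primeCounting x : ℝ) ∧
    (((Ioc 0 x).filter (fun p => p.Prime ∧ ¬ goodP ℓ p)).card : ℝ) ≤ η * Nat.primeCounting x := by
  obtain ⟨C, hC⟩ := bad_count ℓ hℓ (η / 84) (by positivity)
  have l1 : ∀ᶠ x : ℕ in atTop, |C| * Real.log x ≤ (η / 4) * (x : ℝ) ^ (1 / 5 : ℝ) := by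
    have h := (isLittleO_log_rpow_atTop (show (0:ℝ) < 1 / 5 by norm_num)).bound
      (show 0 < η / 4 / (|C| + 1) by positivity)
    have h' := tendsto_natCast_atTop_atTop (R := ℝ) |>.eventually h
    filter_upwards [h', eventually_ge_atTop 1] with x hx hx1
    have hx1 : (1 : ℝ) ≤ x := by exact_mod_cast hx1
    rw [Real.norm_of_nonneg (Real.log_nonneg hx1), Real.norm_of_nonneg (by positivity)] at hx
    have h1 : |C| * Real.log x ≤ (|C| + 1) * Real.log x :=
      mul_le_mul_of_nonneg_right (by linarith) (Real.log_nonneg hx1)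
    have h2 := mul_le_mul_of_nonneg_left hx (by positivity : 0 ≤ |C| + 1)
    have h3 : (|C| + 1) * (η / 4 / (|C| + 1) * (x : ℝ) ^ (1 / 5 : ℝ)) =
        η / 4 * (x : ℝ) ^ (1 / 5 : ℝ) := by field_simp
    linarith
  have l2 : ∀ᶠ x : ℕ in atTop, Real.log ((x : ℝ) + 1) ≤ 0.05 * ((x : ℝ) + 1) := by
    have h := Real.isLittleO_log_id_atTop.bound (show (0:ℝ) < 0.05 by norm_num)
    have h' := (tendsto_atTop_add_const_right atTop (1 : ℝ)
      (tendsto_natCast_atTop_atTop (R := ℝ))).eventually h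
    filter_upwards [h'] with x hx
    have h0 : (0 : ℝ) ≤ x := by positivity
    rw [Real.norm_of_nonneg (Real.log_nonneg (by linarith)), id, Real.norm_of_nonneg (by linarith)] at hx
    exact hx
  filter_upwards [l1, l2, eventually_ge_atTop 2] with x h1 h2 hx
  have hx2' : (2 : ℝ) ≤ x := by exact_mod_cast hx
  have hlogx : 0 < Real.log x := Real.log_pos (by linarith)
  have hpi : 1 / 2 * (x / Real.log x) ≤ Nat.primeCounting x := by
    refine le_trans ?_ (Chebyshev.pi_ge x)
    rw [← mul_div_assoc]
    refine div_le_div_of_nonneg_right ?_ hlogx.le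
    have := Real.log_two_gt_d9
    nlinarith
  have hq : 0 < (x : ℝ) / Real.log x := by positivity
  refine ⟨by linarith, ?_⟩
  have h3 : C * (x : ℝ) ^ (4 / 5 : ℝ) ≤ η / 4 * (x / Real.log x) := by
    have hxx : (x : ℝ) ^ (1 / 5 : ℝ) * (x : ℝ) ^ (4 / 5 : ℝ) = x := by
      rw [← Real.rpow_add (by linarith)]; norm_num
    have hX : 0 < (x : ℝ) ^ (4 / 5 : ℝ) := by positivity
    calc C * (x : ℝ) ^ (4 / 5 : ℝ) ≤ |C| * (x : ℝ) ^ (4 / 5 : ℝ) :=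
          mul_le_mul_of_nonneg_right (le_abs_self C) hX.le
      _ ≤ η / 4 * (x / Real.log x) := by
          rw [← mul_div_assoc, le_div_iff₀ hlogx]
          have := mul_le_mul_of_nonneg_right h1 hX.le
          rw [mul_assoc (η / 4), hxx] at this
          linarith
  have h4 := hC x hx
  have h5 := mul_le_mul_of_nonneg_left hpi hη.le
  linarith

theorem comparison_lemma (ℓ : ℕ) (hℓ : 0 < ℓ) :
    Tendsto (fun x : ℕ =>
      ({p : ℕ | p.Prime ∧ p ≤ x ∧ ℓ < p ∧
          Real.sign ((Nat.totient (p - ℓ) : ℝ) - (Nat.totient (p + ℓ) : ℝ)) =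
            Real.sign (((p + ℓ : ℕ) : ℝ) * (Nat.totient (p - ℓ) : ℝ) -
              ((p - ℓ : ℕ) : ℝ) * (Nat.totient (p + ℓ) : ℝ))}.ncard : ℝ) /
        (Nat.primeCounting x : ℝ)) atTop (𝓝 1) := by
  classical
  rw [Metric.tendsto_nhds]
  intro η hη
  filter_upwards [bad_eventually ℓ hℓ (η / 2) (by positivity)] with x hx
  obtain ⟨hpos, hbad⟩ := hx
  have hset : {p : ℕ | p.Prime ∧ p ≤ x ∧ ℓ < p ∧
          Real.sign ((Nat.totient (p - ℓ) : ℝ) - (Nat.totient (p + ℓ) : ℝ)) =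
            Real.sign (((p + ℓ : ℕ) : ℝ) * (Nat.totient (p - ℓ) : ℝ) -
              ((p - ℓ : ℕ) : ℝ) * (Nat.totient (p + ℓ) : ℝ))} =
      (((Finset.Ioc 0 x).filter Nat.Prime).filter (fun p => goodP ℓ p) : Finset ℕ) := by
    ext p
    rw [Finset.mem_coe, Finset.mem_filter, Finset.mem_filter, Finset.mem_Ioc]
    constructor
    · rintro ⟨a, b, c, d⟩; exact ⟨⟨⟨a.pos, b⟩, a⟩, c, d⟩
    · rintro ⟨⟨⟨_, b⟩, a⟩, c, d⟩; exact ⟨a, b, c, d⟩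
  rw [hset, Set.ncard_coe_finset]
  have hpi : Nat.primeCounting x = ((Finset.Ioc 0 x).filter Nat.Prime).card := by
    rw [Nat.primeCounting, Nat.primeCounting', Nat.count_eq_card_filter_range]
    congr 1
    ext p
    simp only [Finset.mem_filter, Finset.mem_range, Finset.mem_Ioc]
    constructor
    · rintro ⟨a, b⟩; exact ⟨⟨b.pos, by omega⟩, b⟩
    · rintro ⟨a, b⟩; exact ⟨by omega, b⟩
  have hsum := Finset.card_filter_add_card_filter_not (s := (Finset.Ioc 0 x).filter Nat.Prime)
    (fun p => goodP ℓ p)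
  have hff : ((Finset.Ioc 0 x).filter Nat.Prime).filter (fun p => ¬ goodP ℓ p) =
      (Finset.Ioc 0 x).filter (fun p => p.Prime ∧ ¬ goodP ℓ p) := by
    ext p
    simp only [Finset.mem_filter, and_assoc]
  rw [← hpi, hff] at hsum
  have hsum' : ((((Finset.Ioc 0 x).filter Nat.Prime).filter (fun p => goodP ℓ p)).card : ℝ) +
    (((Finset.Ioc 0 x).filter (fun p => p.Prime ∧ ¬ goodP ℓ p)).card : ℝ) = Nat.primeCounting x := by
    exact_mod_cast hsum
  rw [Real.dist_eq, abs_lt]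
  set g := ((((Finset.Ioc 0 x).filter Nat.Prime).filter (fun p => goodP ℓ p)).card : ℝ)
  set b := (((Finset.Ioc 0 x).filter (fun p => p.Prime ∧ ¬ goodP ℓ p)).card : ℝ)
  have hb0 : 0 ≤ b := by positivity
  have hg : g / Nat.primeCounting x - 1 = - (b / Nat.primeCounting x) := by
    rw [← hsum']
    rw [← hsum'] at hpos
    field_simp
    ring
  have hb1 : b / Nat.primeCounting x ≤ η / 2 := by rw [div_le_iff₀ hpos]; exact hbad
  have hb2 : 0 ≤ b / Nat.primeCounting x := by positivity
  rw [hg]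
  constructor <;> linarith
end

section
/- There exists a constant C > 0 such that for all sufficiently large real x, writing y = log log x, the number of primes p ≤ x for which h_y(p−1) > 1/(y·√(log y)) or h_y(p+1) > 1/(y·√(log y)) is at most C · π(x) / √(log y). In particular this count is o(π(x)). -/
open Filter Topology

/-- `hy y n` is the sum of `1/r` over the prime divisors `r` of `n` with `r > y`. -/
noncomputable def hy (y : ℝ) (n : ℕ) : ℝ :=
  ∑ r ∈ n.primeFactors.filter (fun r : ℕ => y < (r : ℝ)), (1 : ℝ) / r

lemma moebius_interval (P l m : ℕ) (hP : P ≠ 0) (hm : m ∣ P) (hsq : Squarefree m) :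
    (∑ d ∈ P.divisors with (l ∣ d ∧ d ∣ m), (ArithmeticFunction.moebius d : ℝ)) =
      if l = m then (ArithmeticFunction.moebius l : ℝ) else 0 := by
  by_cases hlm : l ∣ m
  · obtain ⟨k, rfl⟩ := hlm
    have hl0 : 0 < l := Nat.pos_of_ne_zero (fun h => by subst h; simp at hsq)
    have hk0 : k ≠ 0 := fun h => by subst h; simp at hsq
    have hset : (P.divisors.filter fun d => l ∣ d ∧ d ∣ l * k) = k.divisors.image (l * ·) := by
      ext d
      simp only [Finset.mem_filter, Nat.mem_divisors, Finset.mem_image]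
      constructor
      · rintro ⟨-, ⟨e, rfl⟩, h2⟩
        exact ⟨e, ⟨Nat.dvd_of_mul_dvd_mul_left hl0 h2, hk0⟩, rfl⟩
      · rintro ⟨e, ⟨he, -⟩, rfl⟩
        exact ⟨⟨(mul_dvd_mul_left l he).trans hm, hP⟩, dvd_mul_right _ _, mul_dvd_mul_left l he⟩
    rw [hset, Finset.sum_image (fun a _ b _ h => Nat.eq_of_mul_eq_mul_left hl0 h)]
    have hc : ∀ e ∈ k.divisors, (ArithmeticFunction.moebius (l * e) : ℝ) =
        ArithmeticFunction.moebius l * ArithmeticFunction.moebius e := by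
      intro e he
      have hcop : l.Coprime e :=
        (Nat.coprime_of_squarefree_mul hsq).coprime_dvd_right (Nat.dvd_of_mem_divisors he)
      rw [ArithmeticFunction.isMultiplicative_moebius.map_mul_of_coprime hcop]
      push_cast; rfl
    rw [Finset.sum_congr rfl hc, ← Finset.mul_sum]
    have h1 : (∑ e ∈ k.divisors, ArithmeticFunction.moebius e) = if k = 1 then 1 else 0 := by
      rw [← ArithmeticFunction.coe_mul_zeta_apply, ArithmeticFunction.moebius_mul_coe_zeta,
        ArithmeticFunction.one_apply]
    have h2 : (∑ e ∈ k.divisors, (ArithmeticFunction.moebius e : ℝ)) = if k = 1 then 1 else 0 := by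
      exact_mod_cast congrArg (Int.cast : ℤ → ℝ) h1
    rw [h2]
    by_cases hk : k = 1
    · simp [hk]
    · have : l ≠ l * k := fun h => hk (by
        have : l * 1 = l * k := by simpa using h
        exact (Nat.eq_of_mul_eq_mul_left hl0 this).symm)
      simp [hk, this]
  · have : l ≠ m := fun h => hlm (h ▸ dvd_rfl)
    rw [if_neg this]
    apply Finset.sum_eq_zero
    intro d hd
    simp only [Finset.mem_filter] at hd
    exact absurd (hd.2.1.trans hd.2.2) hlm

/-- Selberg's upper bound sieve with density `1/d`. -/
lemma selberg_bound (s : BoundingSieve) (R : ℕ) (hR : 1 ≤ R) (hX : 0 ≤ s.totalMass)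
    (hnu : ∀ d, d ∣ s.prodPrimes → s.nu d = 1 / (d : ℝ))
    (hrem : ∀ d, d ∣ s.prodPrimes → |s.rem d| ≤ 1) :
    s.siftedSum ≤ s.totalMass / (∑ l ∈ s.prodPrimes.divisors with l ≤ R, 1 / (l : ℝ)) +
      (R : ℝ) ^ 4 := by
  classical
  set P := s.prodPrimes with hPdef
  have hP0 : P ≠ 0 := BoundingSieve.prodPrimes_ne_zero
  set Q := P.divisors.filter (· ≤ R) with hQ
  set S := ∑ l ∈ Q, 1 / (l : ℝ) with hS
  have h1Q : 1 ∈ Q := by simp [hQ, hP0, hR]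
  have hQP : ∀ l ∈ Q, l ∣ P ∧ l ≤ R ∧ 0 < l := by
    intro l hl
    simp only [hQ, Finset.mem_filter, Nat.mem_divisors] at hl
    exact ⟨hl.1.1, hl.2, Nat.pos_of_dvd_of_pos hl.1.1 (Nat.pos_of_ne_zero hP0)⟩
  have hS1 : 1 ≤ S := by
    have := Finset.single_le_sum (f := fun l : ℕ => 1 / (l : ℝ)) (fun i _ => by positivity) h1Q
    rw [hS]; simpa using this
  have hS0 : 0 < S := by linarith
  set w : ℕ → ℝ := fun d => d * ArithmeticFunction.moebius d *
    ((∑ l ∈ Q with d ∣ l, 1 / (l : ℝ)) / S) with hw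
  have hw1 : w 1 = 1 := by
    simp only [hw, Nat.cast_one, ArithmeticFunction.moebius_apply_one, Int.cast_one, one_dvd,
      Finset.filter_true, one_mul]
    exact div_self hS0.ne'
  have hup := BoundingSieve.upperMoebius_lambdaSquared w hw1
  have hmain := BoundingSieve.siftedSum_le_mainSum_errSum_of_upperMoebius (s := s) _ hup
  -- main term
  have hy : ∀ l ∈ P.divisors, (∑ d ∈ P.divisors, if l ∣ d then s.nu d * w d else 0) =
      if l ∈ Q then (1 / (l : ℝ)) * ArithmeticFunction.moebius l / S else 0 := by
    intro l hl
    have e1 : ∀ d ∈ P.divisors, (if l ∣ d then s.nu d * w d else 0) =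
        ∑ m ∈ Q, (if (l ∣ d ∧ d ∣ m) then (1 / (m : ℝ)) / S * ArithmeticFunction.moebius d else 0) := by
      intro d hd
      have hdP := Nat.dvd_of_mem_divisors hd
      have hd0 : (d : ℝ) ≠ 0 := by
        have := Nat.pos_of_mem_divisors hd
        positivity
      split_ifs with h
      · simp only [h, true_and]
        rw [hnu d hdP, ← Finset.sum_filter, ← Finset.sum_mul, ← Finset.sum_div]
        simp only [hw]
        field_simp
      · simp [h]
    rw [Finset.sum_congr rfl e1, Finset.sum_comm]
    have e2 : ∀ m ∈ Q, (∑ d ∈ P.divisors, if (l ∣ d ∧ d ∣ m) then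
        (1 / (m : ℝ)) / S * ArithmeticFunction.moebius d else 0) =
        if l = m then (1 / (m : ℝ)) * ArithmeticFunction.moebius m / S else 0 := by
      intro m hm
      rw [← Finset.sum_filter, ← Finset.mul_sum,
        moebius_interval P l m hP0 (hQP m hm).1
          (BoundingSieve.squarefree_of_dvd_prodPrimes (hQP m hm).1)]
      split_ifs with h
      · subst h; ring
      · simp
    rw [Finset.sum_congr rfl e2, Finset.sum_ite_eq]
  have hM : s.mainSum (BoundingSieve.lambdaSquared w) ≤ 1 / S := by
    rw [BoundingSieve.mainSum_lambdaSquared_eq_sum_mul_sum_sq, ← hPdef]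
    calc _ ≤ ∑ l ∈ P.divisors, (if l ∈ Q then (1 / (l : ℝ)) / S ^ 2 else 0) := by
          apply Finset.sum_le_sum
          intro l hl
          rw [hy l hl]
          have hlP := Nat.dvd_of_mem_divisors hl
          have hl0 : (0 : ℝ) < l := by exact_mod_cast Nat.pos_of_mem_divisors hl
          split_ifs with h
          · have hg : 1 / (l : ℝ) ≤ s.selbergTerms l := by
              rw [BoundingSieve.selbergTerms_apply, ← hnu l hlP]
              have h0 : 0 < s.nu l := BoundingSieve.nu_pos_of_dvd_prodPrimes hlP
              apply le_mul_of_one_le_right h0.le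
              have : ∀ p ∈ l.primeFactors, (1 : ℝ) ≤ (1 - s.nu p)⁻¹ := by
                intro p hp
                have hpp := Nat.prime_of_mem_primeFactors hp
                have hpP := (Nat.dvd_of_mem_primeFactors hp).trans hlP
                have := s.nu_pos_of_prime p hpp hpP
                have := s.nu_lt_one_of_prime p hpp hpP
                rw [one_le_inv₀ (by linarith)]
                linarith
              calc (1 : ℝ) = ∏ p ∈ l.primeFactors, (1 : ℝ) := by simp
                _ ≤ _ := Finset.prod_le_prod (fun _ _ => zero_le_one) this
            have hg' : (s.selbergTerms l)⁻¹ ≤ l := by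
              rw [inv_le_comm₀ (lt_of_lt_of_le (by positivity) hg) hl0]
              simpa using hg
            have hmu : (ArithmeticFunction.moebius l : ℝ) ^ 2 = 1 := by
              have := ArithmeticFunction.moebius_sq_eq_one_of_squarefree
                (BoundingSieve.squarefree_of_dvd_prodPrimes (s := s) hlP)
              exact_mod_cast this
            calc _ ≤ (l : ℝ) * (1 / (l : ℝ) * ArithmeticFunction.moebius l / S) ^ 2 := by gcongr
              _ = _ := by
                rw [div_pow, mul_pow, hmu]; field_simp
          · simp
      _ = ∑ l ∈ Q, (1 / (l : ℝ)) / S ^ 2 := by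
          rw [← Finset.sum_filter]
          congr 1
          ext l; simp only [Finset.mem_filter, hQ]; tauto
      _ = 1 / S := by
          rw [← Finset.sum_div, ← hS]; field_simp
  -- error term
  have hwb : ∀ d ∈ P.divisors, |w d| ≤ if d ∈ Q then (R : ℝ) else 0 := by
    intro d hd
    have hd0 := Nat.pos_of_mem_divisors hd
    by_cases h : d ∈ Q
    · rw [if_pos h]
      simp only [hw, abs_mul]
      have hmu : |(ArithmeticFunction.moebius d : ℝ)| ≤ 1 := by
        exact_mod_cast ArithmeticFunction.abs_moebius_le_one
      have h3 : |(∑ l ∈ Q with d ∣ l, 1 / (l : ℝ)) / S| ≤ 1 := by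
        rw [abs_of_nonneg (div_nonneg (Finset.sum_nonneg fun _ _ => by positivity) hS0.le),
          div_le_one hS0]
        exact Finset.sum_le_sum_of_subset_of_nonneg (Finset.filter_subset _ _)
          (fun _ _ _ => by positivity)
      have h4 : |(d : ℝ)| ≤ R := by
        rw [abs_of_nonneg (by positivity)]; exact_mod_cast (hQP d h).2.1
      calc _ ≤ (R : ℝ) * 1 * 1 := by gcongr
        _ = R := by ring
    · rw [if_neg h]
      have : Q.filter (d ∣ ·) = ∅ := by
        rw [Finset.filter_eq_empty_iff]
        intro l hl hdl
        apply h
        simp only [hQ, Finset.mem_filter]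
        exact ⟨hd, (Nat.le_of_dvd (hQP l hl).2.2 hdl).trans (hQP l hl).2.1⟩
      simp [hw, this]
  have hwsum : ∑ d ∈ P.divisors, |w d| ≤ (R : ℝ) ^ 2 := by
    calc _ ≤ ∑ d ∈ P.divisors, (if d ∈ Q then (R : ℝ) else 0) := Finset.sum_le_sum hwb
      _ = ∑ d ∈ Q, (R : ℝ) := by
          rw [← Finset.sum_filter]
          congr 1
          ext l; simp only [Finset.mem_filter, hQ]; tauto
      _ = Q.card * R := by simp
      _ ≤ R * R := by
          gcongr
          have : Q ⊆ Finset.Icc 1 R := by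
            intro l hl
            have := hQP l hl
            simp; omega
          simpa using Finset.card_le_card this
      _ = _ := by ring
  have hE : s.errSum (BoundingSieve.lambdaSquared w) ≤ (R : ℝ) ^ 4 := by
    unfold BoundingSieve.errSum
    rw [← hPdef]
    calc _ ≤ ∑ d ∈ P.divisors, ∑ d1 ∈ P.divisors, ∑ d2 ∈ P.divisors,
          (if d = Nat.lcm d1 d2 then |w d1| * |w d2| else 0) := by
          apply Finset.sum_le_sum
          intro d hd
          have hdP := Nat.dvd_of_mem_divisors hd
          have hsub : d.divisors ⊆ P.divisors := Nat.divisors_subset_of_dvd hP0 hdP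
          calc _ ≤ |BoundingSieve.lambdaSquared w d| * 1 := by
                gcongr; exact hrem d hdP
            _ = |BoundingSieve.lambdaSquared w d| := mul_one _
            _ ≤ ∑ d1 ∈ d.divisors, ∑ d2 ∈ d.divisors,
                |(if d = Nat.lcm d1 d2 then w d1 * w d2 else 0)| := by
                unfold BoundingSieve.lambdaSquared
                refine (Finset.abs_sum_le_sum_abs _ _).trans ?_
                exact Finset.sum_le_sum fun _ _ => Finset.abs_sum_le_sum_abs _ _
            _ = ∑ d1 ∈ d.divisors, ∑ d2 ∈ d.divisors,
                (if d = Nat.lcm d1 d2 then |w d1| * |w d2| else 0) := by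
                refine Finset.sum_congr rfl fun _ _ => Finset.sum_congr rfl fun _ _ => ?_
                split_ifs <;> simp [abs_mul]
            _ ≤ ∑ d1 ∈ d.divisors, ∑ d2 ∈ P.divisors,
                (if d = Nat.lcm d1 d2 then |w d1| * |w d2| else 0) := by
                refine Finset.sum_le_sum fun _ _ =>
                  Finset.sum_le_sum_of_subset_of_nonneg hsub fun _ _ _ => ?_
                split_ifs <;> positivity
            _ ≤ _ := by
                refine Finset.sum_le_sum_of_subset_of_nonneg hsub fun _ _ _ =>
                  Finset.sum_nonneg fun _ _ => ?_
                split_ifs <;> positivity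
      _ = ∑ d1 ∈ P.divisors, ∑ d2 ∈ P.divisors, ∑ d ∈ P.divisors,
          (if d = Nat.lcm d1 d2 then |w d1| * |w d2| else 0) := by
          rw [Finset.sum_comm]
          exact Finset.sum_congr rfl fun _ _ => Finset.sum_comm
      _ ≤ ∑ d1 ∈ P.divisors, ∑ d2 ∈ P.divisors, |w d1| * |w d2| := by
          refine Finset.sum_le_sum fun _ _ => Finset.sum_le_sum fun _ _ => ?_
          rw [Finset.sum_ite_eq']
          split_ifs
          · exact le_rfl
          · positivity
      _ = (∑ d ∈ P.divisors, |w d|) ^ 2 := by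
          rw [sq, Finset.sum_mul_sum]
      _ ≤ ((R : ℝ) ^ 2) ^ 2 := by
          gcongr
      _ = _ := by ring
  calc s.siftedSum ≤ _ := hmain
    _ ≤ s.totalMass * (1 / S) + (R : ℝ) ^ 4 := by gcongr
    _ = _ := by ring

lemma count_ap (M r v : ℕ) (hr : 0 < r) :
    |(((Finset.Ioc 0 M).filter (fun n => n ≡ v [MOD r])).card : ℝ) - (M : ℝ) / r| ≤ 1 := by
  have h := Nat.Ioc_filter_modEq_card 0 M hr v
  have hrq : (0 : ℚ) < r := by exact_mod_cast hr
  have hle : ⌊((0 : ℕ) - (v : ℚ)) / (r : ℚ)⌋ ≤ ⌊((M : ℚ) - v) / (r : ℚ)⌋ := by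
    apply Int.floor_le_floor
    gcongr
    simp
  rw [max_eq_left (by linarith)] at h
  have h' : (((Finset.Ioc 0 M).filter (fun n => n ≡ v [MOD r])).card : ℚ) =
      (⌊((M : ℚ) - v) / (r : ℚ)⌋ : ℚ) - ⌊((0 : ℕ) - (v : ℚ)) / (r : ℚ)⌋ := by exact_mod_cast h
  have a1 := Int.floor_le (((M : ℚ) - v) / (r : ℚ))
  have a2 := Int.lt_floor_add_one (((M : ℚ) - v) / (r : ℚ))
  have a3 := Int.floor_le (((0 : ℕ) - (v : ℚ)) / (r : ℚ))
  have a4 := Int.lt_floor_add_one (((0 : ℕ) - (v : ℚ)) / (r : ℚ))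
  have e : ((M : ℚ) - v) / (r : ℚ) - ((0 : ℕ) - (v : ℚ)) / (r : ℚ) = (M : ℚ) / r := by
    push_cast; ring
  have key : |(((Finset.Ioc 0 M).filter (fun n => n ≡ v [MOD r])).card : ℚ) - (M : ℚ) / r| ≤ 1 := by
    rw [h', abs_le]
    constructor <;> linarith
  have key2 : ((|(((Finset.Ioc 0 M).filter (fun n => n ≡ v [MOD r])).card : ℚ) - (M : ℚ) / r| : ℚ) : ℝ)
      ≤ ((1 : ℚ) : ℝ) := Rat.cast_le.mpr key
  push_cast at key2
  exact key2

/-- Product of the primes `q ≤ R`, `q ≠ r`. -/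
noncomputable def sieveP (R r : ℕ) : ℕ :=
  ∏ q ∈ (Finset.Icc 1 R).filter (fun q => q.Prime ∧ q ≠ r), q

lemma sieveP_squarefree (R r : ℕ) : Squarefree (sieveP R r) := by
  unfold sieveP
  apply Finset.squarefree_prod_of_pairwise_isCoprime
  · intro a ha b hb hab
    simp only [Finset.coe_filter, Set.mem_ofPred_eq] at ha hb
    exact (Nat.coprime_iff_isRelPrime.mp ((Nat.coprime_primes ha.2.1 hb.2.1).mpr hab))
  · intro a ha
    simp only [Finset.mem_filter] at ha
    exact ha.2.1.prime.squarefree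

lemma prime_dvd_sieveP {R r p : ℕ} (hp : p.Prime) (h : p ∣ sieveP R r) : p ≤ R ∧ p ≠ r := by
  unfold sieveP at h
  rw [Prime.dvd_finsetProd_iff hp.prime] at h
  obtain ⟨q, hq, hpq⟩ := h
  simp only [Finset.mem_filter, Finset.mem_Icc] at hq
  have := (Nat.prime_dvd_prime_iff_eq hp hq.2.1).mp hpq
  subst this
  exact ⟨hq.1.2, hq.2.2⟩

lemma dvd_sieveP {R r l : ℕ} (hl : Squarefree l) (hlR : l ≤ R) (hr : ¬ r ∣ l) : l ∣ sieveP R r := by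
  rw [← Nat.prod_primeFactors_of_squarefree hl]
  unfold sieveP
  apply Finset.prod_dvd_prod_of_subset
  intro p hp
  have hpp := Nat.prime_of_mem_primeFactors hp
  have hpl := Nat.dvd_of_mem_primeFactors hp
  have : p ≤ l := Nat.le_of_dvd (Nat.pos_of_ne_zero hl.ne_zero) hpl
  simp only [Finset.mem_filter, Finset.mem_Icc]
  exact ⟨⟨hpp.pos, by omega⟩, hpp, fun h => hr (h ▸ hpl)⟩

lemma sum_lower (R r : ℕ) (hr : r.Prime) :
    Real.log R ≤ 4 * ∑ l ∈ (sieveP R r).divisors with l ≤ R, 1 / (l : ℝ) := by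
  classical
  set Q := (sieveP R r).divisors.filter (· ≤ R) with hQ
  have hP0 : sieveP R r ≠ 0 := (sieveP_squarefree R r).ne_zero
  have hex : ∀ m : ℕ, ∃ t : ℕ × ℕ × ℕ, m ∈ Finset.Icc 1 R →
      t ∈ Q ×ˢ (Finset.range 2 ×ˢ Finset.Ioo 0 (R+1)) ∧ m = t.1 * r ^ t.2.1 * t.2.2 ^ 2 := by
    intro m
    by_cases hm : m ∈ Finset.Icc 1 R
    · obtain ⟨a, b, hab, hsq⟩ := Nat.sq_mul_squarefree m
      simp only [Finset.mem_Icc] at hm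
      have ha0 : 0 < a := Nat.pos_of_ne_zero hsq.ne_zero
      have hb0 : 0 < b := by
        rcases Nat.eq_zero_or_pos b with h | h
        · subst h; simp at hab; omega
        · exact h
      have hbm : b ≤ m := by rw [← hab]; nlinarith [Nat.mul_le_mul hb0 ha0]
      have ham : a ≤ m := by rw [← hab]; exact Nat.le_mul_of_pos_left _ (by positivity)
      by_cases hra : r ∣ a
      · obtain ⟨c, rfl⟩ := hra
        have hc : Squarefree c := hsq.squarefree_of_dvd (dvd_mul_left _ _)
        have hrc : ¬ r ∣ c := by
          have := Nat.coprime_of_squarefree_mul hsq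
          exact (Nat.Prime.coprime_iff_not_dvd hr).mp this
        have hcR : c ≤ R := by
          have : c ≤ r * c := Nat.le_mul_of_pos_left _ hr.pos
          omega
        refine ⟨(c, 1, b), fun _ => ⟨?_, ?_⟩⟩
        · simp only [Finset.mem_product, hQ, Finset.mem_filter, Nat.mem_divisors, Finset.mem_range,
            Finset.mem_Ioo]
          exact ⟨⟨⟨dvd_sieveP hc hcR hrc, hP0⟩, hcR⟩, by norm_num, by omega, by omega⟩
        · simp only [← hab]; ring
      · refine ⟨(a, 0, b), fun _ => ⟨?_, ?_⟩⟩
        · simp only [Finset.mem_product, hQ, Finset.mem_filter, Nat.mem_divisors, Finset.mem_range,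
            Finset.mem_Ioo]
          exact ⟨⟨⟨dvd_sieveP hsq (by omega) hra, hP0⟩, by omega⟩, by norm_num, by omega, by omega⟩
        · simp only [← hab]; ring
    · exact ⟨(0, 0, 0), fun h => absurd h hm⟩
  choose φ hφ using hex
  have hharm : Real.log R ≤ ∑ m ∈ Finset.Icc 1 R, 1 / (m : ℝ) := by
    have h1 := log_add_one_le_harmonic R
    have h2 : Real.log R ≤ Real.log ((R + 1 : ℕ) : ℝ) := by
      rcases Nat.eq_zero_or_pos R with h | h
      · subst h; simp
      · apply Real.log_le_log (by positivity)
        push_cast; linarith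
    rw [harmonic_eq_sum_Icc] at h1
    push_cast at h1 h2
    simp only [one_div]
    linarith
  have hsq2 : ∑ k ∈ Finset.Ioo 0 (R + 1), 1 / (k : ℝ) ^ 2 ≤ 2 := by
    have := sum_Ioo_inv_sq_le (α := ℝ) 0 (R + 1)
    simpa using this
  have hr2 : (2 : ℝ) ≤ r := by exact_mod_cast hr.two_le
  have hS0 : 0 ≤ ∑ l ∈ Q, 1 / (l : ℝ) := Finset.sum_nonneg fun _ _ => by positivity
  refine hharm.trans ?_
  calc ∑ m ∈ Finset.Icc 1 R, 1 / (m : ℝ)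
      = ∑ m ∈ Finset.Icc 1 R, (fun t : ℕ × ℕ × ℕ =>
        1 / (t.1 : ℝ) * (1 / (r : ℝ) ^ t.2.1 * (1 / (t.2.2 : ℝ) ^ 2))) (φ m) := by
        refine Finset.sum_congr rfl fun m hm => ?_
        conv_lhs => rw [(hφ m hm).2]
        push_cast
        simp only [one_div, mul_inv]
        ring
    _ = ∑ t ∈ (Finset.Icc 1 R).image φ,
        1 / (t.1 : ℝ) * (1 / (r : ℝ) ^ t.2.1 * (1 / (t.2.2 : ℝ) ^ 2)) := by
        rw [Finset.sum_image]
        intro a ha b hb hab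
        rw [(hφ a ha).2, (hφ b hb).2, hab]
    _ ≤ ∑ t ∈ Q ×ˢ (Finset.range 2 ×ˢ Finset.Ioo 0 (R+1)),
        1 / (t.1 : ℝ) * (1 / (r : ℝ) ^ t.2.1 * (1 / (t.2.2 : ℝ) ^ 2)) := by
        apply Finset.sum_le_sum_of_subset_of_nonneg
        · intro t ht
          rw [Finset.mem_image] at ht
          obtain ⟨m, hm, rfl⟩ := ht
          exact (hφ m hm).1
        · intros; positivity
    _ = (∑ l ∈ Q, 1 / (l : ℝ)) * ((∑ e ∈ Finset.range 2, 1 / (r : ℝ) ^ e) *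
        ∑ k ∈ Finset.Ioo 0 (R + 1), 1 / (k : ℝ) ^ 2) := by
        rw [Finset.sum_mul_sum, Finset.sum_product, Finset.sum_mul_sum]
        refine Finset.sum_congr rfl fun l _ => ?_
        rw [Finset.sum_product]
        simp only [Finset.mul_sum]
    _ ≤ (∑ l ∈ Q, 1 / (l : ℝ)) * (2 * 2) := by
        gcongr
        simp only [Finset.sum_range_succ, Finset.sum_range_zero, pow_zero, pow_one]
        have : 1 / (r : ℝ) ≤ 1 := by
          rw [div_le_one (by linarith)]; linarith
        linarith
    _ = _ := by ring

/-- The arithmetic function `d ↦ 1 / d`. -/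
noncomputable def invAF : ArithmeticFunction ℝ := ⟨fun d => 1 / (d : ℝ), by simp⟩

lemma invAF_apply (d : ℕ) : invAF d = 1 / (d : ℝ) := rfl

lemma invAF_mult : invAF.IsMultiplicative := by
  rw [ArithmeticFunction.IsMultiplicative.iff_ne_zero]
  refine ⟨by simp [invAF_apply], ?_⟩
  intro m n _ _ _
  simp only [invAF_apply]
  push_cast
  simp [mul_comm]

lemma bt_raw (M r a R : ℕ) (hr : r.Prime) (hR : 2 ≤ R) :
    (((Finset.Ioc 0 M).filter (fun p => p.Prime ∧ p ≡ a [MOD r])).card : ℝ) ≤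
      R + 4 * (M / r) / Real.log R + (R : ℝ) ^ 4 := by
  classical
  let s : BoundingSieve :=
    { support := (Finset.Ioc 0 M).filter (fun n => n ≡ a [MOD r])
      prodPrimes := sieveP R r
      prodPrimes_squarefree := sieveP_squarefree R r
      weights := fun _ => 1
      weights_nonneg := fun _ => zero_le_one
      totalMass := (M : ℝ) / r
      nu := invAF
      nu_mult := invAF_mult
      nu_pos_of_prime := by
        intro p hp _
        have := hp.pos
        rw [invAF_apply]
        positivity
      nu_lt_one_of_prime := by
        intro p hp _
        have : (1 : ℝ) < p := by exact_mod_cast hp.one_lt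
        rw [invAF_apply]
        rw [div_lt_one (by linarith)]
        exact this }
  have hrem : ∀ d, d ∣ s.prodPrimes → |s.rem d| ≤ 1 := by
    intro d hd
    have hd' : d ∣ sieveP R r := hd
    have hd0 : 0 < d := Nat.pos_of_dvd_of_pos hd' (Nat.pos_of_ne_zero (sieveP_squarefree R r).ne_zero)
    have hcop : r.Coprime d := by
      rw [Nat.Prime.coprime_iff_not_dvd hr]
      intro h
      exact (prime_dvd_sieveP hr (h.trans hd')).2 rfl
    obtain ⟨v, hv1, hv2⟩ := Nat.chineseRemainder hcop a 0
    have h := count_ap M (r * d) v (Nat.mul_pos hr.pos hd0)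
    have e : s.rem d = (((Finset.Ioc 0 M).filter (fun n => n ≡ v [MOD r * d])).card : ℝ) -
        (M : ℝ) / (r * d : ℕ) := by
      have e1 : s.rem d = (∑ n ∈ (Finset.Ioc 0 M).filter (fun n => n ≡ a [MOD r]),
        if d ∣ n then (1 : ℝ) else 0) - 1 / (d : ℝ) * ((M : ℝ) / r) := rfl
      rw [e1, ← Finset.sum_filter, Finset.filter_filter]
      congr 1
      · rw [Finset.sum_const, nsmul_eq_mul, mul_one]
        congr 2
        ext n
        simp only [Finset.mem_filter]
        rw [← Nat.modEq_and_modEq_iff_modEq_mul hcop]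
        constructor
        · rintro ⟨h0, h1, h2⟩
          exact ⟨h0, h1.trans hv1.symm, ((Nat.modEq_zero_iff_dvd.mpr h2)).trans hv2.symm⟩
        · rintro ⟨h0, h1, h2⟩
          exact ⟨h0, h1.trans hv1, Nat.modEq_zero_iff_dvd.mp (h2.trans hv2)⟩
      · push_cast
        simp only [div_eq_mul_inv, mul_inv]; ring
    rw [e]; exact h
  have hb := selberg_bound s R (by omega) (by show (0 : ℝ) ≤ (M : ℝ) / r; positivity)
    (fun d _ => rfl) hrem
  have hlow := sum_lower R r hr
  have hlog : 0 < Real.log R := Real.log_pos (by exact_mod_cast (by omega : 1 < R))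
  have htm : s.totalMass = (M : ℝ) / r := rfl
  have hpp : s.prodPrimes = sieveP R r := rfl
  rw [htm, hpp] at hb
  have hsift : (((Finset.Ioc 0 M).filter (fun p => p.Prime ∧ p ≡ a [MOD r])).card : ℝ) ≤
      R + s.siftedSum := by
    have e1 : s.siftedSum = (((Finset.Ioc 0 M).filter (fun n => n ≡ a [MOD r])).filter
        (fun n => (sieveP R r).Coprime n)).card := by
      have : s.siftedSum = ∑ n ∈ (Finset.Ioc 0 M).filter (fun n => n ≡ a [MOD r]),
        if (sieveP R r).Coprime n then (1 : ℝ) else 0 := rfl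
      rw [this]; simp
    rw [e1]
    have hsub : (Finset.Ioc 0 M).filter (fun p => p.Prime ∧ p ≡ a [MOD r]) ⊆
        Finset.Icc 1 R ∪ ((Finset.Ioc 0 M).filter (fun n => n ≡ a [MOD r])).filter
        (fun n => (sieveP R r).Coprime n) := by
      intro p hp
      simp only [Finset.mem_filter, Finset.mem_union, Finset.mem_Icc] at hp ⊢
      by_cases h : p ≤ R
      · left; exact ⟨hp.2.1.pos, h⟩
      · right
        refine ⟨⟨hp.1, hp.2.2⟩, ?_⟩
        rw [Nat.coprime_comm, Nat.Prime.coprime_iff_not_dvd hp.2.1]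
        intro hd
        exact h (prime_dvd_sieveP hp.2.1 hd).1
    have := (Finset.card_le_card hsub).trans (Finset.card_union_le _ _)
    rw [Nat.card_Icc, Nat.add_sub_cancel] at this
    exact_mod_cast this
  have hdiv : (M : ℝ) / r / (∑ l ∈ (sieveP R r).divisors with l ≤ R, 1 / (l : ℝ)) ≤
      4 * (M / r) / Real.log R := by
    have hSpos : 0 < ∑ l ∈ (sieveP R r).divisors with l ≤ R, 1 / (l : ℝ) := by linarith
    rw [div_le_div_iff₀ hSpos hlog]
    have : (0 : ℝ) ≤ (M : ℝ) / r := by positivity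
    nlinarith
  linarith

lemma prime_tail_step (u : ℝ) (hu : 1 ≤ u) (J : ℕ) :
    ∑ r ∈ (Finset.Ioc 0 ⌊2 ^ J * u⌋₊).filter (fun r : ℕ => r.Prime ∧ u < r),
      Real.log r / (r : ℝ) ^ 2 ≤ 4 * Real.log 4 / u * (1 - 1 / 2 ^ J) := by
  induction J with
  | zero =>
    rw [Finset.sum_eq_zero]
    · simp
    · intro r hr
      simp only [Finset.mem_filter, Finset.mem_Ioc, pow_zero, one_mul] at hr
      have := (Nat.le_floor_iff (by linarith)).mp hr.1.2
      linarith [hr.2.2]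
  | succ J ih =>
    set U := 2 ^ J * u with hU
    have hU1 : 0 < U := by positivity
    have hsub : (Finset.Ioc 0 ⌊2 ^ (J+1) * u⌋₊).filter (fun r : ℕ => r.Prime ∧ u < r) ⊆
      (Finset.Ioc 0 ⌊U⌋₊).filter (fun r : ℕ => r.Prime ∧ u < r) ∪
      (Finset.Ioc 0 ⌊2 * U⌋₊).filter (fun r : ℕ => r.Prime ∧ U < r) := by
      intro r hr
      have e : 2 ^ (J+1) * u = 2 * U := by rw [hU]; ring
      rw [e] at hr
      simp only [Finset.mem_filter, Finset.mem_union, Finset.mem_Ioc] at hr ⊢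
      by_cases h : (r : ℝ) ≤ U
      · left; exact ⟨⟨hr.1.1, (Nat.le_floor_iff hU1.le).mpr h⟩, hr.2⟩
      · right; exact ⟨hr.1, hr.2.1, by linarith⟩
    have hn : ∀ r : ℕ, 0 ≤ Real.log r / (r : ℝ) ^ 2 := fun r =>
      div_nonneg (Real.log_natCast_nonneg r) (by positivity)
    have h2 : ∑ r ∈ (Finset.Ioc 0 ⌊2 * U⌋₊).filter (fun r : ℕ => r.Prime ∧ U < r),
        Real.log r / (r : ℝ) ^ 2 ≤ 2 * Real.log 4 / U := by
      calc _ ≤ ∑ r ∈ (Finset.Ioc 0 ⌊2 * U⌋₊).filter (fun r : ℕ => r.Prime ∧ U < r),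
            Real.log r / U ^ 2 := by
            apply Finset.sum_le_sum
            intro r hr
            simp only [Finset.mem_filter] at hr
            have := hr.2.2
            have := Real.log_natCast_nonneg r
            gcongr
        _ ≤ ∑ r ∈ (Finset.Ioc 0 ⌊2 * U⌋₊).filter Nat.Prime, Real.log r / U ^ 2 := by
            apply Finset.sum_le_sum_of_subset_of_nonneg
            · intro r hr
              simp only [Finset.mem_filter] at hr ⊢
              exact ⟨hr.1, hr.2.1⟩
            · intro r _ _
              exact div_nonneg (Real.log_natCast_nonneg r) (by positivity)
        _ = Chebyshev.theta (2 * U) / U ^ 2 := by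
            rw [← Finset.sum_div]; rfl
        _ ≤ (Real.log 4 * (2 * U)) / U ^ 2 := by
            gcongr
            exact Chebyshev.theta_le_log4_mul_x (by positivity)
        _ = _ := by field_simp
    calc _ ≤ _ := Finset.sum_le_sum_of_subset_of_nonneg hsub fun r _ _ => hn r
      _ ≤ _ := by
          rw [← Finset.sum_union_inter]
          exact le_add_of_nonneg_right (Finset.sum_nonneg fun r _ => hn r)
      _ ≤ 4 * Real.log 4 / u * (1 - 1 / 2 ^ J) + 2 * Real.log 4 / U := add_le_add ih h2
      _ = _ := by rw [hU, pow_succ]; field_simp; ring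

lemma prime_tail (u : ℝ) (hu : 2 ≤ u) (M : ℕ) :
    ∑ r ∈ (Finset.Ioc 0 M).filter (fun r : ℕ => r.Prime ∧ u < r),
      1 / (r : ℝ) ^ 2 ≤ 8 / (u * Real.log u) := by
  have hlu : 0 < Real.log u := Real.log_pos (by linarith)
  have hstep := prime_tail_step u (by linarith) M
  have hM : M ≤ ⌊2 ^ M * u⌋₊ := by
    apply Nat.le_floor
    have h1 : (M : ℝ) ≤ 2 ^ M := by exact_mod_cast Nat.lt_two_pow_self.le
    have : (0 : ℝ) < 2 ^ M := by positivity
    nlinarith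
  have hlog4 : Real.log 4 ≤ 2 := by
    have : Real.log 4 = 2 * Real.log 2 := by
      rw [show (4 : ℝ) = 2 ^ 2 by norm_num, Real.log_pow]; norm_num
    rw [this]; linarith [Real.log_two_lt_d9]
  have hlog4' : 0 ≤ Real.log 4 := Real.log_nonneg (by norm_num)
  calc _ ≤ ∑ r ∈ (Finset.Ioc 0 ⌊2 ^ M * u⌋₊).filter (fun r : ℕ => r.Prime ∧ u < r),
          (Real.log r / (r : ℝ) ^ 2) / Real.log u := by
        calc _ ≤ ∑ r ∈ (Finset.Ioc 0 M).filter (fun r : ℕ => r.Prime ∧ u < r),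
              (Real.log r / (r : ℝ) ^ 2) / Real.log u := by
              apply Finset.sum_le_sum
              intro r hr
              simp only [Finset.mem_filter] at hr
              have h1 : Real.log u ≤ Real.log r := Real.log_le_log (by linarith) hr.2.2.le
              have h2 : (0 : ℝ) < r := by linarith [hr.2.2]
              rw [div_right_comm]
              gcongr
              rw [le_div_iff₀ hlu]; linarith
          _ ≤ _ := by
              apply Finset.sum_le_sum_of_subset_of_nonneg
              · apply Finset.filter_subset_filter
                exact Finset.Ioc_subset_Ioc_right hM
              · intro r _ _
                exact div_nonneg (div_nonneg (Real.log_natCast_nonneg r) (by positivity)) hlu.le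
    _ ≤ (4 * Real.log 4 / u * (1 - 1 / 2 ^ M)) / Real.log u := by
        rw [← Finset.sum_div]; gcongr
    _ ≤ (4 * 2 / u * 1) / Real.log u := by
        have : (0:ℝ) ≤ 1 / 2 ^ M := by positivity
        have h3 : (1:ℝ) / 2 ^ M ≤ 1 := by
          rw [div_le_one (by positivity)]; exact one_le_pow₀ (by norm_num)
        gcongr
        linarith
    _ = _ := by field_simp; norm_num

lemma bt_final (t x : ℝ) (ht : 8 ≤ t) (hx : x = t ^ 8) (r a : ℕ) (hr : r.Prime)
    (hrt : (r : ℝ) ≤ t ^ 2) :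
    (((Finset.Ioc 0 ⌊x⌋₊).filter (fun p => p.Prime ∧ p ≡ a [MOD r])).card : ℝ) ≤
      66 * x / Real.log x / r := by
  set R := ⌊t⌋₊ with hR
  have hRt : (R : ℝ) ≤ t := Nat.floor_le (by linarith)
  have hRt' : t < R + 1 := Nat.lt_floor_add_one t
  have hR2 : 2 ≤ R := Nat.le_floor (by push_cast; linarith)
  have hb := bt_raw ⌊x⌋₊ r a R hr hR2
  have hx0 : 0 < x := by rw [hx]; positivity
  have hMx : (⌊x⌋₊ : ℝ) ≤ x := Nat.floor_le hx0.le
  have hlogx : Real.log x = 8 * Real.log t := by rw [hx, Real.log_pow]; norm_num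
  have hlt : 0 < Real.log t := Real.log_pos (by linarith)
  have hlt2 : Real.log t ≤ t - 1 := Real.log_le_sub_one_of_pos (by linarith)
  have hr0 : (0 : ℝ) < r := by exact_mod_cast hr.pos
  have hlogR : Real.log x / 16 ≤ Real.log R := by
    have h1 : t ≤ (R : ℝ) ^ 2 := by nlinarith
    have h2 : Real.log t ≤ Real.log ((R : ℝ) ^ 2) := Real.log_le_log (by linarith) h1
    rw [Real.log_pow] at h2
    push_cast at h2
    linarith
  have hL : 0 < Real.log x := by linarith
  have h1 : 4 * ((⌊x⌋₊ : ℝ) / r) / Real.log R ≤ 64 * x / Real.log x / r := by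
    calc 4 * ((⌊x⌋₊ : ℝ) / r) / Real.log R ≤ 4 * (x / r) / (Real.log x / 16) := by gcongr
      _ = _ := by field_simp; norm_num
  have h2 : (R : ℝ) + (R : ℝ) ^ 4 ≤ 2 * x / Real.log x / r := by
    have h3 : (R : ℝ) ^ 4 ≤ t ^ 4 := by gcongr
    have h4 : t ≤ t ^ 4 := le_self_pow₀ (by linarith) (by norm_num)
    rw [div_div, le_div_iff₀ (by positivity)]
    have h5 : Real.log x ≤ t ^ 2 := by rw [hlogx]; nlinarith
    calc ((R : ℝ) + (R : ℝ) ^ 4) * (Real.log x * r) ≤ (t ^ 4 + t ^ 4) * (t ^ 2 * t ^ 2) := by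
          gcongr; linarith
      _ = 2 * x := by rw [hx]; ring
  calc _ ≤ _ := hb
    _ ≤ 64 * x / Real.log x / r + 2 * x / Real.log x / r := by linarith
    _ = _ := by ring

lemma hy_sum_bound_s11 (t x y : ℝ) (ht : 8 ≤ t) (hx : x = t ^ 8) (hy2 : 2 ≤ y)
    (hyL : Real.log x * (y * Real.log y) ≤ t ^ 2)
    (g : ℕ → ℕ) (hg : ∀ p, p.Prime → 0 < g p ∧ g p ≤ p + 1)
    (hga : ∀ r : ℕ, r.Prime → ∃ a, ∀ p, p.Prime → r ∣ g p → p ≡ a [MOD r]) :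
    ∑ p ∈ (Finset.Ioc 0 ⌊x⌋₊).filter Nat.Prime, hy y (g p) ≤
      552 * (x / Real.log x) / (y * Real.log y) := by
  classical
  set M := ⌊x⌋₊ with hM
  have hx1 : 1 ≤ x := by rw [hx]; exact one_le_pow₀ (by linarith)
  have hx0 : 0 < x := by linarith
  have hMx : (M : ℝ) ≤ x := Nat.floor_le hx0.le
  have hlogx : Real.log x = 8 * Real.log t := by rw [hx, Real.log_pow]; norm_num
  have hlt : 1 ≤ Real.log t := by
    rw [Real.le_log_iff_exp_le (by linarith)]
    linarith [Real.exp_one_lt_d9]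
  have hL : 0 < Real.log x := by linarith
  have hly : 0 < Real.log y := Real.log_pos (by linarith)
  choose! a ha using hga
  set F := (Finset.Ioc 0 M).filter Nat.Prime with hF
  set T := (Finset.Ioc 0 (M + 1)).filter (fun r : ℕ => r.Prime ∧ y < r) with hT
  have hA : ∀ r ∈ T, ((F.filter (fun p => r ∣ g p)).card : ℝ) ≤
      66 * x / Real.log x / r + if t ^ 2 < (r : ℝ) then 3 * x / r else 0 := by
    intro r hrT
    simp only [hT, Finset.mem_filter, Finset.mem_Ioc] at hrT
    have hrp := hrT.2.1
    have hr0 : (0 : ℝ) < r := by exact_mod_cast hrp.pos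
    have hsub : F.filter (fun p => r ∣ g p) ⊆
        (Finset.Ioc 0 M).filter (fun p => p.Prime ∧ p ≡ a r [MOD r]) := by
      intro p hp
      simp only [hF, Finset.mem_filter] at hp ⊢
      exact ⟨hp.1.1, hp.1.2, ha r hrp p hp.1.2 hp.2⟩
    have hc : ((F.filter (fun p => r ∣ g p)).card : ℝ) ≤
        (((Finset.Ioc 0 M).filter (fun p => p.Prime ∧ p ≡ a r [MOD r])).card : ℝ) := by
      exact_mod_cast Finset.card_le_card hsub
    refine hc.trans ?_
    split_ifs with h
    · have h1 : (((Finset.Ioc 0 M).filter (fun p => p.Prime ∧ p ≡ a r [MOD r])).card : ℝ) ≤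
          (((Finset.Ioc 0 M).filter (fun p => p ≡ a r [MOD r])).card : ℝ) := by
        have : (Finset.Ioc 0 M).filter (fun p => p.Prime ∧ p ≡ a r [MOD r]) ⊆
          (Finset.Ioc 0 M).filter (fun p => p ≡ a r [MOD r]) := by
          intro p hp
          simp only [Finset.mem_filter] at hp ⊢
          exact ⟨hp.1, hp.2.2⟩
        exact_mod_cast Finset.card_le_card this
      have h2 := (abs_le.mp (count_ap M r (a r) hrp.pos)).2
      have h3 : (M : ℝ) / r + 1 ≤ 3 * x / r := by
        have : (r : ℝ) ≤ M + 1 := by exact_mod_cast hrT.1.2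
        rw [div_add_one hr0.ne']
        gcongr
        linarith
      have h4 : 0 ≤ 66 * x / Real.log x / r := by positivity
      linarith
    · rw [add_zero]
      exact bt_final t x ht hx r (a r) hrp (not_lt.mp h)
  calc ∑ p ∈ F, hy y (g p)
      ≤ ∑ p ∈ F, ∑ r ∈ T, (if r ∣ g p then 1 / (r : ℝ) else 0) := by
        apply Finset.sum_le_sum
        intro p hp
        simp only [hF, Finset.mem_filter, Finset.mem_Ioc] at hp
        rw [← Finset.sum_filter]
        unfold hy
        apply Finset.sum_le_sum_of_subset_of_nonneg
        · intro r hr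
          simp only [hT, Finset.mem_filter, Nat.mem_primeFactors, Finset.mem_Ioc] at hr ⊢
          have h1 := hg p hp.2
          have h2 := Nat.le_of_dvd h1.1 hr.1.2.1
          exact ⟨⟨⟨hr.1.1.pos, by omega⟩, hr.1.1, hr.2⟩, hr.1.2.1⟩
        · intros; positivity
    _ = ∑ r ∈ T, ((F.filter (fun p => r ∣ g p)).card : ℝ) * (1 / (r : ℝ)) := by
        rw [Finset.sum_comm]
        refine Finset.sum_congr rfl fun r _ => ?_
        rw [← Finset.sum_filter, Finset.sum_const, nsmul_eq_mul]
    _ ≤ ∑ r ∈ T, (66 * x / Real.log x / r + if t ^ 2 < (r : ℝ) then 3 * x / r else 0) *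
          (1 / (r : ℝ)) := by
        apply Finset.sum_le_sum
        intro r hr
        gcongr
        exact hA r hr
    _ = 66 * x / Real.log x * ∑ r ∈ T, 1 / (r : ℝ) ^ 2 +
          3 * x * ∑ r ∈ T.filter (fun r : ℕ => t ^ 2 < (r : ℝ)), 1 / (r : ℝ) ^ 2 := by
        have hsf : ∑ r ∈ T.filter (fun r : ℕ => t ^ 2 < (r : ℝ)), 1 / (r : ℝ) ^ 2 =
            ∑ r ∈ T, if t ^ 2 < (r : ℝ) then 1 / (r : ℝ) ^ 2 else 0 := Finset.sum_filter _ _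
        rw [hsf, Finset.mul_sum, Finset.mul_sum, ← Finset.sum_add_distrib]
        refine Finset.sum_congr rfl fun r _ => ?_
        split_ifs
        · simp only [div_eq_mul_inv, sq, mul_inv]; ring
        · simp only [div_eq_mul_inv, sq, mul_inv]; ring
    _ ≤ 66 * x / Real.log x * (8 / (y * Real.log y)) +
          3 * x * (8 / (t ^ 2 * Real.log (t ^ 2))) := by
        gcongr
        · exact prime_tail y hy2 (M + 1)
        · refine le_trans ?_ (prime_tail (t ^ 2) (by nlinarith) (M + 1))
          apply Finset.sum_le_sum_of_subset_of_nonneg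
          · intro r hr
            simp only [hT, Finset.mem_filter] at hr ⊢
            exact ⟨hr.1.1, hr.1.2.1, hr.2⟩
          · intros; positivity
    _ ≤ 66 * x / Real.log x * (8 / (y * Real.log y)) +
          3 * x * (8 / (Real.log x * (y * Real.log y))) := by
        have hlt2 : 1 ≤ Real.log (t ^ 2) := by
          rw [Real.log_pow]; push_cast; linarith
        have : Real.log x * (y * Real.log y) ≤ t ^ 2 * Real.log (t ^ 2) := by nlinarith
        gcongr
    _ = _ := by field_simp; norm_num

lemma pi_lower (x : ℝ) (hx : 10 ≤ x) :
    x / Real.log x ≤ 4 * (Nat.primeCounting ⌊x⌋₊ : ℝ) := by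
  have h := Chebyshev.pi_ge' (x := x) (by linarith)
  have hL : 0 < Real.log x := Real.log_pos (by linarith)
  rw [div_le_iff₀ hL] at h ⊢
  have h2 := Real.log_two_gt_d9
  have h2' := Real.log_two_lt_d9
  have h3 : Real.log (x + 2) ≤ (x + 2) / 8 - 1 + 3 * Real.log 2 := by
    have : Real.log (x + 2) = Real.log ((x + 2) / 8) + 3 * Real.log 2 := by
      rw [Real.log_div (by linarith) (by norm_num), show (8 : ℝ) = 2 ^ 3 by norm_num, Real.log_pow]
      push_cast; ring
    rw [this]
    have := Real.log_le_sub_one_of_pos (show 0 < (x + 2) / 8 by linarith)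
    linarith
  nlinarith

lemma count_bound (t x y : ℝ) (ht : 8 ≤ t) (hx : x = t ^ 8) (hy2 : 2 ≤ y)
    (hyL : Real.log x * (y * Real.log y) ≤ t ^ 2) :
    ({p : ℕ | p.Prime ∧ (p : ℝ) ≤ x ∧
          (hy y (p - 1) > 1 / (y * Real.sqrt (Real.log y)) ∨
            hy y (p + 1) > 1 / (y * Real.sqrt (Real.log y)))}.ncard : ℝ) ≤
        4416 * (Nat.primeCounting ⌊x⌋₊ : ℝ) / Real.sqrt (Real.log y) := by
  classical
  have hx1 : 10 ≤ x := by
    rw [hx]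
    calc (10 : ℝ) ≤ 8 ^ 8 := by norm_num
      _ ≤ t ^ 8 := by gcongr
  have hly : 0 < Real.log y := Real.log_pos (by linarith)
  have hs : 0 < Real.sqrt (Real.log y) := Real.sqrt_pos.mpr hly
  set F := (Finset.Ioc 0 ⌊x⌋₊).filter Nat.Prime with hF
  set θ := 1 / (y * Real.sqrt (Real.log y)) with hθ
  have hθ0 : 0 < θ := by positivity
  have hset : {p : ℕ | p.Prime ∧ (p : ℝ) ≤ x ∧ (hy y (p - 1) > θ ∨ hy y (p + 1) > θ)} =
      ((F.filter (fun p => hy y (p - 1) > θ ∨ hy y (p + 1) > θ) : Finset ℕ) : Set ℕ) := by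
    ext p
    simp only [hF, Finset.coe_filter, Finset.mem_filter, Finset.mem_Ioc, Set.mem_ofPred_eq]
    constructor
    · rintro ⟨h1, h2, h3⟩
      exact ⟨⟨⟨h1.pos, Nat.le_floor h2⟩, h1⟩, h3⟩
    · rintro ⟨⟨⟨_, h2⟩, h1⟩, h3⟩
      exact ⟨h1, (Nat.le_floor_iff (by linarith)).mp h2, h3⟩
  rw [hset, Set.ncard_coe_finset]
  set B := F.filter (fun p => hy y (p - 1) > θ ∨ hy y (p + 1) > θ) with hB
  have hnn : ∀ n, 0 ≤ hy y n := fun n => Finset.sum_nonneg fun _ _ => by positivity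
  have s1 := hy_sum_bound_s11 t x y ht hx hy2 hyL (fun p => p - 1)
    (fun p hp => ⟨by have := hp.two_le; omega, by omega⟩)
    (fun r hr => ⟨1, fun p hp hd => by
      exact ((Nat.modEq_iff_dvd' hp.one_lt.le).mpr hd).symm⟩)
  have s2 := hy_sum_bound_s11 t x y ht hx hy2 hyL (fun p => p + 1)
    (fun p hp => ⟨by omega, le_rfl⟩)
    (fun r hr => ⟨r - 1, fun p hp hd => by
      apply Nat.ModEq.add_right_cancel' 1
      rw [Nat.sub_add_cancel hr.one_lt.le]
      exact (Nat.modEq_zero_iff_dvd.mpr hd).trans (Nat.modEq_zero_iff_dvd.mpr dvd_rfl).symm⟩)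
  have hmark : (B.card : ℝ) * θ ≤ 1104 * (x / Real.log x) / (y * Real.log y) := by
    calc (B.card : ℝ) * θ = ∑ p ∈ B, θ := by simp
      _ ≤ ∑ p ∈ B, (hy y (p - 1) + hy y (p + 1)) := by
          apply Finset.sum_le_sum
          intro p hp
          simp only [hB, Finset.mem_filter] at hp
          have := hnn (p - 1)
          have := hnn (p + 1)
          rcases hp.2 with h | h <;> linarith
      _ ≤ ∑ p ∈ F, (hy y (p - 1) + hy y (p + 1)) := by
          apply Finset.sum_le_sum_of_subset_of_nonneg (Finset.filter_subset _ _)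
          intro p _ _
          exact add_nonneg (hnn _) (hnn _)
      _ = ∑ p ∈ F, hy y (p - 1) + ∑ p ∈ F, hy y (p + 1) := Finset.sum_add_distrib
      _ ≤ _ := add_le_add s1 s2
      _ = _ := by ring
  have hpi := pi_lower x hx1
  have hpi' : 1104 * (x / Real.log x) ≤ 4416 * (Nat.primeCounting ⌊x⌋₊ : ℝ) := by linarith
  calc (B.card : ℝ) = ((B.card : ℝ) * θ) / θ := by field_simp
    _ ≤ (4416 * (Nat.primeCounting ⌊x⌋₊ : ℝ) / (y * Real.log y)) / θ := by
        gcongr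
        refine hmark.trans ?_
        gcongr
    _ = (4416 * (Nat.primeCounting ⌊x⌋₊ : ℝ)) * Real.sqrt (Real.log y) / Real.log y := by
        rw [hθ]; field_simp
    _ = _ := by
        have e := Real.mul_self_sqrt hly.le
        rw [div_eq_div_iff hly.ne' hs.ne', mul_assoc, e]

lemma eventually_count :
    ∀ᶠ x : ℝ in atTop,
      ({p : ℕ | p.Prime ∧ (p : ℝ) ≤ x ∧
          (hy (Real.log (Real.log x)) (p - 1) >
              1 / (Real.log (Real.log x) * Real.sqrt (Real.log (Real.log (Real.log x)))) ∨
            hy (Real.log (Real.log x)) (p + 1) >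
              1 / (Real.log (Real.log x) * Real.sqrt (Real.log (Real.log (Real.log x)))))}.ncard : ℝ) ≤
        4416 * (Nat.primeCounting ⌊x⌋₊ : ℝ) / Real.sqrt (Real.log (Real.log (Real.log x))) := by
  have hll : Tendsto (fun x : ℝ => Real.log (Real.log x)) atTop atTop :=
    Real.tendsto_log_atTop.comp Real.tendsto_log_atTop
  have htt : Tendsto (fun x : ℝ => x ^ (1 / 8 : ℝ)) atTop atTop :=
    tendsto_rpow_atTop (by norm_num)
  have hlog3 : ∀ᶠ t : ℝ in atTop, (8 * Real.log t) ^ 3 ≤ t := by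
    have := (Real.isLittleO_pow_log_id_atTop (n := 3)).bound (show (0 : ℝ) < 1 / 512 by norm_num)
    filter_upwards [this, eventually_ge_atTop 1] with t h1 h2
    have h3 : 0 ≤ Real.log t := Real.log_nonneg h2
    rw [Real.norm_of_nonneg (by positivity), id, Real.norm_of_nonneg (by linarith)] at h1
    nlinarith
  filter_upwards [hll.eventually_ge_atTop 2, htt.eventually_ge_atTop 8, htt.eventually hlog3,
    eventually_ge_atTop 1] with x h1 h2 h3 h4
  have hx : x = (x ^ (1 / 8 : ℝ)) ^ 8 := by
    rw [← Real.rpow_natCast, ← Real.rpow_mul (by linarith)]; norm_num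
  refine count_bound (x ^ (1 / 8 : ℝ)) x _ h2 hx h1 ?_
  set t := x ^ (1 / 8 : ℝ) with ht
  have hlogx : Real.log x = 8 * Real.log t := by
    conv_lhs => rw [hx]
    rw [Real.log_pow]; norm_num
  rw [← hlogx] at h3
  set y := Real.log (Real.log x) with hydef
  have hL0 : 0 ≤ Real.log x := Real.log_nonneg h4
  have hyL : y ≤ Real.log x := Real.log_le_self hL0
  have hlyy : Real.log y ≤ Real.log x := (Real.log_le_self (by linarith)).trans hyL
  have hly0 : 0 ≤ Real.log y := Real.log_nonneg (by linarith)
  calc Real.log x * (y * Real.log y) ≤ Real.log x * (Real.log x * Real.log x) := by gcongr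
    _ = Real.log x ^ 3 := by ring
    _ ≤ t := h3
    _ ≤ t ^ 2 := le_self_pow₀ (by linarith) (by norm_num)

theorem type2_inconvenient_primes :
    (∃ C : ℝ, 0 < C ∧ ∀ᶠ x : ℝ in atTop,
      ({p : ℕ | p.Prime ∧ (p : ℝ) ≤ x ∧
          (hy (Real.log (Real.log x)) (p - 1) >
              1 / (Real.log (Real.log x) * Real.sqrt (Real.log (Real.log (Real.log x)))) ∨
            hy (Real.log (Real.log x)) (p + 1) >
              1 / (Real.log (Real.log x) * Real.sqrt (Real.log (Real.log (Real.log x)))))}.ncard : ℝ) ≤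
        C * (Nat.primeCounting ⌊x⌋₊ : ℝ) / Real.sqrt (Real.log (Real.log (Real.log x)))) ∧
    Tendsto (fun x : ℝ =>
      ({p : ℕ | p.Prime ∧ (p : ℝ) ≤ x ∧
          (hy (Real.log (Real.log x)) (p - 1) >
              1 / (Real.log (Real.log x) * Real.sqrt (Real.log (Real.log (Real.log x)))) ∨
            hy (Real.log (Real.log x)) (p + 1) >
              1 / (Real.log (Real.log x) * Real.sqrt (Real.log (Real.log (Real.log x)))))}.ncard : ℝ) /
        (Nat.primeCounting ⌊x⌋₊ : ℝ)) atTop (𝓝 0) := by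
  refine ⟨⟨4416, by norm_num, eventually_count⟩, ?_⟩
  have hlll : Tendsto (fun x : ℝ => Real.sqrt (Real.log (Real.log (Real.log x)))) atTop atTop :=
    Real.tendsto_sqrt_atTop.comp (Real.tendsto_log_atTop.comp
      (Real.tendsto_log_atTop.comp Real.tendsto_log_atTop))
  have hlim : Tendsto (fun x : ℝ => 4416 / Real.sqrt (Real.log (Real.log (Real.log x)))) atTop
      (𝓝 0) := hlll.const_div_atTop 4416
  refine tendsto_of_tendsto_of_tendsto_of_le_of_le' tendsto_const_nhds hlim ?_ ?_
  · exact Eventually.of_forall fun x => by positivity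
  · filter_upwards [eventually_count, eventually_ge_atTop 10] with x h1 h2
    have hpi : 0 < (Nat.primeCounting ⌊x⌋₊ : ℝ) := by
      have := pi_lower x h2
      have h3 : 0 < x / Real.log x := div_pos (by linarith) (Real.log_pos (by linarith))
      linarith
    rw [div_le_iff₀ hpi]
    refine h1.trans (le_of_eq ?_)
    ring
end

section
/- There exists a constant C > 0 such that for all sufficiently large real x, writing y = log log x, one has Σ_{p ≤ x, p prime} h_y(p−1) ≤ C · π(x)/(y · log y) and Σ_{p ≤ x, p prime} h_y(p+1) ≤ C · π(x)/(y · log y). -/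
open Filter Topology

lemma bt_count (r : ℕ) (b : ℤ) (N q : ℕ) (hq : 0 < q) (h : Nat.Coprime q r) :
    |((((Finset.Ioc (0:ℤ) N).filter (fun n => (q:ℤ) ∣ r * n + b)).card : ℕ) : ℝ) - (N:ℝ) / q| ≤ 1 := by
  obtain ⟨u, v, huv⟩ : IsCoprime (q:ℤ) (r:ℤ) := Nat.isCoprime_iff_coprime.mpr h
  have e : (Finset.Ioc (0:ℤ) N).filter (fun n => (q:ℤ) ∣ r * n + b)
      = (Finset.Ioc (0:ℤ) N).filter (fun n => n ≡ -(v*b) [ZMOD q]) := by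
    apply Finset.filter_congr
    intro n _
    rw [Int.modEq_iff_dvd]
    constructor
    · rintro ⟨k, hk⟩
      refine ⟨-v*k - u * n, ?_⟩
      linear_combination (-v) * hk + n * huv
    · rintro ⟨k, hk⟩
      refine ⟨-r*k+ u*b, ?_⟩
      linear_combination (-(r:ℤ)) * hk - b * huv
  rw [e]
  have hc := Int.Ioc_filter_modEq_card (0:ℤ) N (r := (q:ℤ)) (by exact_mod_cast hq) (-(v*b))
  set c := ((Finset.Ioc (0:ℤ) N).filter (fun n => n ≡ -(v*b) [ZMOD q])).card
  have hq' : (0:ℚ) < q := by exact_mod_cast hq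
  have h1 := Int.floor_le ((((N:ℤ):ℚ) - ((-(v*b) : ℤ):ℚ)) / ((q:ℤ):ℚ))
  have h2 := Int.lt_floor_add_one ((((N:ℤ):ℚ) - ((-(v*b) : ℤ):ℚ)) / ((q:ℤ):ℚ))
  have h3 := Int.floor_le ((((0:ℤ):ℚ) - ((-(v*b) : ℤ):ℚ)) / ((q:ℤ):ℚ))
  have h4 := Int.lt_floor_add_one ((((0:ℤ):ℚ) - ((-(v*b) : ℤ):ℚ)) / ((q:ℤ):ℚ))
  have hmono : ⌊((((0:ℤ):ℚ) - ((-(v*b) : ℤ):ℚ)) / ((q:ℤ):ℚ))⌋ ≤ ⌊((((N:ℤ):ℚ) - ((-(v*b) : ℤ):ℚ)) / ((q:ℤ):ℚ))⌋ := by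
    apply Int.floor_le_floor
    push_cast
    gcongr
    positivity
  rw [max_eq_left (by linarith)] at hc
  have hc' : (c:ℚ) = ((⌊((((N:ℤ):ℚ) - ((-(v*b) : ℤ):ℚ)) / ((q:ℤ):ℚ))⌋ : ℤ) : ℚ) - ((⌊((((0:ℤ):ℚ) - ((-(v*b) : ℤ):ℚ)) / ((q:ℤ):ℚ))⌋ : ℤ) : ℚ) := by
    exact_mod_cast hc
  have hsub : ((((N:ℤ):ℚ) - ((-(v*b) : ℤ):ℚ)) / ((q:ℤ):ℚ)) - ((((0:ℤ):ℚ) - ((-(v*b) : ℤ):ℚ)) / ((q:ℤ):ℚ)) = (N:ℚ)/q := by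
    push_cast; ring
  have : |(c:ℚ) - (N:ℚ)/q| ≤ 1 := by
    rw [hc', ← hsub, abs_le]
    constructor <;> linarith
  have h5 : ((|(c:ℚ) - (N:ℚ)/q| : ℚ) : ℝ) ≤ ((1:ℚ):ℝ) := Rat.cast_le.mpr this
  push_cast at h5
  exact h5

lemma bt_moeb (e f : ℕ) (he : 0 < e) :
    (∑ d ∈ e.divisors, if f ∣ d then ((ArithmeticFunction.moebius (e / d) : ℤ) : ℝ) else 0)
      = if f = e then 1 else 0 := by
  by_cases hfe : f ∣ e
  · obtain ⟨k, rfl⟩ := hfe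
    have hf : 0 < f := Nat.pos_of_mul_pos_right he |> fun h => by
      rcases Nat.eq_zero_or_pos f with h | h
      · simp [h] at he
      · exact h
    have hk : 0 < k := by
      rcases Nat.eq_zero_or_pos k with h | h
      · simp [h] at he
      · exact h
    have h1 := Nat.sum_div_divisors (f*k) (fun d => if f ∣ (f*k)/d then ((ArithmeticFunction.moebius d : ℤ) : ℝ) else 0)
    have h2 : (∑ d ∈ (f*k).divisors, if f ∣ d then ((ArithmeticFunction.moebius (f*k / d) : ℤ) : ℝ) else 0)
       = ∑ d ∈ (f*k).divisors, (fun d => if f ∣ (f*k)/d then ((ArithmeticFunction.moebius d : ℤ) : ℝ) else 0) ((f*k)/d) := by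
      apply Finset.sum_congr rfl
      intro d hd
      have hd' := Nat.dvd_of_mem_divisors hd
      simp only
      rw [Nat.div_div_self hd' he.ne']
    rw [h2, h1, ← Finset.sum_filter]
    have h3 : (f*k).divisors.filter (fun d => f ∣ (f*k)/d) = k.divisors := by
      ext d
      simp only [Finset.mem_filter, Nat.mem_divisors]
      constructor
      · rintro ⟨⟨⟨t, ht⟩, h0⟩, h⟩
        have hdpos : 0 < d := Nat.pos_of_ne_zero (by rintro rfl; simp at ht; omega)
        rw [ht, Nat.mul_div_cancel_left _ hdpos] at h
        obtain ⟨s, rfl⟩ := h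
        refine ⟨⟨s, ?_⟩, hk.ne'⟩
        apply Nat.eq_of_mul_eq_mul_left hf
        rw [ht]; ring
      · rintro ⟨⟨s, rfl⟩, _⟩
        have hdpos : 0 < d := Nat.pos_of_ne_zero (by rintro rfl; simp at hk)
        refine ⟨⟨⟨f*s, by ring⟩, he.ne'⟩, ?_⟩
        rw [show f*(d*s) = d*(f*s) by ring, Nat.mul_div_cancel_left _ hdpos]
        exact dvd_mul_right _ _
    rw [h3]
    have h4 : (∑ d ∈ k.divisors, (ArithmeticFunction.moebius d : ℤ)) = if k = 1 then 1 else 0 := by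
      rw [← ArithmeticFunction.coe_mul_zeta_apply, ArithmeticFunction.moebius_mul_coe_zeta, ArithmeticFunction.one_apply]
    have h5 : (∑ d ∈ k.divisors, ((ArithmeticFunction.moebius d : ℤ):ℝ)) = if k = 1 then 1 else 0 := by
      exact_mod_cast congrArg (fun t : ℤ => (t:ℝ)) h4
    rw [h5]
    have : f = f * k ↔ k = 1 := by
      constructor
      · intro h; apply Nat.eq_of_mul_eq_mul_left hf; omega
      · rintro rfl; simp
    simp [this]
  · have : f ≠ e := by rintro rfl; exact hfe dvd_rfl
    rw [if_neg this]
    apply Finset.sum_eq_zero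
    intro d hd
    rw [if_neg]
    intro h
    exact hfe (h.trans (Nat.dvd_of_mem_divisors hd))

lemma bt_orth (e₁ e₂ : ℕ) (h₁ : 0 < e₁) (h₂ : 0 < e₂) :
    (∑ d₁ ∈ e₁.divisors, ∑ d₂ ∈ e₂.divisors,
      (((ArithmeticFunction.moebius (e₁ / d₁) : ℤ) : ℝ) * d₁) *
      (((ArithmeticFunction.moebius (e₂ / d₂) : ℤ) : ℝ) * d₂) / (Nat.lcm d₁ d₂ : ℕ))
      = if e₁ = e₂ then (Nat.totient e₁ : ℝ) else 0 := by
  have key : ∀ d₁ ∈ e₁.divisors, ∀ d₂ ∈ e₂.divisors,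
      (((ArithmeticFunction.moebius (e₁ / d₁) : ℤ) : ℝ) * d₁) *
      (((ArithmeticFunction.moebius (e₂ / d₂) : ℤ) : ℝ) * d₂) / (Nat.lcm d₁ d₂ : ℕ)
      = ∑ f ∈ e₁.divisors, (Nat.totient f : ℝ) *
        (if f ∣ d₁ then ((ArithmeticFunction.moebius (e₁ / d₁) : ℤ) : ℝ) else 0) *
        (if f ∣ d₂ then ((ArithmeticFunction.moebius (e₂ / d₂) : ℤ) : ℝ) else 0) := by
    intro d₁ hd₁ d₂ hd₂
    have p1 : 0 < d₁ := Nat.pos_of_mem_divisors hd₁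
    have p2 : 0 < d₂ := Nat.pos_of_mem_divisors hd₂
    have pl : (0:ℝ) < (Nat.lcm d₁ d₂ : ℕ) := by exact_mod_cast Nat.lcm_pos p1 p2
    have hg : ((Nat.gcd d₁ d₂ : ℕ) : ℝ) * (Nat.lcm d₁ d₂ : ℕ) = d₁ * d₂ := by
      exact_mod_cast Nat.gcd_mul_lcm d₁ d₂
    have hs : ((Nat.gcd d₁ d₂ : ℕ) : ℝ) = ∑ f ∈ e₁.divisors, if f ∣ d₁ ∧ f ∣ d₂ then (Nat.totient f : ℝ) else 0 := by
      rw [← Finset.sum_filter]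
      have : e₁.divisors.filter (fun f => f ∣ d₁ ∧ f ∣ d₂) = (Nat.gcd d₁ d₂).divisors := by
        ext f
        simp only [Finset.mem_filter, Nat.mem_divisors, Nat.dvd_gcd_iff]
        constructor
        · rintro ⟨_, h⟩
          exact ⟨h, (Nat.gcd_pos_of_pos_left _ p1).ne'⟩
        · rintro ⟨h, _⟩
          exact ⟨⟨h.1.trans (Nat.dvd_of_mem_divisors hd₁), h₁.ne'⟩, h⟩
      rw [this]
      exact_mod_cast (Nat.sum_totient (Nat.gcd d₁ d₂)).symm
    have : (((ArithmeticFunction.moebius (e₁ / d₁) : ℤ) : ℝ) * d₁) *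
      (((ArithmeticFunction.moebius (e₂ / d₂) : ℤ) : ℝ) * d₂) / (Nat.lcm d₁ d₂ : ℕ)
      = ((ArithmeticFunction.moebius (e₁ / d₁) : ℤ) : ℝ) * ((ArithmeticFunction.moebius (e₂ / d₂) : ℤ) : ℝ) * ((Nat.gcd d₁ d₂ : ℕ) : ℝ) := by
      rw [div_eq_iff pl.ne']
      linear_combination (-((ArithmeticFunction.moebius (e₁ / d₁) : ℤ) : ℝ) * ((ArithmeticFunction.moebius (e₂ / d₂) : ℤ) : ℝ)) * hg
    rw [this, hs, Finset.mul_sum]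
    apply Finset.sum_congr rfl
    intro f _
    by_cases c1 : f ∣ d₁ <;> by_cases c2 : f ∣ d₂ <;> simp [c1, c2]
    ring
  rw [Finset.sum_congr rfl (fun d₁ h => Finset.sum_congr rfl (key d₁ h))]
  have sw : (∑ d₁ ∈ e₁.divisors, ∑ d₂ ∈ e₂.divisors, ∑ f ∈ e₁.divisors, (Nat.totient f : ℝ) *
        (if f ∣ d₁ then ((ArithmeticFunction.moebius (e₁ / d₁) : ℤ) : ℝ) else 0) *
        (if f ∣ d₂ then ((ArithmeticFunction.moebius (e₂ / d₂) : ℤ) : ℝ) else 0))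
      = ∑ f ∈ e₁.divisors, (Nat.totient f : ℝ) *
        (∑ d₁ ∈ e₁.divisors, if f ∣ d₁ then ((ArithmeticFunction.moebius (e₁ / d₁) : ℤ) : ℝ) else 0) *
        (∑ d₂ ∈ e₂.divisors, if f ∣ d₂ then ((ArithmeticFunction.moebius (e₂ / d₂) : ℤ) : ℝ) else 0) := by
    rw [Finset.sum_congr rfl (fun d₁ _ => Finset.sum_comm), Finset.sum_comm]
    apply Finset.sum_congr rfl
    intro f _
    rw [mul_assoc, Finset.sum_mul_sum, Finset.mul_sum]
    apply Finset.sum_congr rfl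
    intro d₁ _
    rw [Finset.mul_sum]
    apply Finset.sum_congr rfl
    intro d₂ _
    ring
  rw [sw]
  simp only [bt_moeb _ _ h₁, bt_moeb _ _ h₂]
  rw [Finset.sum_eq_single e₁]
  · simp
  · intro f _ hf; simp [hf]
  · intro h; simp [h₁.ne'] at h

lemma bt_sieve (r : ℕ) (b : ℤ) (N z : ℕ) (D : Finset ℕ)
    (hD : ∀ e ∈ D, 0 < e ∧ e ≤ z ∧ Nat.Coprime e r) (B : Finset ℤ) (hB : B ⊆ Finset.Ioc (0:ℤ) N)
    (hcop : ∀ n ∈ B, ∀ e ∈ D, ∀ d : ℕ, d ∣ e → (d:ℤ) ∣ r * n + b → d = 1) :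
    (B.card : ℝ) * (∑ e ∈ D, ((ArithmeticFunction.moebius e : ℤ) : ℝ)^2 / (Nat.totient e : ℝ))^2
      ≤ N * (∑ e ∈ D, ((ArithmeticFunction.moebius e : ℤ) : ℝ)^2 / (Nat.totient e : ℝ)) + (z:ℝ)^6 := by
  set S := ∑ e ∈ D, ((ArithmeticFunction.moebius e : ℤ) : ℝ)^2 / (Nat.totient e : ℝ) with hS
  set T : Finset (Σ _ : ℕ, ℕ) := D.sigma (fun e => e.divisors) with hT
  set w : (Σ _ : ℕ, ℕ) → ℝ := fun t => ((ArithmeticFunction.moebius t.1 : ℤ) : ℝ) / (Nat.totient t.1 : ℝ) *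
    (((ArithmeticFunction.moebius (t.1 / t.2) : ℤ) : ℝ) * t.2) with hw
  set F : ℤ → ℝ := fun n => ∑ t ∈ T, w t * (if (t.2 : ℤ) ∣ r * n + b then 1 else 0) with hF
  have hmu : ∀ n : ℕ, |((ArithmeticFunction.moebius n : ℤ) : ℝ)| ≤ 1 := by
    intro n
    have := ArithmeticFunction.abs_moebius_le_one (n := n)
    exact_mod_cast this
  have hFB : ∀ n ∈ B, F n = S := by
    intro n hn
    simp only [hF, hT, hS, Finset.sum_sigma]
    apply Finset.sum_congr rfl
    intro e he
    rw [Finset.sum_eq_single 1]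
    · simp [hw]; ring
    · intro d hd hd1
      rw [if_neg, mul_zero]
      intro hdiv
      exact hd1 (hcop n hn e he d (Nat.dvd_of_mem_divisors hd) hdiv)
    · intro h
      exact absurd (Nat.one_mem_divisors.mpr (hD e he).1.ne') h
  have h1 : (B.card : ℝ) * S^2 ≤ ∑ n ∈ Finset.Ioc (0:ℤ) N, (F n)^2 := by
    calc (B.card : ℝ) * S^2 = ∑ n ∈ B, (F n)^2 := by
          rw [Finset.sum_congr rfl (fun n hn => by rw [hFB n hn])]; simp
      _ ≤ _ := Finset.sum_le_sum_of_subset_of_nonneg hB (fun _ _ _ => sq_nonneg _)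
  have h2 : ∑ n ∈ Finset.Ioc (0:ℤ) N, (F n)^2 = ∑ t ∈ T, ∑ s ∈ T, w t * w s *
      ((((Finset.Ioc (0:ℤ) N).filter (fun n => ((Nat.lcm t.2 s.2 : ℕ):ℤ) ∣ r * n + b)).card : ℕ) : ℝ) := by
    have : ∀ n, (F n)^2 = ∑ t ∈ T, ∑ s ∈ T, w t * w s * (if ((Nat.lcm t.2 s.2 : ℕ):ℤ) ∣ r * n + b then 1 else 0) := by
      intro n
      rw [sq, hF, Finset.sum_mul_sum]
      apply Finset.sum_congr rfl; intro t _
      apply Finset.sum_congr rfl; intro s _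
      have : ((Nat.lcm t.2 s.2 : ℕ):ℤ) ∣ r * n + b ↔ ((t.2:ℤ) ∣ r * n + b ∧ (s.2:ℤ) ∣ r * n + b) := by
        simp only [Int.natCast_dvd, Nat.lcm_dvd_iff]
      by_cases c1 : (t.2:ℤ) ∣ r * n + b <;> by_cases c2 : (s.2:ℤ) ∣ r * n + b <;> simp [this, c1, c2]
    simp only [this]
    rw [Finset.sum_comm]
    apply Finset.sum_congr rfl; intro t _
    rw [Finset.sum_comm]
    apply Finset.sum_congr rfl; intro s _
    rw [← Finset.mul_sum]
    simp
  have hTpos : ∀ t ∈ T, 0 < t.1 ∧ 0 < t.2 ∧ t.1 ≤ z ∧ t.2 ≤ z ∧ Nat.Coprime t.2 r := by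
    intro t ht
    rw [hT, Finset.mem_sigma] at ht
    have a := hD _ ht.1
    have d := Nat.dvd_of_mem_divisors ht.2
    exact ⟨a.1, Nat.pos_of_mem_divisors ht.2, a.2.1, (Nat.le_of_dvd a.1 d).trans a.2.1, a.2.2.coprime_dvd_left d⟩
  have hwb : ∀ t ∈ T, |w t| ≤ z := by
    intro t ht
    obtain ⟨a1, a2, a3, a4, a5⟩ := hTpos t ht
    have hphi : (1:ℝ) ≤ Nat.totient t.1 := by exact_mod_cast Nat.totient_pos.mpr a1
    simp only [hw]
    rw [abs_mul, abs_mul, abs_div, Nat.abs_cast, Nat.abs_cast]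
    have b1 : |((ArithmeticFunction.moebius t.1 : ℤ) : ℝ)| / (Nat.totient t.1 : ℝ) ≤ 1 := by
      rw [div_le_one (by linarith)]; exact (hmu _).trans hphi
    have b2 : |((ArithmeticFunction.moebius (t.1/t.2) : ℤ) : ℝ)| * (t.2:ℝ) ≤ 1 * z := by
      gcongr
      exact hmu _
    calc _ ≤ 1 * (1 * (z:ℝ)) := by gcongr
      _ = z := by ring
  have h3 : ∑ t ∈ T, ∑ s ∈ T, w t * w s *
      ((((Finset.Ioc (0:ℤ) N).filter (fun n => ((Nat.lcm t.2 s.2 : ℕ):ℤ) ∣ r * n + b)).card : ℕ) : ℝ)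
      ≤ ∑ t ∈ T, ∑ s ∈ T, (w t * w s * ((N:ℝ) / (Nat.lcm t.2 s.2 : ℕ)) + (z:ℝ)*z) := by
    apply Finset.sum_le_sum; intro t ht
    apply Finset.sum_le_sum; intro s hs
    obtain ⟨a1, a2, a3, a4, a5⟩ := hTpos t ht
    obtain ⟨b1, b2, b3, b4, b5⟩ := hTpos s hs
    have hc := bt_count r b N (Nat.lcm t.2 s.2) (Nat.lcm_pos a2 b2)
      (Nat.Coprime.coprime_dvd_left (Nat.lcm_dvd_mul _ _) (Nat.Coprime.mul_left a5 b5))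
    set c := ((((Finset.Ioc (0:ℤ) N).filter (fun n => ((Nat.lcm t.2 s.2 : ℕ):ℤ) ∣ r * n + b)).card : ℕ) : ℝ)
    have : w t * w s * (c - (N:ℝ) / (Nat.lcm t.2 s.2 : ℕ)) ≤ z * z * 1 := by
      refine (le_abs_self _).trans ?_
      rw [abs_mul, abs_mul]
      have := hwb t ht
      have := hwb s hs
      gcongr
    linarith
  have hTcard : (T.card : ℝ) ≤ (z:ℝ)^2 := by
    have : T.card ≤ z^2 := by
      have hsub : T ⊆ (Finset.Icc 1 z).sigma (fun _ => Finset.Icc 1 z) := by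
        intro t ht
        obtain ⟨a1, a2, a3, a4, a5⟩ := hTpos t ht
        simp only [Finset.mem_sigma, Finset.mem_Icc]; omega
      have := Finset.card_le_card hsub
      simpa [sq] using this
    exact_mod_cast this
  have h4 : ∑ t ∈ T, ∑ s ∈ T, w t * w s * ((N:ℝ) / (Nat.lcm t.2 s.2 : ℕ)) = N * S := by
    simp only [hT, Finset.sum_sigma]
    have : ∀ e₁ ∈ D, (∑ d₁ ∈ e₁.divisors, ∑ e₂ ∈ D, ∑ d₂ ∈ e₂.divisors,
        w ⟨e₁, d₁⟩ * w ⟨e₂, d₂⟩ * ((N:ℝ) / (Nat.lcm d₁ d₂ : ℕ)))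
        = N * (((ArithmeticFunction.moebius e₁ : ℤ) : ℝ)^2 / (Nat.totient e₁ : ℝ)) := by
      intro e₁ he₁
      rw [Finset.sum_comm]
      have : ∀ e₂ ∈ D, (∑ d₁ ∈ e₁.divisors, ∑ d₂ ∈ e₂.divisors,
        w ⟨e₁, d₁⟩ * w ⟨e₂, d₂⟩ * ((N:ℝ) / (Nat.lcm d₁ d₂ : ℕ)))
          = N * (((ArithmeticFunction.moebius e₁ : ℤ) : ℝ) / (Nat.totient e₁ : ℝ))
             * (((ArithmeticFunction.moebius e₂ : ℤ) : ℝ) / (Nat.totient e₂ : ℝ)) *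
             (if e₁ = e₂ then (Nat.totient e₁ : ℝ) else 0) := by
        intro e₂ he₂
        rw [← bt_orth e₁ e₂ (hD _ he₁).1 (hD _ he₂).1, Finset.mul_sum]
        apply Finset.sum_congr rfl; intro d₁ _
        rw [Finset.mul_sum]
        apply Finset.sum_congr rfl; intro d₂ _
        simp only [hw]
        ring
      rw [Finset.sum_congr rfl this, Finset.sum_eq_single e₁]
      · have hphi : (0:ℝ) < Nat.totient e₁ := by exact_mod_cast Nat.totient_pos.mpr (hD _ he₁).1
        simp only [if_true]
        field_simp
      · intro e₂ _ h
        rw [if_neg (Ne.symm h), mul_zero]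
      · intro h; exact absurd he₁ h
    rw [Finset.sum_congr rfl this, ← Finset.mul_sum]
  have h5 : ∑ t ∈ T, ∑ s ∈ T, (w t * w s * ((N:ℝ) / (Nat.lcm t.2 s.2 : ℕ)) + (z:ℝ)*z)
      = N * S + (T.card:ℝ)^2 * (z:ℝ)^2 := by
    simp only [Finset.sum_add_distrib]
    rw [h4]; simp; ring
  have h6 : (T.card:ℝ)^2 * (z:ℝ)^2 ≤ (z:ℝ)^6 := by
    calc (T.card:ℝ)^2 * (z:ℝ)^2 ≤ ((z:ℝ)^2)^2 * (z:ℝ)^2 := by gcongr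
      _ = _ := by ring
  linarith

lemma bt_inv_sq (z : ℕ) : ∑ b ∈ Finset.Icc 1 z, (1:ℝ) / (b:ℝ)^2 ≤ 2 := by
  have : ∀ z : ℕ, ∑ b ∈ Finset.Icc 1 (z+1), (1:ℝ) / (b:ℝ)^2 ≤ 2 - 1 / ((z:ℝ)+1) := by
    intro z
    induction z with
    | zero => norm_num
    | succ k ih =>
      rw [Finset.sum_Icc_succ_top (by omega)]
      have : (1:ℝ) / ((k+1+1 : ℕ):ℝ)^2 ≤ 1 / ((k:ℝ)+1) - 1 / (((k+1:ℕ):ℝ)+1) := by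
        push_cast
        have hk : (0:ℝ) < (k:ℝ)+1 := by positivity
        rw [div_sub_div _ _ (by positivity) (by positivity), div_le_div_iff₀ (by positivity) (by positivity)]
        nlinarith
      linarith
  rcases z with _ | z
  · simp
  · have h := this z
    have : (0:ℝ) ≤ 1 / ((z:ℝ)+1) := by positivity
    linarith

lemma bt_S (r z : ℕ) (hr : r.Prime) :
    Real.log ((z:ℝ)+1) / 4 ≤ ∑ e ∈ (Finset.Icc 1 z).filter (fun e => Nat.Coprime e r),
      ((ArithmeticFunction.moebius e : ℤ) : ℝ)^2 / (Nat.totient e : ℝ) := by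
  set D := (Finset.Icc 1 z).filter (fun e => Nat.Coprime e r) with hD
  set Q := D.filter Squarefree with hQ
  have memD : ∀ e, e ∈ D ↔ (1 ≤ e ∧ e ≤ z) ∧ Nat.Coprime e r := by
    intro e; simp [hD]
  have hH : Real.log ((z:ℝ)+1) ≤ ∑ n ∈ Finset.Icc 1 z, (1:ℝ)/n := by
    have := log_add_one_le_harmonic z
    rw [harmonic_eq_sum_Icc] at this
    push_cast at this
    simpa [one_div] using this
  have h1 : ∑ n ∈ Finset.Icc 1 z, (1:ℝ)/n ≤ 2 * ∑ n ∈ D, (1:ℝ)/n := by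
    have h4 := Finset.sum_filter_add_sum_filter_not (Finset.Icc 1 z) (fun e => Nat.Coprime e r) (fun n : ℕ => (1:ℝ)/n)
    have h2 : ∑ n ∈ (Finset.Icc 1 z).filter (fun e => ¬ Nat.Coprime e r), (1:ℝ)/n
        ≤ ∑ k ∈ Finset.Icc 1 z, (1:ℝ)/((r*k : ℕ)) := by
      calc _ ≤ ∑ n ∈ (Finset.Icc 1 z).image (fun k => r*k), (1:ℝ)/n := by
            apply Finset.sum_le_sum_of_subset_of_nonneg
            · intro n hn
              simp only [Finset.mem_filter, Finset.mem_Icc] at hn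
              rw [Nat.coprime_comm, hr.coprime_iff_not_dvd, not_not] at hn
              obtain ⟨⟨a, b⟩, k, rfl⟩ := hn
              rw [Finset.mem_image]
              refine ⟨k, ?_, rfl⟩
              rw [Finset.mem_Icc]
              have : 0 < k := Nat.pos_of_ne_zero (by rintro rfl; simp at a)
              have := hr.pos
              constructor
              · omega
              · nlinarith
            · intros; positivity
        _ = _ := by
            rw [Finset.sum_image]
            intro a _ b _ h
            exact Nat.eq_of_mul_eq_mul_left hr.pos h
    have h3 : ∑ k ∈ Finset.Icc 1 z, (1:ℝ)/((r*k : ℕ)) ≤ ∑ k ∈ Finset.Icc 1 z, (1/2) * ((1:ℝ)/k) := by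
      apply Finset.sum_le_sum
      intro k hk
      have hk : (0:ℝ) < k := by exact_mod_cast (Finset.mem_Icc.mp hk).1
      have hr2 : (2:ℝ) ≤ r := by exact_mod_cast hr.two_le
      push_cast
      rw [div_mul_div_comm, one_mul]
      gcongr
    rw [← Finset.mul_sum] at h3
    change _ ≤ 2 * ∑ n ∈ (Finset.Icc 1 z).filter (fun e => Nat.Coprime e r), (1:ℝ)/n
    linarith
  have h2 : ∑ n ∈ D, (1:ℝ)/n ≤ (∑ a ∈ Q, (1:ℝ)/a) * 2 := by
    calc ∑ n ∈ D, (1:ℝ)/n ≤ ∑ n ∈ (Q ×ˢ Finset.Icc 1 z).image (fun t : ℕ × ℕ => (t.2^2*t.1 : ℕ)), (1:ℝ)/(n:ℕ) := by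
          apply Finset.sum_le_sum_of_subset_of_nonneg
          · intro n hn
            obtain ⟨a, b, rfl, hsq⟩ := Nat.sq_mul_squarefree n
            rw [memD] at hn
            obtain ⟨⟨h1, h2⟩, h3⟩ := hn
            rw [Finset.mem_image]
            refine ⟨(a, b), ?_, rfl⟩
            have ha : 0 < a := Nat.pos_of_ne_zero (by rintro rfl; simp at h1)
            have hb : 0 < b := Nat.pos_of_ne_zero (by rintro rfl; simp at h1)
            rw [Finset.mem_product, hQ, Finset.mem_filter, memD, Finset.mem_Icc]
            refine ⟨⟨⟨⟨ha, ?_⟩, h3.coprime_dvd_left (dvd_mul_left _ _)⟩, hsq⟩, hb, ?_⟩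
            · show a ≤ z
              nlinarith [pow_pos hb 2]
            · show b ≤ z
              nlinarith [pow_pos hb 2, Nat.le_mul_of_pos_right (b^2) ha]
          · intros; positivity
      _ ≤ ∑ t ∈ Q ×ˢ Finset.Icc 1 z, (1:ℝ)/((t.2^2*t.1 : ℕ)) := by
          apply Finset.sum_image_le_of_nonneg (f := fun n : ℕ => (1:ℝ)/n)
          intros; positivity
      _ = (∑ a ∈ Q, (1:ℝ)/a) * (∑ b ∈ Finset.Icc 1 z, (1:ℝ)/(b:ℝ)^2) := by
          rw [Finset.sum_mul_sum, Finset.sum_product]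
          apply Finset.sum_congr rfl; intro a _
          apply Finset.sum_congr rfl; intro b _
          push_cast
          rw [div_mul_div_comm, one_mul, mul_comm]
      _ ≤ _ := by
          gcongr
          exact bt_inv_sq z
  have h3 : ∑ a ∈ Q, (1:ℝ)/a ≤ ∑ e ∈ D, ((ArithmeticFunction.moebius e : ℤ) : ℝ)^2 / (Nat.totient e : ℝ) := by
    calc ∑ a ∈ Q, (1:ℝ)/a ≤ ∑ e ∈ Q, ((ArithmeticFunction.moebius e : ℤ) : ℝ)^2 / (Nat.totient e : ℝ) := by
          apply Finset.sum_le_sum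
          intro e he
          rw [hQ, Finset.mem_filter, memD] at he
          have hm : ((ArithmeticFunction.moebius e : ℤ) : ℝ)^2 = 1 := by
            exact_mod_cast ArithmeticFunction.moebius_sq_eq_one_of_squarefree he.2
          have hp : (0:ℝ) < Nat.totient e := by exact_mod_cast Nat.totient_pos.mpr he.1.1.1
          rw [hm]
          gcongr
          exact Nat.totient_le e
      _ ≤ _ := by
          apply Finset.sum_le_sum_of_subset_of_nonneg (Finset.filter_subset _ _)
          intros; positivity
  linarith

lemma bt_AP (r : ℕ) (hr : r.Prime) (b : ℤ) (N z : ℕ) (hz : 1 ≤ z) (B : Finset ℤ)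
    (hB : B ⊆ Finset.Ioc (0:ℤ) N)
    (hp : ∀ n ∈ B, ∃ p : ℕ, p.Prime ∧ z < p ∧ (r:ℤ) * n + b = p) :
    (B.card : ℝ) ≤ 4 * N / Real.log ((z:ℝ)+1) + (z:ℝ)^6 := by
  have h0 := bt_S r z hr
  have h1 := bt_sieve r b N z ((Finset.Icc 1 z).filter (fun e => Nat.Coprime e r))
    (by intro e he; simp only [Finset.mem_filter, Finset.mem_Icc] at he; exact ⟨he.1.1, he.1.2, he.2⟩) B hB (by
      intro n hn e he d hde hd
      obtain ⟨p, hp, hzp, e1⟩ := hp n hn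
      simp only [Finset.mem_filter, Finset.mem_Icc] at he
      rw [e1] at hd
      have hd' : d ∣ p := by exact_mod_cast hd
      rcases (Nat.dvd_prime hp).mp hd' with h | h
      · exact h
      · have := Nat.le_of_dvd he.1.1 hde
        omega)
  have hS1 : 1 ≤ ∑ e ∈ (Finset.Icc 1 z).filter (fun e => Nat.Coprime e r),
      ((ArithmeticFunction.moebius e : ℤ) : ℝ)^2 / (Nat.totient e : ℝ) := by
    have := Finset.single_le_sum (s := (Finset.Icc 1 z).filter (fun e => Nat.Coprime e r))
      (f := fun e => ((ArithmeticFunction.moebius e : ℤ) : ℝ)^2 / (Nat.totient e : ℝ))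
      (fun i _ => by positivity) (a := 1) (by simp [hz])
    simpa using this
  set S := ∑ e ∈ (Finset.Icc 1 z).filter (fun e => Nat.Coprime e r),
      ((ArithmeticFunction.moebius e : ℤ) : ℝ)^2 / (Nat.totient e : ℝ)
  have hz' : (1:ℝ) ≤ z := by exact_mod_cast hz
  have hl : 0 < Real.log ((z:ℝ)+1) := Real.log_pos (by linarith)
  have h2 : (B.card : ℝ) ≤ N / S + (z:ℝ)^6 / S^2 := by
    have hS : 0 < S := by linarith
    have : (N / S + (z:ℝ)^6 / S^2) * S^2 = N * S + (z:ℝ)^6 := by field_simp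
    rw [← this] at h1
    exact le_of_mul_le_mul_right h1 (by positivity)
  have h3 : (N:ℝ) / S ≤ 4 * N / Real.log ((z:ℝ)+1) := by
    rw [div_le_div_iff₀ (by linarith) hl]
    have : (0:ℝ) ≤ N := by positivity
    nlinarith
  have h4 : (z:ℝ)^6 / S^2 ≤ (z:ℝ)^6 := by
    apply div_le_self (by positivity)
    nlinarith
  linarith

/-- Primes `p ≤ X` with `p ≡ b mod r`. -/
def btA (r : ℕ) (b : ℤ) (X : ℕ) : Finset ℕ :=
  (Finset.range (X+1)).filter (fun p => p.Prime ∧ (r:ℤ) ∣ (p:ℤ) - b)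

lemma bt_map (r : ℕ) (hr : r.Prime) (b : ℤ) (hb : b = 1 ∨ b = -1) (X p : ℕ) (hp : p ∈ btA r b X) :
    ((p:ℤ) - b) / r ∈ Finset.Ioc (0:ℤ) ((X+1)/r : ℕ) ∧ (r:ℤ) * (((p:ℤ) - b) / r) + b = p := by
  simp only [btA, Finset.mem_filter, Finset.mem_range] at hp
  obtain ⟨h1, h2, k, hk⟩ := hp
  have hr0 : (0:ℤ) < r := by exact_mod_cast hr.pos
  have h2' := h2.two_le
  rw [hk, Int.mul_ediv_cancel_left _ hr0.ne']
  refine ⟨?_, by linarith⟩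
  rw [Finset.mem_Ioc]
  constructor
  · by_contra h
    push Not at h
    have : (p:ℤ) - b ≤ 0 := by rw [hk]; nlinarith
    rcases hb with rfl | rfl <;> omega
  · push_cast
    rw [Int.le_ediv_iff_mul_le hr0, mul_comm, ← hk]
    rcases hb with rfl | rfl <;> omega

lemma bt_triv (r : ℕ) (hr : r.Prime) (b : ℤ) (hb : b = 1 ∨ b = -1) (X : ℕ) :
    ((btA r b X).card : ℝ) ≤ ((X:ℝ)+1)/r := by
  have h := Finset.card_le_card_of_injOn (s := btA r b X) (t := Finset.Ioc (0:ℤ) ((X+1)/r : ℕ))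
    (fun p => ((p:ℤ) - b) / r) (fun p hp => (bt_map r hr b hb X p hp).1) (by
      intro p hp q hq h
      have e1 := (bt_map r hr b hb X p hp).2
      have e2 := (bt_map r hr b hb X q hq).2
      simp only at h
      rw [h] at e1
      exact_mod_cast e1.symm.trans e2)
  rw [Int.card_Ioc, sub_zero, Int.toNat_natCast] at h
  have h' : (btA r b X).card ≤ (X+1)/r := h
  calc ((btA r b X).card : ℝ) ≤ (((X+1)/r : ℕ) : ℝ) := by exact_mod_cast h'
    _ ≤ _ := by
      refine Nat.cast_div_le.trans ?_
      push_cast; rfl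

lemma bt_main (r : ℕ) (hr : r.Prime) (b : ℤ) (hb : b = 1 ∨ b = -1) (X z : ℕ) (hz : 1 ≤ z) :
    ((btA r b X).card : ℝ) ≤ z + (4 * (((X:ℝ)+1)/r) / Real.log ((z:ℝ)+1) + (z:ℝ)^6) := by
  set P := (btA r b X).filter (fun p => z < p)
  set B := P.image (fun p : ℕ => ((p:ℤ) - b) / r)
  have hinj : B.card = P.card := by
    apply Finset.card_image_of_injOn
    intro p hp q hq h
    have e1 := (bt_map r hr b hb X p (Finset.mem_filter.mp hp).1).2
    have e2 := (bt_map r hr b hb X q (Finset.mem_filter.mp hq).1).2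
    simp only at h
    rw [h] at e1
    exact_mod_cast e1.symm.trans e2
  have h1 := bt_AP r hr b ((X+1)/r) z hz B (by
      intro n hn
      obtain ⟨p, hp, rfl⟩ := Finset.mem_image.mp hn
      exact (bt_map r hr b hb X p (Finset.mem_filter.mp hp).1).1) (by
      intro n hn
      obtain ⟨p, hp, rfl⟩ := Finset.mem_image.mp hn
      have hp' := Finset.mem_filter.mp hp
      have h2 := hp'.1
      simp only [btA, Finset.mem_filter] at h2
      exact ⟨p, h2.2.1, hp'.2, (bt_map r hr b hb X p hp'.1).2⟩)
  have hz' : (1:ℝ) ≤ z := by exact_mod_cast hz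
  have hl : 0 < Real.log ((z:ℝ)+1) := Real.log_pos (by linarith)
  have h2 : ((((X+1)/r : ℕ)) : ℝ) ≤ ((X:ℝ)+1)/r := by
    refine Nat.cast_div_le.trans ?_
    push_cast; rfl
  have h3 : ((btA r b X).card : ℝ) ≤ z + P.card := by
    have : (btA r b X).card ≤ z + P.card := by
      rw [← Finset.card_filter_add_card_filter_not (s := btA r b X) (fun p => z < p), add_comm]
      apply Nat.add_le_add_right
      have : (btA r b X).filter (fun p => ¬ z < p) ⊆ Finset.Icc 1 z := by
        intro p hp
        simp only [btA, Finset.mem_filter] at hp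
        have := hp.1.2.1.two_le
        rw [Finset.mem_Icc]; omega
      simpa using Finset.card_le_card this
    exact_mod_cast this
  rw [← hinj] at h3
  have h4 : 4 * ((((X+1)/r : ℕ)) : ℝ) / Real.log ((z:ℝ)+1) ≤ 4 * (((X:ℝ)+1)/r) / Real.log ((z:ℝ)+1) := by
    gcongr
  linarith

lemma pr_theta_succ (M : ℕ) : Chebyshev.theta ((M+1 : ℕ):ℝ) =
    Chebyshev.theta (M:ℝ) + if (M+1).Prime then Real.log ((M+1 : ℕ):ℝ) else 0 := by
  simp only [Chebyshev.theta, Nat.floor_natCast, Finset.sum_filter]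
  rw [← Finset.insert_Ioc_right_eq_Ioc_add_one (by omega : 0 ≤ M), Finset.sum_insert (by simp), add_comm]

lemma pr_sq (K : ℕ) (hK : 1 ≤ K) (M : ℕ) (hM : K ≤ M) :
    ∑ r ∈ (Finset.Ioc K M).filter Nat.Prime, Real.log r / (r:ℝ)^2 ≤ 2 * Real.log 4 / K := by
  have hc : 0 < Real.log 4 := Real.log_pos (by norm_num)
  have key : ∑ r ∈ (Finset.Ioc K M).filter Nat.Prime, Real.log r / (r:ℝ)^2
      ≤ Chebyshev.theta (M:ℝ) / (M:ℝ)^2 + 2 * Real.log 4 * (1/(K:ℝ) - 1/(M:ℝ)) := by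
    induction M, hM using Nat.le_induction with
    | base =>
      simp
      have := Chebyshev.theta_nonneg (K:ℝ)
      positivity
    | succ M hM ih =>
      rw [Finset.sum_filter, ← Finset.insert_Ioc_right_eq_Ioc_add_one (by omega : K ≤ M), Finset.sum_insert (by simp),
        ← Finset.sum_filter, pr_theta_succ]
      have hMp : (0:ℝ) < M := by exact_mod_cast (by omega : 0 < M)
      have hth := Chebyshev.theta_le_log4_mul_x hMp.le
      have e1 : (if (M+1).Prime then Real.log ((M+1 : ℕ):ℝ) / ((M+1 : ℕ):ℝ)^2 else 0)
         = (if (M+1).Prime then Real.log ((M+1 : ℕ):ℝ) else 0) / ((M+1 : ℕ):ℝ)^2 := by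
        split_ifs <;> simp
      rw [e1, add_div]
      have e2 : Chebyshev.theta (M:ℝ) / (M:ℝ)^2 - Chebyshev.theta (M:ℝ) / ((M+1 : ℕ):ℝ)^2
          ≤ 2 * Real.log 4 * (1/(M:ℝ) - 1/((M+1 : ℕ):ℝ)) := by
        push_cast
        have : Chebyshev.theta (M:ℝ) / (M:ℝ)^2 - Chebyshev.theta (M:ℝ) / ((M:ℝ)+1)^2
          = Chebyshev.theta (M:ℝ) * ((2*M+1) / ((M:ℝ)^2 * ((M:ℝ)+1)^2)) := by
          field_simp; ring
        rw [this]
        have e3 : 2 * Real.log 4 * (1/(M:ℝ) - 1/((M:ℝ)+1)) = (Real.log 4 * M) * ((2*M+2) / ((M:ℝ)^2 * ((M:ℝ)+1)^2)) := by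
          field_simp; ring
        rw [e3]
        gcongr
        norm_num
      linarith
  have hMp : (0:ℝ) < M := by exact_mod_cast (by omega : 0 < M)
  have hth := Chebyshev.theta_le_log4_mul_x hMp.le
  have h2 : Chebyshev.theta (M:ℝ) / (M:ℝ)^2 ≤ Real.log 4 / M := by
    rw [div_le_div_iff₀ (by positivity) hMp]
    nlinarith
  have h3 : 0 ≤ Real.log 4 / M := by positivity
  have h4 : 2 * Real.log 4 * (1/(K:ℝ) - 1/(M:ℝ)) = 2 * Real.log 4 / K - 2 * (Real.log 4 / M) := by ring
  linarith

lemma pr_sum (y : ℝ) (hy : 2 ≤ y) (M : ℕ) :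
    ∑ r ∈ (Finset.range M).filter (fun r : ℕ => r.Prime ∧ y < (r:ℝ)), 1 / (r:ℝ)^2 ≤ 8 / (y * Real.log y) := by
  have hly : 0 < Real.log y := Real.log_pos (by linarith)
  have hK : 1 ≤ ⌊y⌋₊ := Nat.le_floor (by norm_num; linarith)
  have h1 := pr_sq ⌊y⌋₊ hK (⌊y⌋₊ + M) (by omega)
  have h2 : ∑ r ∈ (Finset.range M).filter (fun r : ℕ => r.Prime ∧ y < (r:ℝ)), 1 / (r:ℝ)^2
      ≤ ∑ r ∈ (Finset.range M).filter (fun r : ℕ => r.Prime ∧ y < (r:ℝ)), (1/Real.log y) * (Real.log r / (r:ℝ)^2) := by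
    apply Finset.sum_le_sum
    intro r hr
    simp only [Finset.mem_filter] at hr
    have : Real.log y ≤ Real.log r := Real.log_le_log (by linarith) hr.2.2.le
    rw [div_mul_div_comm, one_mul]
    have hr0 : (0:ℝ) < r := by linarith
    rw [div_le_div_iff₀ (by positivity) (by positivity)]
    have : 0 < (r:ℝ)^2 := by positivity
    nlinarith
  have h3 : ∑ r ∈ (Finset.range M).filter (fun r : ℕ => r.Prime ∧ y < (r:ℝ)), (Real.log r / (r:ℝ)^2)
     ≤ ∑ r ∈ (Finset.Ioc ⌊y⌋₊ (⌊y⌋₊ + M)).filter Nat.Prime, Real.log r / (r:ℝ)^2 := by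
    apply Finset.sum_le_sum_of_subset_of_nonneg
    · intro r hr
      simp only [Finset.mem_filter, Finset.mem_range, Finset.mem_Ioc] at hr ⊢
      have := (Nat.floor_lt (by linarith : 0 ≤ y)).mpr hr.2.2
      exact ⟨⟨this, by omega⟩, hr.2.1⟩
    · intros; positivity
  rw [← Finset.mul_sum] at h2
  have h4 : y / 2 ≤ (⌊y⌋₊:ℝ) := by
    have := Nat.lt_floor_add_one y
    linarith
  have h5 : Real.log 4 ≤ 2 := by
    have : Real.log 4 = 2 * Real.log 2 := by
      rw [show (4:ℝ) = 2^2 by norm_num, Real.log_pow]; norm_num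
    linarith [Real.log_two_lt_d9]
  have h6 : 2 * Real.log 4 / (⌊y⌋₊:ℝ) ≤ 8 / y := by
    calc 2 * Real.log 4 / (⌊y⌋₊:ℝ) ≤ 2 * 2 / (y/2) := by gcongr
      _ = 8 / y := by field_simp; norm_num
  calc _ ≤ _ := h2
    _ ≤ 1 / Real.log y * (8 / y) := by
      gcongr
      linarith
    _ = _ := by field_simp

lemma hy_rearrange (y : ℝ) (X : ℕ) (b : ℤ) (hb : b = 1 ∨ b = -1) (s : ℕ → ℕ)
    (hs : ∀ p : ℕ, p.Prime → (s p : ℤ) = p - b) :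
    ∑ p ∈ (Finset.range (X+1)).filter Nat.Prime, hy y (s p) ≤
      ∑ r ∈ (Finset.range (X+2)).filter (fun r : ℕ => r.Prime ∧ y < (r:ℝ)), (1:ℝ)/r * (btA r b X).card := by
  have h1 : ∀ p ∈ (Finset.range (X+1)).filter Nat.Prime, hy y (s p) ≤
      ∑ r ∈ (Finset.range (X+2)).filter (fun r : ℕ => r.Prime ∧ y < (r:ℝ)),
        if (r:ℤ) ∣ (p:ℤ) - b then (1:ℝ)/r else 0 := by
    intro p hp
    simp only [Finset.mem_filter, Finset.mem_range] at hp
    have hsp := hs p hp.2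
    have h2 := hp.2.two_le
    rw [← Finset.sum_filter, hy]
    apply Finset.sum_le_sum_of_subset_of_nonneg
    · intro r hr
      simp only [Finset.mem_filter, Nat.mem_primeFactors, Finset.mem_range] at hr ⊢
      obtain ⟨⟨a1, a2, a3⟩, a4⟩ := hr
      have := Nat.le_of_dvd (Nat.pos_of_ne_zero a3) a2
      refine ⟨⟨?_, a1, a4⟩, ?_⟩
      · rcases hb with rfl | rfl <;> omega
      · rw [← hsp]; exact_mod_cast a2
    · intros; positivity
  refine (Finset.sum_le_sum h1).trans ?_
  rw [Finset.sum_comm]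
  apply le_of_eq
  apply Finset.sum_congr rfl
  intro r _
  rw [← Finset.sum_filter, Finset.filter_filter, Finset.sum_const, nsmul_eq_mul, mul_comm]
  rfl

lemma hy_core (x : ℝ) (b : ℤ) (hb : b = 1 ∨ b = -1) (s : ℕ → ℕ)
    (hs : ∀ p : ℕ, p.Prime → (s p : ℤ) = p - b) (hx : 2 ≤ x)
    (hy3 : 3 ≤ Real.log (Real.log x)) (hL : 2 * Real.log x ^ 3 ≤ x ^ (3/4 : ℝ))
    (hpi : x / 2 ≤ (Nat.primeCounting ⌊x⌋₊ : ℝ) * Real.log x) :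
    ∑ p ∈ (Finset.range (⌊x⌋₊+1)).filter Nat.Prime, hy (Real.log (Real.log x)) (s p) ≤
      3104 * (Nat.primeCounting ⌊x⌋₊ : ℝ) / (Real.log (Real.log x) * Real.log (Real.log (Real.log x))) := by
  set L := Real.log x with hLdef
  set y := Real.log L with hydef
  have hx0 : 0 < x := by linarith
  have hL0 : 0 < L := Real.log_pos (by linarith)
  have hly : 0 < Real.log y := Real.log_pos (by linarith)
  have hlyy : Real.log y ≤ y := Real.log_le_self (by linarith)
  have hyL : y ≤ L := Real.log_le_self hL0.le
  have hX : (⌊x⌋₊ : ℝ) ≤ x := Nat.floor_le hx0.le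
  set z := ⌊x ^ (1/24 : ℝ)⌋₊ with hz
  have hz1 : 1 ≤ z := Nat.le_floor (by
    rw [Nat.cast_one]; exact Real.one_le_rpow (by linarith) (by norm_num))
  have hzle : (z:ℝ) ≤ x ^ (1/24 : ℝ) := Nat.floor_le (by positivity)
  have hz6 : (z:ℝ)^6 ≤ x ^ (1/4 : ℝ) := by
    calc (z:ℝ)^6 ≤ (x ^ (1/24 : ℝ))^6 := by gcongr
      _ = x ^ (1/4 : ℝ) := by
        rw [← Real.rpow_natCast, ← Real.rpow_mul hx0.le]; norm_num
  have hz' : (z:ℝ) ≤ x ^ (1/4 : ℝ) := by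
    refine le_trans ?_ hz6
    have : (1:ℝ) ≤ z := by exact_mod_cast hz1
    exact le_self_pow₀ this (by norm_num)
  have hlz : L / 24 ≤ Real.log ((z:ℝ)+1) := by
    calc L / 24 = Real.log (x ^ (1/24 : ℝ)) := by rw [Real.log_rpow hx0]; ring
      _ ≤ _ := Real.log_le_log (by positivity) (Nat.lt_floor_add_one _).le
  have hsmall : 2 * x ^ (1/4 : ℝ) ≤ x / L^3 := by
    rw [le_div_iff₀ (by positivity)]
    have : x ^ (1/4 : ℝ) * x ^ (3/4 : ℝ) = x := by
      rw [← Real.rpow_add hx0]; norm_num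
    have h0 : 0 < x ^ (1/4 : ℝ) := by positivity
    nlinarith
  have hterm : ∀ r : ℕ, r.Prime → (1:ℝ)/r * (btA r b ⌊x⌋₊).card ≤
      (193 * x / L) * (1/(r:ℝ)^2) + if L^2 < (r:ℝ) then (2*x) * (1/(r:ℝ)^2) else 0 := by
    intro r hr
    have hr0 : (0:ℝ) < r := by exact_mod_cast hr.pos
    split_ifs with h
    · have h1 := bt_triv r hr b hb ⌊x⌋₊
      have h2 : (1:ℝ)/r * (btA r b ⌊x⌋₊).card ≤ (1:ℝ)/r * ((2*x)/r) := by
        gcongr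
        refine h1.trans ?_
        gcongr
        linarith
      have h3 : (1:ℝ)/r * ((2*x)/r) = (2*x) * (1/(r:ℝ)^2) := by field_simp
      have h4 : 0 ≤ (193 * x / L) * (1/(r:ℝ)^2) := by positivity
      linarith
    · push Not at h
      have h1 := bt_main r hr b hb ⌊x⌋₊ z hz1
      have h2 : 4 * (((⌊x⌋₊:ℝ)+1)/r) / Real.log ((z:ℝ)+1) ≤ 4 * ((2*x)/r) / (L/24) := by
        gcongr
        linarith
      have h3 : 4 * ((2*x)/r) / (L/24) = 192 * x / L / r := by field_simp; norm_num
      have h4 : x / L^3 ≤ x / L / r := by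
        rw [div_div]
        gcongr
        calc L * r ≤ L * L^2 := by gcongr
          _ = L^3 := by ring
      have h5 : ((btA r b ⌊x⌋₊).card : ℝ) ≤ 193 * x / L / r := by
        have : 193 * x / L / r = 192 * x / L / r + x / L / r := by ring
        linarith
      calc (1:ℝ)/r * (btA r b ⌊x⌋₊).card ≤ (1:ℝ)/r * (193 * x / L / r) := by gcongr
        _ = _ := by field_simp; simp
  have hR := hy_rearrange y ⌊x⌋₊ b hb s hs
  have h1 : ∑ r ∈ (Finset.range (⌊x⌋₊+2)).filter (fun r : ℕ => r.Prime ∧ y < (r:ℝ)), (1:ℝ)/r * (btA r b ⌊x⌋₊).card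
      ≤ (193 * x / L) * (8 / (y * Real.log y)) + (2*x) * (8 / (L^2 * Real.log (L^2))) := by
    calc _ ≤ ∑ r ∈ (Finset.range (⌊x⌋₊+2)).filter (fun r : ℕ => r.Prime ∧ y < (r:ℝ)),
          ((193 * x / L) * (1/(r:ℝ)^2) + if L^2 < (r:ℝ) then (2*x) * (1/(r:ℝ)^2) else 0) := by
          apply Finset.sum_le_sum
          intro r hr
          exact hterm r (Finset.mem_filter.mp hr).2.1
      _ ≤ _ := by
          rw [Finset.sum_add_distrib, ← Finset.mul_sum, ← Finset.sum_filter, ← Finset.mul_sum]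
          have a1 := pr_sum y (by linarith) (⌊x⌋₊+2)
          have a2 := pr_sum (L^2) (by nlinarith) (⌊x⌋₊+2)
          have a3 : ∑ r ∈ ((Finset.range (⌊x⌋₊+2)).filter (fun r : ℕ => r.Prime ∧ y < (r:ℝ))).filter (fun r : ℕ => L^2 < (r:ℝ)), 1/(r:ℝ)^2
              ≤ ∑ r ∈ (Finset.range (⌊x⌋₊+2)).filter (fun r : ℕ => r.Prime ∧ L^2 < (r:ℝ)), 1/(r:ℝ)^2 := by
            apply Finset.sum_le_sum_of_subset_of_nonneg
            · intro r hr
              simp only [Finset.mem_filter] at hr ⊢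
              tauto
            · intros; positivity
          have a4 := a3.trans a2
          gcongr
  have h2 : (2*x) * (8 / (L^2 * Real.log (L^2))) ≤ (8 * x / L) * (1 / (y * Real.log y)) := by
    rw [Real.log_pow]
    have : (2*x) * (8 / (L^2 * (((2:ℕ):ℝ) * Real.log L))) = (8 * x / L) * (1 / (y * L)) := by
      rw [← hydef]
      have : y ≠ 0 := by linarith
      push_cast
      field_simp
    rw [this]
    have hy0 : 0 < y := by linarith
    have : Real.log y ≤ L := by linarith
    gcongr
  have h3 : x / L ≤ 2 * (Nat.primeCounting ⌊x⌋₊ : ℝ) := by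
    rw [div_le_iff₀ hL0]; linarith
  have hyy : 0 < y * Real.log y := mul_pos (by linarith) hly
  calc _ ≤ _ := hR
    _ ≤ _ := h1
    _ ≤ (193 * x / L) * (8 / (y * Real.log y)) + (8 * x / L) * (1 / (y * Real.log y)) := by linarith
    _ = 1552 * (x / L) * (1 / (y * Real.log y)) := by ring
    _ ≤ 1552 * (2 * (Nat.primeCounting ⌊x⌋₊ : ℝ)) * (1 / (y * Real.log y)) := by gcongr
    _ = _ := by ring

theorem hy_sum_bound :
    ∃ C : ℝ, 0 < C ∧ ∀ᶠ x : ℝ in atTop,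
      (∑ p ∈ (Finset.range (⌊x⌋₊ + 1)).filter Nat.Prime,
          hy (Real.log (Real.log x)) (p - 1)) ≤
        C * (Nat.primeCounting ⌊x⌋₊ : ℝ) /
          (Real.log (Real.log x) * Real.log (Real.log (Real.log x))) ∧
      (∑ p ∈ (Finset.range (⌊x⌋₊ + 1)).filter Nat.Prime,
          hy (Real.log (Real.log x)) (p + 1)) ≤
        C * (Nat.primeCounting ⌊x⌋₊ : ℝ) /
          (Real.log (Real.log x) * Real.log (Real.log (Real.log x))) := by
  refine ⟨3104, by norm_num, ?_⟩
  have e1 : ∀ᶠ x : ℝ in atTop, 3 ≤ Real.log (Real.log x) :=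
    (Real.tendsto_log_atTop.comp Real.tendsto_log_atTop).eventually_ge_atTop 3
  have e2 : ∀ᶠ x : ℝ in atTop, 2 * Real.log x ^ 3 ≤ x ^ (3/4 : ℝ) := by
    have h := (isLittleO_log_rpow_rpow_atTop 3 (by norm_num : (0:ℝ) < 3/4)).bound (by norm_num : (0:ℝ) < 1/2)
    filter_upwards [h, eventually_ge_atTop 2] with x hx h2
    have hl : 0 < Real.log x := Real.log_pos (by linarith)
    rw [Real.norm_of_nonneg (by positivity), Real.norm_of_nonneg (by positivity)] at hx
    have : Real.log x ^ (3:ℝ) = Real.log x ^ 3 := by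
      rw [← Real.rpow_natCast]; norm_num
    rw [this] at hx
    linarith
  have e3 : ∀ᶠ x : ℝ in atTop, x / 2 ≤ (Nat.primeCounting ⌊x⌋₊ : ℝ) * Real.log x := by
    have h := Real.isLittleO_log_id_atTop.bound (by norm_num : (0:ℝ) < 1/20)
    filter_upwards [h, eventually_ge_atTop 100] with x hx h2
    have hl : 0 < Real.log x := Real.log_pos (by linarith)
    rw [Real.norm_of_nonneg hl.le, id, Real.norm_of_nonneg (by linarith)] at hx
    have h3 := Chebyshev.psi_le_primeCounting_mul_log' x
    have h4 := Chebyshev.psi_ge' (x := x) (by linarith)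
    have h5 : Real.log (x+2) ≤ 2 * Real.log x := by
      calc Real.log (x+2) ≤ Real.log (x^2) := Real.log_le_log (by linarith) (by nlinarith)
        _ = _ := by rw [Real.log_pow]; norm_num
    have h6 := Real.log_two_gt_d9
    nlinarith
  filter_upwards [e1, e2, e3, eventually_ge_atTop 2] with x h1 h2 h3 h4
  constructor
  · apply hy_core x 1 (Or.inl rfl) (fun p => p - 1) _ h4 h1 h2 h3
    intro p hp
    have := hp.two_le
    omega
  · apply hy_core x (-1) (Or.inr rfl) (fun p => p + 1) _ h4 h1 h2 h3
    intro p hp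
    simp
end
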